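/- There exists a constant C₁ < ∞, independent of a, such that for all a ≤ 1 and for every boundary condition ρ on Λ₁ = [−1,1]², the critical FK measure (h=0) satisfies P^a_{Λ₁,ρ,0}(0 ↔ ∂_in Λ₁^a) ≤ C₁ a^{1/8}, where ∂_in Λ₁^a is the inner vertex boundary of the a-approximation Λ₁^a = aℤ² ∩ Λ₁. -/

import Mathlib

/-!
The FK connection probability is bounded by an Ising magnetization, and the magnetization is
computed with the transfer matrix in the diagonal direction, whose ground state is that of the
critical quantum Ising chain.

**From FK to Ising.** Let `n = ⌊1 / a⌋`, so that `Λ₁^a` is the box `boxZ n`. A path from the origin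
to the inner boundary leaves every rotated rectangle `D = {|x - y| ≤ 2 h, |x + y| ≤ 2 p}` with
`h + p ≤ n`. By the Edwards–Sokal identity `ES`, summing the spins which are constant on clusters
and `+` off `D` gives the magnetization of the origin in `D` with `+` boundary conditions, and
`sum_zz_UP` identifies the numerator with the connection event. The counts of compatible spin
configurations satisfy the lattice condition `card_UU_mul_UP`, so by the four functions theorem
forcing the spins to be `+` off `D` increases the probability of this increasing event, whatever
the boundary condition: `fk_le_mag`.

**Transfer matrix.** The partition function of a rotated rectangle with `+` on the two long sides
is a matrix element of a power of the diagonal transfer matrix `TT` (`ZI_eq_pow`, `MI_eq_pow`). At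
the critical point `TT` commutes with the Hamiltonian `Hop` of the quantum Ising chain with `+` ends
(`Hop_TT`).

**Ground state.** Write `Hop` as a quadratic form in Majorana operators. A top eigenvector satisfies
a linear relation between the two families of operators (`top_rel`), so Wick's theorem (`wick`)
expresses the magnetization at site `j` as a determinant `Dd` (`corr`, `ground`). It is a Cauchy
determinant, hence a product of the explicit ratios `rh` (`Dd_succ`); since `log (rh (2 * h) p)` is at
most `-1 / (8 (p + 1))` up to summable terms and terms of order `p / h²` (`rh_le`), the ground
state magnetization at the middle of a chain of length `2 h` is `O(h ^ (-1/8))` (`Dd_le`).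

**From the ground state to rectangles.** In a square with `+` on two opposite sides, look at the
product of two copies of the Ising model, with equal signs and with flipped signs on the other two
sides. By planarity either the first pair or the second pair of opposite sides is separated by a
wall, along which both copies may be flipped without changing the weight; a reflection exchanges
the two cases. This is `ZD_cross`. The transfer matrix of the square therefore has one bounded
cross ratio (`TT_cross`), and total positivity bounds all the others (`MTP.cross`), uniformly in the
size. A kernel with bounded cross ratios contracts in the sense of Birkhoff (`contraction`), so in a
rectangle of length `2 m + 3` times its width the vectors propagated from the short sides to the
middle are proportional to the ground state up to a factor `1 + epsm m`, with `epsm m` exponentially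
small in `m`. The error is again
bounded by a magnetization, at a smaller scale: `magD_step`. Since `epsm m` beats the ratio of the
scales, the recursion over the scales `(2 m + 3) ^ k` closes (`magD_scales`, `magD_box`), and `n` is
comparable to `1 / a` (`scale_le`).
-/

open scoped Classical
open Filter MeasureTheory

noncomputable section

/-- Lattice vertices: `v : Vtx` represents the point `a • v ∈ aℤ²`. -/
abbrev Vtx : Type := ℤ × ℤ

/-- Edges of the extended graph with a ghost vertex `g`:
`Sum.inl (v, b)` is the internal edge from `v` to `v + estep b`;
`Sum.inr v` is the external edge `{v, g}`. -/
abbrev Edge : Type := (Vtx × Bool) ⊕ Vtx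

/-- Unit lattice steps: right (`true`) and up (`false`). -/
def estep (b : Bool) : Vtx := if b then (1, 0) else (0, 1)

/-- The critical inverse temperature `β_c = (1/2) log (1 + √2)`. -/
def betaC : ℝ := Real.log (1 + Real.sqrt 2) / 2

/-- Nearest neighbours in `ℤ²`. -/
def nn (v w : Vtx) : Prop :=
  w = v + (1, 0) ∨ w = v + (-1, 0) ∨ w = v + (0, 1) ∨ w = v + (0, -1)

/-- Physical position of a lattice point of `aℤ²`. -/
def posOf (a : ℝ) (v : Vtx) : ℝ × ℝ := (a * v.1, a * v.2)

/-- Euclidean distance in the plane. -/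
def edistR (p q : ℝ × ℝ) : ℝ := Real.sqrt ((p.1 - q.1) ^ 2 + (p.2 - q.2) ^ 2)

/-- Euclidean distance between points of `aℤ²`. -/
def edistV (a : ℝ) (v w : Vtx) : ℝ := edistR (posOf a v) (posOf a w)

/-- Euclidean distance between two subsets of the plane. -/
def setDistR (S T : Set (ℝ × ℝ)) : ℝ :=
  sInf {d | ∃ p ∈ S, ∃ q ∈ T, d = edistR p q}

/-- The physical embedding of a finite set of lattice points of `aℤ²`. -/
def physSet (a : ℝ) (C : Finset Vtx) : Set (ℝ × ℝ) := posOf a '' ↑C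

/-- The square `c + [-r,r]²`. -/
def ballSet (c : ℝ × ℝ) (r : ℝ) : Set (ℝ × ℝ) :=
  {p | |p.1 - c.1| ≤ r ∧ |p.2 - c.2| ≤ r}

/-- The lattice box `([-n,n] ∩ ℤ)²`. -/
def boxZ (n : ℕ) : Finset Vtx := Finset.Icc (-(n : ℤ)) n ×ˢ Finset.Icc (-(n : ℤ)) n

/-- The `a`-approximation `D^a = aℤ² ∩ D` of a set `D ⊆ [-R,R]²`. -/
def aApprox (a R : ℝ) (D : Set (ℝ × ℝ)) : Finset Vtx :=
  (boxZ ⌈R / a⌉₊).filter (fun v => posOf a v ∈ D)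

/-- Inner vertex boundary of a finite set of lattice vertices. -/
def innerBdry (Λ : Finset Vtx) : Finset Vtx :=
  Λ.filter (fun v => ∃ w, nn v w ∧ w ∉ Λ)

/-! ### Connectivity and clusters -/

/-- One open-edge step in a configuration `ω` of the extended graph
(`none` is the ghost vertex `g`). -/
def adjOpen (ω : Edge → Bool) (u v : Option Vtx) : Prop :=
  (∃ p : Vtx × Bool, ω (Sum.inl p) = true ∧
    ((u = some p.1 ∧ v = some (p.1 + estep p.2)) ∨
     (v = some p.1 ∧ u = some (p.1 + estep p.2)))) ∨
  (∃ z : Vtx, ω (Sum.inr z) = true ∧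
    ((u = some z ∧ v = none) ∨ (v = some z ∧ u = none)))

/-- `u ↔ v`: connection by a path of open edges. -/
def Conn (ω : Edge → Bool) : Option Vtx → Option Vtx → Prop :=
  Relation.ReflTransGen (adjOpen ω)

/-- One open-edge step within the vertex set `S` (external edges allowed from `S`). -/
def adjOpenIn (S : Set Vtx) (ω : Edge → Bool) (u v : Option Vtx) : Prop :=
  (∃ p : Vtx × Bool, p.1 ∈ S ∧ p.1 + estep p.2 ∈ S ∧ ω (Sum.inl p) = true ∧
    ((u = some p.1 ∧ v = some (p.1 + estep p.2)) ∨
     (v = some p.1 ∧ u = some (p.1 + estep p.2)))) ∨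
  (∃ z : Vtx, z ∈ S ∧ ω (Sum.inr z) = true ∧
    ((u = some z ∧ v = none) ∨ (v = some z ∧ u = none)))

/-- Connection by a path of open edges within the vertex set `S`. -/
def ConnIn (S : Set Vtx) (ω : Edge → Bool) : Option Vtx → Option Vtx → Prop :=
  Relation.ReflTransGen (adjOpenIn S ω)

/-- One open internal-edge step within the vertex set `S`. -/
def adjInt (S : Set Vtx) (ω : Edge → Bool) (v w : Vtx) : Prop :=
  v ∈ S ∧ w ∈ S ∧ ∃ p : Vtx × Bool, ω (Sum.inl p) = true ∧
    ((v = p.1 ∧ w = p.1 + estep p.2) ∨ (w = p.1 ∧ v = p.1 + estep p.2))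

/-- Connection by a path of open internal edges within the vertex set `S`. -/
def ConnInt (S : Set Vtx) (ω : Edge → Bool) : Vtx → Vtx → Prop :=
  Relation.ReflTransGen (adjInt S ω)

/-- Lexicographic order on lattice vertices. -/
def vlt (v w : Vtx) : Prop := v.1 < w.1 ∨ (v.1 = w.1 ∧ v.2 < w.2)

/-- The number of open clusters of `ω` that intersect `Λ` and do not contain the
ghost vertex, counted via lexicographically minimal representatives. -/
def numClusters (Λ : Finset Vtx) (ω : Edge → Bool) : ℕ :=
  (Λ.filter (fun v => ¬ Conn ω (some v) none ∧
    ∀ w ∈ Λ, Conn ω (some v) (some w) → ¬ vlt w v)).card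

/-- The open cluster (within the vertex set `S`, via internal edges) of `v`. -/
def clusterOf (S : Finset Vtx) (ω : Edge → Bool) (v : Vtx) : Finset Vtx :=
  S.filter (fun w => ConnInt (↑S) ω v w)

/-- The set of open clusters in the vertex set `S` (via internal edges within `S`). -/
def clustersIn (S : Finset Vtx) (ω : Edge → Bool) : Finset (Finset Vtx) :=
  S.image (clusterOf S ω)

/-! ### FK random-cluster measures -/

/-- 𝓑(Λ): internal edges with both endpoints in `Λ`. -/
def intEdges (Λ : Finset Vtx) : Finset Edge :=
  ((Λ ×ˢ ({true, false} : Finset Bool)).filter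
    (fun p => p.1 + estep p.2 ∈ Λ)).image Sum.inl

/-- Internal edges with at least one endpoint in `Λ`. -/
def intEdgesBar (Λ : Finset Vtx) : Finset Edge :=
  ((((Λ ∪ Λ.image (fun v => v - (1, 0))) ∪ Λ.image (fun v => v - (0, 1))) ×ˢ
      ({true, false} : Finset Bool)).filter
    (fun p => p.1 ∈ Λ ∨ p.1 + estep p.2 ∈ Λ)).image Sum.inl

/-- 𝓔(Λ): external (ghost) edges with lattice endpoint in `Λ`. -/
def extEdges (Λ : Finset Vtx) : Finset Edge := Λ.image Sum.inr

/-- Opening probability of an edge, for an external magnetic field profile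
`a^{15/8}·hprof`. -/
def pEdge (a : ℝ) (hprof : Vtx → ℝ) : Edge → ℝ
  | Sum.inl _ => 1 - Real.exp (-2 * betaC)
  | Sum.inr v => 1 - Real.exp (-2 * a ^ ((15 : ℝ) / 8) * hprof v)

/-- Extension of a configuration on `E` by the boundary condition `ρ` off `E`. -/
def extendConf (E : Finset Edge) (ω : {e // e ∈ E} → Bool) (ρ : Edge → Bool) :
    Edge → Bool :=
  fun e => if he : e ∈ E then ω ⟨e, he⟩ else ρ e

/-- All edges closed (free boundary condition). -/
def freeBC : Edge → Bool := fun _ => false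

/-- All edges open (wired boundary condition). -/
def wiredBC : Edge → Bool := fun _ => true

/-- FK (q=2) weight of a configuration `ω` on the edge set `E`, for the region `Λ`,
lattice spacing `a`, field profile `hprof` and boundary condition `ρ`. -/
def fkWeight (Λ : Finset Vtx) (E : Finset Edge) (a : ℝ) (hprof : Vtx → ℝ)
    (ρ : Edge → Bool) (ω : {e // e ∈ E} → Bool) : ℝ :=
  2 ^ numClusters Λ (extendConf E ω ρ) *
    ∏ e : {e // e ∈ E},
      (if ω e then pEdge a hprof e.val else 1 - pEdge a hprof e.val)

/-- FK partition function. -/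
def fkZ (Λ : Finset Vtx) (E : Finset Edge) (a : ℝ) (hprof : Vtx → ℝ)
    (ρ : Edge → Bool) : ℝ :=
  ∑ ω : {e // e ∈ E} → Bool, fkWeight Λ E a hprof ρ ω

/-- FK probability of an event `A` (a set of configurations of the extended graph). -/
def fkProb (Λ : Finset Vtx) (E : Finset Edge) (a : ℝ) (hprof : Vtx → ℝ)
    (ρ : Edge → Bool) (A : (Edge → Bool) → Prop) : ℝ :=
  (∑ ω : {e // e ∈ E} → Bool,
      if A (extendConf E ω ρ) then fkWeight Λ E a hprof ρ ω else 0) /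
    fkZ Λ E a hprof ρ

/-- FK expectation of an observable. -/
def fkExp (Λ : Finset Vtx) (E : Finset Edge) (a : ℝ) (hprof : Vtx → ℝ)
    (ρ : Edge → Bool) (F : (Edge → Bool) → ℝ) : ℝ :=
  (∑ ω : {e // e ∈ E} → Bool,
      F (extendConf E ω ρ) * fkWeight Λ E a hprof ρ ω) / fkZ Λ E a hprof ρ

/-- FK conditional probability `P(A | B)`. -/
def fkCondProb (Λ : Finset Vtx) (E : Finset Edge) (a : ℝ) (hprof : Vtx → ℝ)
    (ρ : Edge → Bool) (A B : (Edge → Bool) → Prop) : ℝ :=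
  fkProb Λ E a hprof ρ (fun ω => A ω ∧ B ω) / fkProb Λ E a hprof ρ B

/-- The infinite-volume FK measure (with ghost) on `aℤ²` with field profile
`a^{15/8}·hprof`: weak limit of free-boundary finite-volume measures. -/
def fkProbInf (a : ℝ) (hprof : Vtx → ℝ) (A : (Edge → Bool) → Prop) : ℝ :=
  limUnder atTop (fun n : ℕ =>
    fkProb (boxZ n) (intEdges (boxZ n) ∪ extEdges (boxZ n)) a hprof freeBC A)

/-- The event that the configuration restricted to the internal edges of `Λ`
equals `ωb`. -/
def internalEq (Λ : Finset Vtx) (ωb : {e // e ∈ intEdges Λ} → Bool)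
    (ω : Edge → Bool) : Prop :=
  ∀ e (he : e ∈ intEdges Λ), ω e = ωb ⟨e, he⟩

/-- The full configuration determined by an internal configuration (all other
edges closed). -/
def internalFull (Λ : Finset Vtx) (ωb : {e // e ∈ intEdges Λ} → Bool) :
    Edge → Bool :=
  extendConf (intEdges Λ) ωb freeBC

/-! ### The Ising model -/

/-- The spin function `±1` of a configuration `σ` on `Λ` (0 outside `Λ`). -/
def spin (Λ : Finset Vtx) (σ : {v // v ∈ Λ} → Bool) (v : Vtx) : ℝ :=
  if hv : v ∈ Λ then (if σ ⟨v, hv⟩ then 1 else -1) else 0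

/-- Boltzmann weight for the Ising model at `β_c` on `Λ` with free boundary
conditions and external field `a^{15/8}·h`. -/
def isingWeight (a h : ℝ) (Λ : Finset Vtx) (σ : {v // v ∈ Λ} → Bool) : ℝ :=
  Real.exp (betaC * ∑ v ∈ Λ, ∑ b : Bool,
      (if v + estep b ∈ Λ then spin Λ σ v * spin Λ σ (v + estep b) else 0) +
    a ^ ((15 : ℝ) / 8) * h * ∑ v ∈ Λ, spin Λ σ v)

/-- Finite-volume Ising expectation (free boundary conditions, field `a^{15/8}h`). -/
def isingExpF (a h : ℝ) (Λ : Finset Vtx) (f : (Vtx → ℝ) → ℝ) : ℝ :=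
  (∑ σ : {v // v ∈ Λ} → Bool, f (spin Λ σ) * isingWeight a h Λ σ) /
    ∑ σ : {v // v ∈ Λ} → Bool, isingWeight a h Λ σ

/-- Infinite-volume Ising expectation `⟨·⟩_{a,h}` at `β_c` with field `a^{15/8}h`:
the limit of finite-volume expectations. -/
def isingExp (a h : ℝ) (f : (Vtx → ℝ) → ℝ) : ℝ :=
  limUnder atTop (fun n : ℕ => isingExpF a h (boxZ n) f)

/-- The truncated two-point function `⟨σ_x;σ_y⟩_{a,h}`. -/
def tpf (a h : ℝ) (x y : Vtx) : ℝ :=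
  isingExp a h (fun s => s x * s y) -
    isingExp a h (fun s => s x) * isingExp a h (fun s => s y)

/-- The lattice mass (inverse correlation length) `M̃(H)` on `ℤ²`. -/
def latticeMass (H : ℝ) : ℝ :=
  sSup {m : ℝ | 0 < m ∧ ∃ C : ℝ, ∀ x y : Vtx,
    tpf 1 H x y ≤ C * Real.exp (-m * edistV 1 x y)}

/-! ### The Edwards–Sokal coupling -/

/-- Boolean spins on `Λ` extended by `true` (the ghost spin) off `Λ`. -/
def spinB (Λ : Finset Vtx) (σ : {v // v ∈ Λ} → Bool) (v : Vtx) : Bool :=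
  if hv : v ∈ Λ then σ ⟨v, hv⟩ else true

/-- Compatibility of spins with an FK configuration: spins are constant on open
clusters and `+1` (`true`) on the cluster of the ghost. -/
def esConsistent (Λ : Finset Vtx) (ω : Edge → Bool) (σs : Vtx → Bool) : Prop :=
  (∀ v ∈ Λ, ∀ w ∈ Λ, Conn ω (some v) (some w) → σs v = σs w) ∧
  (∀ v ∈ Λ, Conn ω (some v) none → σs v = true)

/-- Weight of a pair (FK configuration, spin configuration) in the Edwards–Sokal
coupling. -/
def esWeight (Λ : Finset Vtx) (E : Finset Edge) (a : ℝ) (hprof : Vtx → ℝ)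
    (ρ : Edge → Bool) (ω : {e // e ∈ E} → Bool) (σ : {v // v ∈ Λ} → Bool) : ℝ :=
  fkWeight Λ E a hprof ρ ω *
    (if esConsistent Λ (extendConf E ω ρ) (spinB Λ σ) then
      (1 / 2) ^ numClusters Λ (extendConf E ω ρ) else 0)

/-- Probability of an event under the Edwards–Sokal coupling. -/
def esProb (Λ : Finset Vtx) (E : Finset Edge) (a : ℝ) (hprof : Vtx → ℝ)
    (ρ : Edge → Bool) (A : (Edge → Bool) → (Vtx → Bool) → Prop) : ℝ :=
  (∑ ω : {e // e ∈ E} → Bool, ∑ σ : {v // v ∈ Λ} → Bool,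
      if A (extendConf E ω ρ) (spinB Λ σ) then esWeight Λ E a hprof ρ ω σ else 0) /
    ∑ ω : {e // e ∈ E} → Bool, ∑ σ : {v // v ∈ Λ} → Bool, esWeight Λ E a hprof ρ ω σ

/-- Conditional probability under the Edwards–Sokal coupling. -/
def esCondProb (Λ : Finset Vtx) (E : Finset Edge) (a : ℝ) (hprof : Vtx → ℝ)
    (ρ : Edge → Bool) (A B : (Edge → Bool) → (Vtx → Bool) → Prop) : ℝ :=
  esProb Λ E a hprof ρ (fun ω σs => A ω σs ∧ B ω σs) / esProb Λ E a hprof ρ B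

/-! ### Circuits -/

/-- A lattice circuit: an injective cyclic nearest-neighbour path. -/
def IsCircuit (m : ℕ) (γ : ZMod m → Vtx) : Prop :=
  0 < m ∧ Function.Injective γ ∧ ∀ i, nn (γ i) (γ (i + 1))

/-- The trace of a circuit in the plane (union of the segments between
consecutive vertices, in physical coordinates). -/
def circuitImage (a : ℝ) (m : ℕ) (γ : ZMod m → Vtx) : Set (ℝ × ℝ) :=
  ⋃ i : ZMod m, segment ℝ (posOf a (γ i)) (posOf a (γ (i + 1)))

/-- The inside of a loop: points off the loop whose connected component of the
complement is bounded. -/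
def insideLoop (Γ : Set (ℝ × ℝ)) : Set (ℝ × ℝ) :=
  {p | p ∉ Γ ∧ Bornology.IsBounded (connectedComponentIn Γᶜ p)}

/-- `Γ` surrounds `S`. -/
def Surrounds (Γ S : Set (ℝ × ℝ)) : Prop := S ⊆ insideLoop Γ


/-! ### Statement-specific geometry and events -/

def lam31 : Set (ℝ × ℝ) := Set.Icc (0:ℝ) 3 ×ˢ Set.Icc (0:ℝ) 1
def seg0 : Set (ℝ × ℝ) := ({0} : Set ℝ) ×ˢ Set.Icc (0:ℝ) 1
def seg3 : Set (ℝ × ℝ) := ({3} : Set ℝ) ×ˢ Set.Icc (0:ℝ) 1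
def lam33 : Set (ℝ × ℝ) := Set.Icc (0:ℝ) 3 ×ˢ Set.Icc (0:ℝ) 3
def sq12 : Set (ℝ × ℝ) := Set.Icc (1:ℝ) 2 ×ˢ Set.Icc (1:ℝ) 2
def ann13 : Set (ℝ × ℝ) := lam33 \ sq12

/-- The event `E^a(K)` of Lemma `lemnec1`. -/
def evE (a : ℝ) (K : ℕ) (ω : Edge → Bool) : Prop :=
  ∃ k : ℕ, 1 ≤ k ∧ k ≤ K ∧ ∃ C : ℕ → Finset Vtx,
    (∀ i < k, C i ∈ clustersIn (aApprox a 3 lam31) ω ∧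
      a ^ (-(15:ℝ)/8) / K ≤ ((C i).card : ℝ)) ∧
    setDistR (physSet a (C 0)) seg0 ≤ a ∧
    (∀ i, i + 1 < k → setDistR (physSet a (C i)) (physSet a (C (i+1))) = a) ∧
    setDistR (physSet a (C (k-1))) seg3 ≤ a

/-- The necklace event `𝒩^a(K)`. -/
def evN (a : ℝ) (K : ℕ) (ω : Edge → Bool) : Prop :=
  ∃ k : ℕ, 1 ≤ k ∧ k ≤ K ∧ ∃ C : ℕ → Finset Vtx,
    (∀ i < k, C i ∈ clustersIn (aApprox a 3 ann13) ω ∧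
      a ^ (-(15:ℝ)/8) / K ≤ ((C i).card : ℝ)) ∧
    (∀ i, i + 1 < k → setDistR (physSet a (C i)) (physSet a (C (i+1))) = a) ∧
    setDistR (physSet a (C (k-1))) (physSet a (C 0)) = a ∧
    ∃ m : ℕ, ∃ γ : ZMod m → Vtx, IsCircuit m γ ∧
      (∀ i, ∃ j < k, γ i ∈ C j) ∧
      Surrounds (circuitImage a m γ) sq12

/-- The event that the annulus `A_{1,3}^a` is good. -/
def evGood (a : ℝ) (ω : Edge → Bool) : Prop :=
  ∃ k : ℕ, 1 ≤ k ∧ ∃ C : ℕ → Finset Vtx,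
    (∀ i < k, C i ∈ clustersIn (aApprox a 3 ann13) ω ∧
      ∃ v ∈ C i, Conn ω (some v) none) ∧
    (∀ i, i + 1 < k → setDistR (physSet a (C i)) (physSet a (C (i+1))) = a) ∧
    setDistR (physSet a (C (k-1))) (physSet a (C 0)) = a ∧
    ∃ m : ℕ, ∃ γ : ZMod m → Vtx, IsCircuit m γ ∧
      (∀ i, ∃ j < k, γ i ∈ C j) ∧
      Surrounds (circuitImage a m γ) sq12

/-- The annulus `([-R,R]²) ∖ ((-r,r)²)`. -/
def annSet (r R : ℝ) : Set (ℝ × ℝ) :=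
  (Set.Icc (-R) R ×ˢ Set.Icc (-R) R) \ (Set.Ioo (-r) r ×ˢ Set.Ioo (-r) r)

def ann1L (a L : ℝ) : Finset Vtx := aApprox a (2*L) (annSet 1 L)
def annL2L (a L : ℝ) : Finset Vtx := aApprox a (2*L) (annSet L (2*L))

/-- The part `∂₁A^a(1,L)` of the boundary of `A^a(1,L)` inside `(-1,1)²`. -/
def bdry1 (a L : ℝ) (z : Vtx) : Prop :=
  z ∉ ann1L a L ∧ (∃ w ∈ ann1L a L, nn z w) ∧
    posOf a z ∈ Set.Ioo (-1:ℝ) 1 ×ˢ Set.Ioo (-1:ℝ) 1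

/-- The part `∂₂A^a(1,L)` of the boundary of `A^a(1,L)` outside `[-L,L]²`. -/
def bdry2 (a L : ℝ) (z : Vtx) : Prop :=
  z ∉ ann1L a L ∧ (∃ w ∈ ann1L a L, nn z w) ∧
    posOf a z ∉ Set.Icc (-L) L ×ˢ Set.Icc (-L) L

/-- The event `F(a,L)`: an open crossing of `A^a(1,L)` whose cluster is not
connected to the ghost within the annulus. -/
def evF (a L : ℝ) (ω : Edge → Bool) : Prop :=
  ∃ u ∈ ann1L a L, ∃ v ∈ ann1L a L,
    (∃ z, bdry1 a L z ∧ nn u z) ∧ (∃ z, bdry2 a L z ∧ nn v z) ∧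
    ConnInt (↑(ann1L a L)) ω u v ∧
    ¬ ConnIn (↑(ann1L a L)) ω (some u) none

/-- The event `G(a,L)`: a circuit in `A^a(L,2L)` surrounding `[-L,L]²` whose
vertices are all connected to the ghost within the annulus. -/
def evG (a L : ℝ) (ω : Edge → Bool) : Prop :=
  ∃ m : ℕ, ∃ γ : ZMod m → Vtx, IsCircuit m γ ∧
    (∀ i, γ i ∈ annL2L a L ∧ ConnIn (↑(annL2L a L)) ω (some (γ i)) none) ∧
    Surrounds (circuitImage a m γ) (Set.Icc (-L) L ×ˢ Set.Icc (-L) L)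

/-- The field profile equal to `h` except on `B(x,1) ∪ B(y,1)` where it is `0`. -/
def hvecXY (a h : ℝ) (x y : Vtx) : Vtx → ℝ :=
  fun v => if posOf a v ∈ ballSet (posOf a x) 1 ∪ ballSet (posOf a y) 1 then 0 else h

/-- The event `A⁰ = {x ↔ y, x ↮ g}`. -/
def evA0 (x y : Vtx) (ω : Edge → Bool) : Prop :=
  Conn ω (some x) (some y) ∧ ¬ Conn ω (some x) none

/-- The event `A¹_z = {z ↔ g}`. -/
def evA1 (z : Vtx) (ω : Edge → Bool) : Prop := Conn ω (some z) none

/-- The event `A^c_z`: an open path from `z` within `B(z,r)` to a vertex whose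
ghost edge is open. -/
def evAc (a r : ℝ) (z : Vtx) (ω : Edge → Bool) : Prop :=
  ∃ w : Vtx, ConnInt {v : Vtx | posOf a v ∈ ballSet (posOf a z) r} ω z w ∧
    ω (Sum.inr w) = true

/-- `evA a r z true = A^c_z` (close) and `evA a r z false = A^f_z` (far). -/
def evA (a r : ℝ) (z : Vtx) (u : Bool) (ω : Edge → Bool) : Prop :=
  if u then evAc a r z ω else evA1 z ω ∧ ¬ evAc a r z ω

/-- A circuit whose vertices lie (physically) in `Ann`. -/
def circuitInAnn (a : ℝ) (Ann : Set (ℝ × ℝ)) (m : ℕ) (γ : ZMod m → Vtx) : Prop :=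
  IsCircuit m γ ∧ ∀ i, posOf a (γ i) ∈ Ann

/-- `Ã_𝐂`: every vertex of the circuit is connected to the ghost within `Ann`. -/
def evTildeA (a : ℝ) (Ann : Set (ℝ × ℝ)) (m : ℕ) (γ : ZMod m → Vtx)
    (ω : Edge → Bool) : Prop :=
  ∀ i, ConnIn {v : Vtx | posOf a v ∈ Ann} ω (some (γ i)) none

/-- `A_𝐂`: `𝐂` is the outermost circuit in `Ann` with property `Ã`. -/
def evOutermost (a : ℝ) (Ann : Set (ℝ × ℝ)) (m : ℕ) (γ : ZMod m → Vtx)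
    (ω : Edge → Bool) : Prop :=
  evTildeA a Ann m γ ω ∧
    ∀ m' : ℕ, ∀ γ' : ZMod m' → Vtx, circuitInAnn a Ann m' γ' →
      evTildeA a Ann m' γ' ω →
      ∀ i', posOf a (γ' i') ∈ circuitImage a m γ ∪ insideLoop (circuitImage a m γ)

/-- The edge `e` lies (physically) in the region `S` (for ghost edges: its
lattice endpoint does). -/
def edgeInSet (a : ℝ) (S : Set (ℝ × ℝ)) : Edge → Prop
  | Sum.inl p => posOf a p.1 ∈ S ∧ posOf a (p.1 + estep p.2) ∈ S
  | Sum.inr v => posOf a v ∈ S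

/-- An increasing event. -/
def IncreasingEv (A : (Edge → Bool) → Prop) : Prop :=
  ∀ ω ω' : Edge → Bool, (∀ e, ω e = true → ω' e = true) → A ω → A ω'

/-- The event `A` depends only on the edges lying in `S`. -/
def DependsOnlyOn (a : ℝ) (S : Set (ℝ × ℝ)) (A : (Edge → Bool) → Prop) : Prop :=
  ∀ ω ω' : Edge → Bool, (∀ e, edgeInSet a S e → ω e = ω' e) → (A ω ↔ A ω')

def ballB (a : ℝ) (x y : Vtx) : Finset Vtx :=
  aApprox a (edistR (0, 0) (posOf a x) + edistV a x y)
    (ballSet (posOf a x) (2 * edistV a x y / 3))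

def annXY (a : ℝ) (x y : Vtx) : Set (ℝ × ℝ) :=
  {p | p ∈ ballSet (posOf a x) (2 * edistV a x y / 3) ∧
       p ∉ ballSet (posOf a x) (edistV a x y / 3)}

def lam3NN (N : ℕ) : Set (ℝ × ℝ) := Set.Icc (0:ℝ) (3*N) ×ˢ Set.Icc (0:ℝ) N
def seg0N (N : ℕ) : Set (ℝ × ℝ) := ({0} : Set ℝ) ×ˢ Set.Icc (0:ℝ) N
def seg3N (N : ℕ) : Set (ℝ × ℝ) := ({(3*N : ℝ)} : Set ℝ) ×ˢ Set.Icc (0:ℝ) N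
def lam3N3N (N : ℕ) : Set (ℝ × ℝ) := Set.Icc (0:ℝ) (3*N) ×ˢ Set.Icc (0:ℝ) (3*N)
def sqN2N (N : ℕ) : Set (ℝ × ℝ) := Set.Icc (N:ℝ) (2*N) ×ˢ Set.Icc (N:ℝ) (2*N)
def annN3N (N : ℕ) : Set (ℝ × ℝ) := lam3N3N N \ sqN2N N

/-- The event `E^a(K,N)`. -/
def evEN (a : ℝ) (K N : ℕ) (ω : Edge → Bool) : Prop :=
  ∃ k : ℕ, 1 ≤ k ∧ k ≤ K ∧ ∃ C : ℕ → Finset Vtx,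
    (∀ i < k, C i ∈ clustersIn (aApprox a (3*N) (lam3NN N)) ω ∧
      (N : ℝ) ^ ((15:ℝ)/8) * a ^ (-(15:ℝ)/8) / K ≤ ((C i).card : ℝ)) ∧
    setDistR (physSet a (C 0)) (seg0N N) ≤ a ∧
    (∀ i, i + 1 < k → setDistR (physSet a (C i)) (physSet a (C (i+1))) = a) ∧
    setDistR (physSet a (C (k-1))) (seg3N N) ≤ a

/-- The event that the annulus `A_{N,3N}^a` is good. -/
def evGoodN (a : ℝ) (N : ℕ) (ω : Edge → Bool) : Prop :=
  ∃ k : ℕ, 1 ≤ k ∧ ∃ C : ℕ → Finset Vtx,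
    (∀ i < k, C i ∈ clustersIn (aApprox a (3*N) (annN3N N)) ω ∧
      ∃ v ∈ C i, Conn ω (some v) none) ∧
    (∀ i, i + 1 < k → setDistR (physSet a (C i)) (physSet a (C (i+1))) = a) ∧
    setDistR (physSet a (C (k-1))) (physSet a (C 0)) = a ∧
    ∃ m : ℕ, ∃ γ : ZMod m → Vtx, IsCircuit m γ ∧
      (∀ i, ∃ j < k, γ i ∈ C j) ∧ Surrounds (circuitImage a m γ) (sqN2N N)


namespace IsingArm

/-! ### Ising sums over spin configurations and the FKG inequality -/

/-- The configuration equal to the indicator of `A` on `F` and to `s` elsewhere. -/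
def ov (F A : Finset Vtx) (s : Vtx → Bool) : Vtx → Bool :=
  fun v => if v ∈ F then decide (v ∈ A) else s v

/-- The sum of `Φ` over all spin configurations which agree with `s` outside `F`. -/
def RS (F : Finset Vtx) (Φ : (Vtx → Bool) → ℝ) (s : Vtx → Bool) : ℝ :=
  ∑ A ∈ F.powerset, Φ (ov F A s)

lemma RS_empty (Φ : (Vtx → Bool) → ℝ) (s : Vtx → Bool) : RS ∅ Φ s = Φ s := by
  simp only [RS, Finset.powerset_empty, Finset.sum_singleton]
  congr 1

lemma RS_insert {F : Finset Vtx} {v : Vtx} (hv : v ∉ F) (Φ : (Vtx → Bool) → ℝ)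
    (s : Vtx → Bool) :
    RS (insert v F) Φ s = ∑ b : Bool, RS F Φ (Function.update s v b) := by
  rw [RS, Finset.sum_powerset_insert hv, Fintype.sum_bool, add_comm]
  congr 1
  · refine Finset.sum_congr rfl fun A hA => ?_
    have hvA : v ∉ A := fun h => hv (Finset.mem_powerset.1 hA h)
    congr 1; funext u
    by_cases hu : u = v
    · subst hu; simp [ov, hv]
    · simp [ov, hu]
  · refine Finset.sum_congr rfl fun A hA => ?_
    have hvA : v ∉ A := fun h => hv (Finset.mem_powerset.1 hA h)
    congr 1; funext u
    by_cases hu : u = v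
    · subst hu; simp [ov, hv, hvA]
    · simp [ov, hu]

lemma RS_union {F G : Finset Vtx} (h : Disjoint F G) (Φ : (Vtx → Bool) → ℝ)
    (s : Vtx → Bool) : RS (F ∪ G) Φ s = RS F (RS G Φ) s := by
  induction F using Finset.induction_on generalizing s with
  | empty => rw [Finset.empty_union, RS_empty]
  | insert v F hv ih =>
    rw [Finset.disjoint_insert_left] at h
    have hv' : v ∉ F ∪ G := by simp [hv, h.1]
    rw [Finset.insert_union, RS_insert hv', RS_insert hv]
    exact Finset.sum_congr rfl fun b _ => ih h.2 _

lemma RS_congr {F : Finset Vtx} {Φ Ψ : (Vtx → Bool) → ℝ} {s : Vtx → Bool}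
    (h : ∀ s', (∀ v, v ∉ F → s' v = s v) → Φ s' = Ψ s') : RS F Φ s = RS F Ψ s :=
  Finset.sum_congr rfl fun A _ => h _ fun v hv => by simp [ov, hv]

lemma RS_mul_left {F : Finset Vtx} {Φ Ψ : (Vtx → Bool) → ℝ} {s : Vtx → Bool}
    (h : ∀ s', (∀ v, v ∉ F → s' v = s v) → Ψ s' = Ψ s) :
    RS F (fun s => Ψ s * Φ s) s = Ψ s * RS F Φ s := by
  rw [RS, RS, Finset.mul_sum]
  exact Finset.sum_congr rfl fun A _ => by rw [h _ fun v hv => by simp [ov, hv]]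

lemma RS_const_mul (F : Finset Vtx) (Φ : (Vtx → Bool) → ℝ) (r : ℝ) (s : Vtx → Bool) :
    RS F (fun s => r * Φ s) s = r * RS F Φ s :=
  RS_mul_left (Ψ := fun _ => r) fun _ _ => rfl

lemma RS_add (F : Finset Vtx) (Φ Ψ : (Vtx → Bool) → ℝ) (s : Vtx → Bool) :
    RS F (fun s => Φ s + Ψ s) s = RS F Φ s + RS F Ψ s := Finset.sum_add_distrib

lemma RS_sub (F : Finset Vtx) (Φ Ψ : (Vtx → Bool) → ℝ) (s : Vtx → Bool) :
    RS F (fun s => Φ s - Ψ s) s = RS F Φ s - RS F Ψ s := Finset.sum_sub_distrib _ _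

lemma RS_mono {F : Finset Vtx} {Φ Ψ : (Vtx → Bool) → ℝ} (h : ∀ s, Φ s ≤ Ψ s)
    (s : Vtx → Bool) : RS F Φ s ≤ RS F Ψ s := Finset.sum_le_sum fun _ _ => h _

lemma RS_nonneg {F : Finset Vtx} {Φ : (Vtx → Bool) → ℝ} (h : ∀ s, 0 ≤ Φ s)
    (s : Vtx → Bool) : 0 ≤ RS F Φ s := Finset.sum_nonneg fun _ _ => h _

lemma RS_pos {F : Finset Vtx} {Φ : (Vtx → Bool) → ℝ} (h : ∀ s, 0 < Φ s)
    (s : Vtx → Bool) : 0 < RS F Φ s :=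
  Finset.sum_pos (fun _ _ => h _) ⟨∅, by simp⟩

lemma abs_RS_le {F : Finset Vtx} {Φ : (Vtx → Bool) → ℝ} (s : Vtx → Bool) :
    |RS F Φ s| ≤ RS F (fun s => |Φ s|) s := Finset.abs_sum_le_sum_abs _ _

lemma RS_eq_of_eqOff {F : Finset Vtx} (Φ : (Vtx → Bool) → ℝ) {s s' : Vtx → Bool}
    (h : ∀ v, v ∉ F → s v = s' v) : RS F Φ s = RS F Φ s' :=
  Finset.sum_congr rfl fun A _ => by
    congr 1; funext v
    by_cases hv : v ∈ F <;> simp [ov, hv, h]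

/-- Summing over the spins of an injectively indexed set of vertices. -/
lemma RS_image {N : ℕ} (g : Fin N → Vtx) (hg : Function.Injective g)
    (Φ : (Vtx → Bool) → ℝ) (s : Vtx → Bool) (u : (Fin N → Bool) → Vtx → Bool)
    (hu : ∀ σ k, u σ (g k) = σ k) (hu' : ∀ σ v, (∀ k, v ≠ g k) → u σ v = s v) :
    RS (Finset.univ.image g) Φ s = ∑ σ : Fin N → Bool, Φ (u σ) := by
  rw [RS]
  refine Finset.sum_bij' (fun A _ => fun k => decide (g k ∈ A))
    (fun σ _ => (Finset.univ.filter fun k => σ k = true).image g) ?_ ?_ ?_ ?_ ?_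
  · simp
  · intro σ _
    rw [Finset.mem_powerset]
    exact Finset.image_subset_image (Finset.filter_subset _ _)
  · intro A hA
    ext v
    simp only [Finset.mem_image, Finset.mem_filter, Finset.mem_univ, true_and, decide_eq_true_eq]
    constructor
    · rintro ⟨k, hk, rfl⟩; exact hk
    · intro hv
      obtain ⟨k, -, rfl⟩ := Finset.mem_image.1 (Finset.mem_powerset.1 hA hv)
      exact ⟨k, hv, rfl⟩
  · intro σ _
    funext k
    by_cases h : σ k = true
    · simp [h, hg.eq_iff]
    · simp [h, hg.eq_iff]
  · intro A hA
    congr 1; funext v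
    by_cases hv : ∃ k, v = g k
    · obtain ⟨k, rfl⟩ := hv
      simp [ov, hu]
    · push Not at hv
      rw [hu' _ _ hv]
      have : v ∉ Finset.univ.image g := by
        simp only [Finset.mem_image, Finset.mem_univ, true_and, not_exists]
        exact fun k hk => hv k hk.symm
      simp [ov, this]

lemma RS_not (F : Finset Vtx) (Φ : (Vtx → Bool) → ℝ) (s : Vtx → Bool) :
    RS F (fun s => Φ (fun v => !s v)) s = RS F Φ (fun v => !s v) := by
  induction F using Finset.induction_on generalizing s with
  | empty => simp [RS_empty]
  | insert v F hv ih =>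
    rw [RS_insert hv, RS_insert hv, Fintype.sum_bool, Fintype.sum_bool, add_comm, ih, ih]
    have : ∀ b, (fun u => !(Function.update s v b u)) =
        Function.update (fun u => !s u) v (!b) := by
      intro b; funext u; by_cases hu : u = v
      · subst hu; simp
      · simp [hu]
    rw [this, this]; rfl

lemma RS_equiv (e : Vtx ≃ Vtx) (F : Finset Vtx) (Φ : (Vtx → Bool) → ℝ) (s : Vtx → Bool) :
    RS (F.image e) Φ s = RS F (fun s' => Φ (s' ∘ e.symm)) (s ∘ e) := by
  induction F using Finset.induction_on generalizing s with
  | empty => simp [RS_empty, Function.comp_assoc]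
  | insert v F hv ih =>
    have hv' : e v ∉ F.image e := by simpa using hv
    rw [Finset.image_insert, RS_insert hv', RS_insert hv]
    refine Finset.sum_congr rfl fun b _ => ?_
    rw [ih]
    congr 1
    funext u
    by_cases hu : u = v
    · subst hu; simp
    · simp [hu]

/-- Summation over spins preserves the hypothesis of the four functions theorem. -/
lemma RS_four {F : Finset Vtx} {f₁ f₂ f₃ f₄ : (Vtx → Bool) → ℝ}
    (h₁ : ∀ s, 0 ≤ f₁ s) (h₂ : ∀ s, 0 ≤ f₂ s) (h₃ : ∀ s, 0 ≤ f₃ s) (h₄ : ∀ s, 0 ≤ f₄ s)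
    (h : ∀ s s', f₁ s * f₂ s' ≤ f₃ (s ⊓ s') * f₄ (s ⊔ s')) (s s' : Vtx → Bool) :
    RS F f₁ s * RS F f₂ s' ≤ RS F f₃ (s ⊓ s') * RS F f₄ (s ⊔ s') := by
  induction F using Finset.induction_on generalizing s s' with
  | empty => simpa [RS_empty] using h s s'
  | insert v F hv ih =>
    simp only [RS_insert hv]
    refine four_functions_theorem_univ
      (f₁ := fun b => RS F f₁ (Function.update s v b))
      (f₂ := fun b => RS F f₂ (Function.update s' v b))
      (f₃ := fun b => RS F f₃ (Function.update (s ⊓ s') v b))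
      (f₄ := fun b => RS F f₄ (Function.update (s ⊔ s') v b))
      (fun b => RS_nonneg h₁ _) (fun b => RS_nonneg h₂ _) (fun b => RS_nonneg h₃ _)
      (fun b => RS_nonneg h₄ _) fun a b => ?_
    refine (ih _ _).trans_eq ?_
    congr 2 <;>
    · funext u
      by_cases hu : u = v
      · subst hu; simp
      · simp [hu]

/-- The critical disagreement weight `exp (-2 β_c) = √2 - 1`. -/
def tc : ℝ := Real.sqrt 2 - 1

lemma tc_pos : 0 < tc := by
  have : (1 : ℝ) < Real.sqrt 2 := by
    rw [Real.lt_sqrt] <;> norm_num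
  unfold tc; linarith

lemma tc_lt_one : tc < 1 := by
  have : Real.sqrt 2 < 2 := by
    rw [Real.sqrt_lt'] <;> norm_num
  unfold tc; linarith

/-- Weight of an edge whose end spins are `a` and `b`. -/
def ww (a b : Bool) : ℝ := if a = b then 1 else tc

lemma ww_pos (a b : Bool) : 0 < ww a b := by
  unfold ww; split_ifs; exacts [one_pos, tc_pos]

lemma ww_le_one (a b : Bool) : ww a b ≤ 1 := by
  unfold ww; split_ifs; exacts [le_rfl, tc_lt_one.le]

lemma ww_comm (a b : Bool) : ww a b = ww b a := by unfold ww; simp [eq_comm]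

lemma ww_four (a b a' b' : Bool) :
    ww a b * ww a' b' ≤ ww (a ⊓ a') (b ⊓ b') * ww (a ⊔ a') (b ⊔ b') := by
  have h0 := tc_pos
  have h1 := tc_lt_one
  cases a <;> cases b <;> cases a' <;> cases b' <;> simp [ww] <;> nlinarith

/-- Ising weight of the spin configuration `s` on the edge set `P`. -/
def WP (P : Finset (Vtx × Bool)) (s : Vtx → Bool) : ℝ :=
  ∏ e ∈ P, ww (s e.1) (s (e.1 + estep e.2))

lemma WP_pos (P : Finset (Vtx × Bool)) (s : Vtx → Bool) : 0 < WP P s :=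
  Finset.prod_pos fun _ _ => ww_pos _ _

lemma WP_four (P : Finset (Vtx × Bool)) (s s' : Vtx → Bool) :
    WP P s * WP P s' ≤ WP P (s ⊓ s') * WP P (s ⊔ s') := by
  simp only [WP, ← Finset.prod_mul_distrib]
  exact Finset.prod_le_prod (fun _ _ => (mul_pos (ww_pos _ _) (ww_pos _ _)).le)
    fun e _ => ww_four _ _ _ _

lemma WP_not (P : Finset (Vtx × Bool)) (s : Vtx → Bool) :
    WP P (fun v => !s v) = WP P s := by
  unfold WP ww; simp

/-- Ising partition function with boundary values `s`. -/
def ZI (F : Finset Vtx) (P : Finset (Vtx × Bool)) (s : Vtx → Bool) : ℝ := RS F (WP P) s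

lemma ZI_pos (F : Finset Vtx) (P : Finset (Vtx × Bool)) (s : Vtx → Bool) : 0 < ZI F P s :=
  RS_pos (WP_pos P) s

/-- The numerical value `±1` of a spin. -/
def zz (b : Bool) : ℝ := if b then 1 else -1

/-- The unnormalised magnetisation at the origin. -/
def MI (F : Finset Vtx) (P : Finset (Vtx × Bool)) (s : Vtx → Bool) : ℝ :=
  RS F (fun s => zz (s (0, 0)) * WP P s) s

/-- The magnetisation at the origin with `+` boundary conditions. -/
def mag (F : Finset Vtx) (P : Finset (Vtx × Bool)) : ℝ :=
  MI F P (fun _ => true) / ZI F P (fun _ => true)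

lemma MI_eq (F : Finset Vtx) (P : Finset (Vtx × Bool)) (s : Vtx → Bool) :
    MI F P s = 2 * RS F (fun s => (if s (0, 0) then 1 else 0) * WP P s) s - ZI F P s := by
  rw [← RS_const_mul, ZI, ← RS_sub, MI]
  refine RS_congr fun s' _ => ?_
  unfold zz; split_ifs <;> ring

/-- By the FKG inequality the `+` boundary condition maximises the magnetisation. -/
lemma MI_le (F : Finset Vtx) (P : Finset (Vtx × Bool)) (s : Vtx → Bool) :
    MI F P s ≤ mag F P * ZI F P s := by
  have hZ := ZI_pos F P (fun _ => true)
  rw [mag, div_mul_eq_mul_div, le_div_iff₀ hZ, MI_eq, MI_eq]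
  have key := RS_four (F := F) (f₁ := fun s => (if s (0, 0) then 1 else 0) * WP P s)
    (f₂ := WP P) (f₃ := WP P) (f₄ := fun s => (if s (0, 0) then 1 else 0) * WP P s)
    (fun s => mul_nonneg (by split_ifs <;> norm_num) (WP_pos P s).le) (fun s => (WP_pos P s).le)
    (fun s => (WP_pos P s).le)
    (fun s => mul_nonneg (by split_ifs <;> norm_num) (WP_pos P s).le)
    (fun s s' => by
      have h4 := WP_four P s s'
      have := mul_pos (WP_pos P (s ⊓ s')) (WP_pos P (s ⊔ s'))
      by_cases h : s (0, 0) = true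
      · simp [h]; exact h4
      · simp only [Bool.not_eq_true] at h
        simp only [h, Pi.sup_apply]
        split_ifs <;> simp_all
        exact this.le) s (fun _ => true)
  have e1 : s ⊓ (fun _ => true) = s := by funext v; simp
  have e2 : s ⊔ (fun _ => true) = fun _ => true := by funext v; simp
  rw [e1, e2] at key
  simp only [ZI] at *
  linarith

lemma MI_not (F : Finset Vtx) (P : Finset (Vtx × Bool)) (s : Vtx → Bool) :
    MI F P (fun v => !s v) = - MI F P s := by
  rw [MI, MI, ← RS_not, ← neg_one_mul, ← RS_const_mul]
  refine RS_congr fun s' _ => ?_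
  have : ∀ b, zz (!b) = - zz b := by intro b; cases b <;> simp [zz]
  simp only [WP_not, this]; ring

lemma ZI_not (F : Finset Vtx) (P : Finset (Vtx × Bool)) (s : Vtx → Bool) :
    ZI F P (fun v => !s v) = ZI F P s := by
  rw [ZI, ZI, ← RS_not]
  exact RS_congr fun s' _ => WP_not P s'

lemma abs_MI_le (F : Finset Vtx) (P : Finset (Vtx × Bool)) (s : Vtx → Bool) :
    |MI F P s| ≤ mag F P * ZI F P s := by
  rw [abs_le]
  refine ⟨?_, MI_le F P s⟩
  have := MI_le F P (fun v => !s v)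
  rw [MI_not, ZI_not] at this
  linarith

lemma mag_le_one (F : Finset Vtx) (P : Finset (Vtx × Bool)) : mag F P ≤ 1 := by
  rw [mag, div_le_one (ZI_pos _ _ _)]
  refine RS_mono (fun s => ?_) _
  have := WP_pos P s
  unfold zz; split_ifs <;> linarith

lemma mag_nonneg (F : Finset Vtx) (P : Finset (Vtx × Bool)) : 0 ≤ mag F P := by
  have := (abs_nonneg _).trans (abs_MI_le F P fun _ => true)
  exact nonneg_of_mul_nonneg_left this (ZI_pos _ _ _)

/-- The magnetisation in a larger region is bounded by that in a smaller one. -/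
lemma abs_MI_le_of_subset {F F' : Finset Vtx} (P : Finset (Vtx × Bool)) (h : F' ⊆ F)
    (s : Vtx → Bool) : |MI F P s| ≤ mag F' P * ZI F P s := by
  have e : F = (F \ F') ∪ F' := (Finset.sdiff_union_of_subset h).symm
  rw [MI, ZI, e, RS_union Finset.sdiff_disjoint, RS_union Finset.sdiff_disjoint, ← RS_const_mul]
  exact (abs_RS_le s).trans (RS_mono (fun s => abs_MI_le F' P s) s)

/-- Edges which do not touch the region do not influence the `+` magnetisation. -/
lemma mag_congr {F : Finset Vtx} {P P' : Finset (Vtx × Bool)}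
    (h : ∀ e : Vtx × Bool, (e.1 ∈ F ∨ e.1 + estep e.2 ∈ F) → (e ∈ P ↔ e ∈ P')) :
    mag F P = mag F P' := by
  have key : ∀ s : Vtx → Bool, (∀ v, v ∉ F → s v = true) → WP P s = WP P' s := by
    intro s hs
    have aux : ∀ P : Finset (Vtx × Bool), WP P s =
        ∏ e ∈ P.filter (fun e => e.1 ∈ F ∨ e.1 + estep e.2 ∈ F),
          ww (s e.1) (s (e.1 + estep e.2)) := by
      intro P
      rw [WP, Finset.prod_filter]
      refine Finset.prod_congr rfl fun e _ => ?_
      split_ifs with he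
      · rfl
      · push Not at he
        rw [hs _ he.1, hs _ he.2]; simp [ww]
    rw [aux, aux]
    congr 1
    ext e
    simp only [Finset.mem_filter]
    constructor
    · rintro ⟨h1, h2⟩; exact ⟨(h e h2).1 h1, h2⟩
    · rintro ⟨h1, h2⟩; exact ⟨(h e h2).2 h1, h2⟩
  unfold mag MI ZI
  congr 1
  · exact RS_congr fun s' h' => by rw [key s' h']
  · exact RS_congr fun s' h' => by rw [key s' h']

/-! ### Positive kernels: correlation inequalities and contraction -/

/-- Multivariate total positivity of order two for a kernel on a lattice. -/
def MTP {R S : Type*} [Lattice R] [Lattice S] (A : Matrix R S ℝ) : Prop :=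
  ∀ a b a' b', A a b * A a' b' ≤ A (a ⊓ a') (b ⊓ b') * A (a ⊔ a') (b ⊔ b')

lemma MTP.mul {R S U : Type*} [Lattice R] [DistribLattice S] [Fintype S] [Lattice U]
    {A : Matrix R S ℝ} {B : Matrix S U ℝ} (hA : MTP A) (hB : MTP B)
    (hA0 : ∀ a b, 0 ≤ A a b) (hB0 : ∀ a b, 0 ≤ B a b) : MTP (A * B) := by
  intro a b a' b'
  simp only [Matrix.mul_apply]
  refine four_functions_theorem_univ
    (f₁ := fun s => A a s * B s b) (f₂ := fun s => A a' s * B s b')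
    (f₃ := fun s => A (a ⊓ a') s * B s (b ⊓ b'))
    (f₄ := fun s => A (a ⊔ a') s * B s (b ⊔ b')) ?_ ?_ ?_ ?_ ?_
  · exact fun s => mul_nonneg (hA0 _ _) (hB0 _ _)
  · exact fun s => mul_nonneg (hA0 _ _) (hB0 _ _)
  · exact fun s => mul_nonneg (hA0 _ _) (hB0 _ _)
  · exact fun s => mul_nonneg (hA0 _ _) (hB0 _ _)
  · intro s s'
    have h1 := hA a s a' s'
    have h2 := hB s b s' b'
    have := mul_le_mul h1 h2 (mul_nonneg (hB0 _ _) (hB0 _ _))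
      (mul_nonneg (hA0 _ _) (hA0 _ _))
    linarith

lemma MTP.pow {R : Type*} [DistribLattice R] [Fintype R] [DecidableEq R]
    {A : Matrix R R ℝ} (hA : MTP A)
    (hA0 : ∀ a b, 0 < A a b) (n : ℕ) : MTP (A ^ (n + 1)) ∧ ∀ a b, 0 < (A ^ (n + 1)) a b := by
  induction n with
  | zero => simpa using ⟨hA, hA0⟩
  | succ n ih =>
    rw [pow_succ]
    refine ⟨ih.1.mul hA (fun a b => (ih.2 a b).le) (fun a b => (hA0 a b).le), fun a b => ?_⟩
    rw [Matrix.mul_apply]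
    exact Finset.sum_pos (fun s _ => mul_pos (ih.2 _ _) (hA0 _ _)) ⟨a, Finset.mem_univ a⟩

/-- For a totally positive kernel all cross ratios are controlled by the extreme one. -/
lemma MTP.cross {R : Type*} [Lattice R] [BoundedOrder R] {K : Matrix R R ℝ} (hK : MTP K)
    (h0 : ∀ a b, 0 < K a b) {C : ℝ}
    (hC : K ⊤ ⊤ * K ⊥ ⊥ ≤ C * (K ⊤ ⊥ * K ⊥ ⊤)) (a a' b b' : R) :
    K a b * K a' b' ≤ C ^ 2 * (K a b' * K a' b) := by
  have hC0 : 0 < C := by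
    have h1 := mul_pos (h0 ⊤ ⊤) (h0 ⊥ ⊥)
    have h2 := mul_pos (h0 ⊤ ⊥) (h0 ⊥ ⊤)
    by_contra h
    push Not at h
    nlinarith
  -- one column replaced by the bottom column
  have key : ∀ a a' b : R, K a b * K a' ⊥ ≤ C * (K a ⊥ * K a' b) := by
    intro a a' b
    have h1 : K a b * K ⊤ ⊥ ≤ K a ⊥ * K ⊤ b := by simpa using hK a b ⊤ ⊥
    have h2 : K a' ⊥ * K ⊥ b ≤ K ⊥ ⊥ * K a' b := by simpa using hK a' ⊥ ⊥ b
    have h3 : K ⊤ b * K ⊥ ⊤ ≤ K ⊥ b * K ⊤ ⊤ := by simpa using hK ⊤ b ⊥ ⊤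
    have p1 := h0 a b
    have p2 := h0 a' ⊥
    have p3 := h0 ⊤ ⊥
    have p4 := h0 ⊥ b
    have p5 := h0 ⊤ b
    have p6 := h0 ⊥ ⊤
    have p7 := h0 a ⊥
    have p8 := h0 a' b
    have p9 := h0 ⊥ ⊥
    have q1 : (K a b * K ⊤ ⊥) * (K a' ⊥ * K ⊥ b) ≤ (K a ⊥ * K ⊤ b) * (K ⊥ ⊥ * K a' b) :=
      mul_le_mul h1 h2 (by positivity) (by positivity)
    have q2 : (K a ⊥ * K ⊤ b) * (K ⊥ ⊥ * K a' b) * K ⊥ ⊤ ≤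
        (K a ⊥ * K a' b) * K ⊥ b * (K ⊤ ⊤ * K ⊥ ⊥) := by
      have := mul_le_mul_of_nonneg_left h3 (by positivity : 0 ≤ K a ⊥ * K a' b * K ⊥ ⊥)
      linarith
    have q3 : (K a ⊥ * K a' b) * K ⊥ b * (K ⊤ ⊤ * K ⊥ ⊥) ≤
        (K a ⊥ * K a' b) * K ⊥ b * (C * (K ⊤ ⊥ * K ⊥ ⊤)) :=
      mul_le_mul_of_nonneg_left hC (by positivity)
    have q4 := mul_le_mul_of_nonneg_right q1 p6.le
    have q5 : (K a b * K a' ⊥) * (K ⊤ ⊥ * K ⊥ b * K ⊥ ⊤) ≤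
        (C * (K a ⊥ * K a' b)) * (K ⊤ ⊥ * K ⊥ b * K ⊥ ⊤) := by linarith
    exact le_of_mul_le_mul_right q5 (by positivity)
  have h1 := key a a' b
  have h2 := key a' a b'
  have p1 := h0 a ⊥
  have p2 := h0 a' ⊥
  have p3 := h0 a b
  have p4 := h0 a' b'
  have p5 := h0 a' b
  have p6 := h0 a b'
  have := mul_le_mul h1 h2 (by positivity) (by positivity)
  have q : (K a b * K a' b') * (K a ⊥ * K a' ⊥) ≤
      (C ^ 2 * (K a b' * K a' b)) * (K a ⊥ * K a' ⊥) := by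
    linarith
  exact le_of_mul_le_mul_right q (by positivity)

section Contraction

variable {R : Type*} [Fintype R]

/-- A kernel with cross ratios bounded by `Q`, applied to nonnegative vectors. -/
lemma cross_mulVec {K : Matrix R R ℝ} {Q : ℝ}
    (hQ : ∀ a a' b b', K a b * K a' b' ≤ Q * (K a b' * K a' b)) {u y : R → ℝ}
    (hu : ∀ a, 0 ≤ u a) (hy : ∀ a, 0 ≤ y a) (a a' : R) :
    (K.mulVec u) a * (K.mulVec y) a' ≤ Q * ((K.mulVec u) a' * (K.mulVec y) a) := by
  have e : ∀ (v : R → ℝ) c, (K.mulVec v) c = ∑ b, K c b * v b := fun _ _ => rfl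
  rw [e, e, e, e, Finset.sum_mul_sum, Finset.sum_mul_sum, Finset.mul_sum]
  refine Finset.sum_le_sum fun b _ => ?_
  rw [Finset.mul_sum]
  refine Finset.sum_le_sum fun b' _ => ?_
  have := mul_le_mul_of_nonneg_right (hQ a a' b b') (mul_nonneg (hu b) (hy b'))
  linarith

lemma mulVec_pos {K : Matrix R R ℝ} (h0 : ∀ a b, 0 < K a b) {y : R → ℝ}
    (hy : ∀ a, 0 ≤ y a) (hy' : ∃ a, y a ≠ 0) (a : R) : 0 < (K.mulVec y) a := by
  obtain ⟨b, hb⟩ := hy'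
  exact Finset.sum_pos' (fun i _ => mul_nonneg (h0 _ _).le (hy i))
    ⟨b, Finset.mem_univ b, mul_pos (h0 _ _) (lt_of_le_of_ne (hy b) (Ne.symm hb))⟩

/-- One step of the contraction: after applying `K`, the ratio of `u` to `y` varies by a factor at
most `Q`, and its upper bound does not increase. -/
lemma contraction_step [Nonempty R] {K : Matrix R R ℝ} {Q : ℝ} (h0 : ∀ a b, 0 < K a b)
    (hQ1 : 1 ≤ Q)
    (hQ : ∀ a a' b b', K a b * K a' b' ≤ Q * (K a b' * K a' b)) {u y : R → ℝ}
    (hu : ∀ a, 0 ≤ u a) (hy : ∀ a, 0 < y a) {D : ℝ} (hD : ∀ a, u a ≤ D * y a) :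
    ∃ M : ℝ, 0 ≤ M ∧ M ≤ D ∧ ∀ a, (K.mulVec u) a ≤ M * (K.mulVec y) a ∧
      (M / Q) * (K.mulVec y) a ≤ (K.mulVec u) a := by
  have hKy : ∀ a, 0 < (K.mulVec y) a :=
    mulVec_pos h0 (fun a => (hy a).le) ⟨Classical.arbitrary R, (hy _).ne'⟩
  have hKu : ∀ a, 0 ≤ (K.mulVec u) a := fun a =>
    Finset.sum_nonneg fun i _ => mul_nonneg (h0 _ _).le (hu i)
  obtain ⟨a₀, h₀⟩ := Finite.exists_max (fun a => (K.mulVec u) a / (K.mulVec y) a)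
  refine ⟨(K.mulVec u) a₀ / (K.mulVec y) a₀, div_nonneg (hKu _) (hKy _).le, ?_, fun a => ⟨?_, ?_⟩⟩
  · rw [div_le_iff₀ (hKy _)]
    simp only [Matrix.mulVec, dotProduct, Finset.mul_sum]
    refine Finset.sum_le_sum fun b _ => ?_
    have := mul_le_mul_of_nonneg_left (hD b) (h0 a₀ b).le
    linarith
  · rw [← div_le_iff₀ (hKy a)]; exact h₀ a
  · have := cross_mulVec hQ hu (fun a => (hy a).le) a₀ a
    rw [div_div, div_mul_eq_mul_div, div_le_iff₀ (mul_pos (hKy _) (by linarith))]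
    linarith

/-- Birkhoff-type contraction: under iteration of a kernel with bounded cross ratios any two
nonnegative vectors become proportional at an exponential rate. -/
lemma contraction [Nonempty R] [DecidableEq R] {K : Matrix R R ℝ} {Q : ℝ}
    (h0 : ∀ a b, 0 < K a b) (hQ1 : 1 ≤ Q)
    (hQ : ∀ a a' b b', K a b * K a' b' ≤ Q * (K a b' * K a' b)) {u y : R → ℝ}
    (hu : ∀ a, 0 ≤ u a) (hu' : ∃ a, u a ≠ 0) (hy : ∀ a, 0 ≤ y a) (hy' : ∃ a, y a ≠ 0) (j : ℕ) :
    ∃ μ : ℝ, 0 < μ ∧ ∀ a, μ * ((K ^ (j + 1)).mulVec y) a ≤ ((K ^ (j + 1)).mulVec u) a ∧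
      ((K ^ (j + 1)).mulVec u) a ≤
        μ * (1 + (Q - 1) * (1 - 1 / Q) ^ j) * ((K ^ (j + 1)).mulVec y) a := by
  have hQ0 : 0 < Q := by linarith
  have hθ : 0 ≤ 1 - 1 / Q := by
    rw [sub_nonneg, div_le_one hQ0]; exact hQ1
  have hKy := mulVec_pos h0 hy hy'
  have hKu := mulVec_pos h0 hu hu'
  -- `m₀` is the initial lower proportionality constant, `d` the current oscillation
  obtain ⟨m₀, hm₀, H⟩ : ∃ m₀ : ℝ, 0 < m₀ ∧ ∀ j, ∃ m d : ℝ, m₀ ≤ m ∧ 0 ≤ d ∧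
      d ≤ (Q - 1) * (1 - 1 / Q) ^ j * m₀ ∧ ∀ a,
        m * ((K ^ (j + 1)).mulVec y) a ≤ ((K ^ (j + 1)).mulVec u) a ∧
        ((K ^ (j + 1)).mulVec u) a ≤ (m + d) * ((K ^ (j + 1)).mulVec y) a := by
    obtain ⟨a₀, h₀⟩ := Finite.exists_max (fun a => (K.mulVec u) a / (K.mulVec y) a)
    set M := (K.mulVec u) a₀ / (K.mulVec y) a₀ with hM
    have hM0 : 0 < M := div_pos (hKu _) (hKy _)
    refine ⟨M / Q, div_pos hM0 hQ0, fun j => ?_⟩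
    induction j with
    | zero =>
      refine ⟨M / Q, M - M / Q, le_rfl, ?_, ?_, fun a => ?_⟩
      · rw [sub_nonneg]; exact div_le_self hM0.le hQ1
      · apply le_of_eq; field_simp
      · simp only [zero_add, pow_one]
        constructor
        · have := cross_mulVec hQ hu hy a₀ a
          rw [hM, div_div, div_mul_eq_mul_div, div_le_iff₀ (mul_pos (hKy _) hQ0)]
          linarith
        · rw [add_sub_cancel, ← div_le_iff₀ (hKy a)]; exact h₀ a
    | succ j ih =>
      obtain ⟨m, d, hm, hd, hd', h⟩ := ih
      set Y := (K ^ (j + 1)).mulVec y with hY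
      set U := (K ^ (j + 1)).mulVec u with hU
      have eY : (K ^ (j + 1 + 1)).mulVec y = K.mulVec Y := by
        rw [hY, Matrix.mulVec_mulVec, ← pow_succ']
      have eU : (K ^ (j + 1 + 1)).mulVec u = K.mulVec U := by
        rw [hU, Matrix.mulVec_mulVec, ← pow_succ']
      have hYpos : ∀ a, 0 < Y a := by
        have : ∀ n, ∀ a b, 0 < (K ^ (n + 1)) a b := by
          intro n
          induction n with
          | zero => simpa using h0
          | succ n ih =>
            intro a b
            rw [pow_succ, Matrix.mul_apply]
            exact Finset.sum_pos (fun s _ => mul_pos (ih _ _) (h0 _ _)) ⟨a, Finset.mem_univ a⟩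
        exact mulVec_pos (this j) hy hy'
      obtain ⟨M', hM'0, hM'd, hM'⟩ := contraction_step h0 hQ1 hQ (u := U - m • Y) (y := Y) (D := d)
        (fun a => by have := (h a).1; simpa using this) hYpos
        (fun a => by have := (h a).2; simp only [Pi.sub_apply, Pi.smul_apply, smul_eq_mul]; linarith)
      refine ⟨m + M' / Q, M' * (1 - 1 / Q), ?_, mul_nonneg hM'0 hθ, ?_, fun a => ?_⟩
      · have := div_nonneg hM'0 hQ0.le
        linarith
      · calc M' * (1 - 1 / Q) ≤ ((Q - 1) * (1 - 1 / Q) ^ j * (M / Q)) * (1 - 1 / Q) :=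
              mul_le_mul_of_nonneg_right (hM'd.trans hd') hθ
          _ = _ := by ring
      · rw [eY, eU]
        have h1 := hM' a
        rw [Matrix.mulVec_sub, Matrix.mulVec_smul] at h1
        simp only [Pi.sub_apply, Pi.smul_apply, smul_eq_mul] at h1
        constructor
        · linarith [h1.2]
        · have : m + M' / Q + M' * (1 - 1 / Q) = m + M' := by ring
          rw [this]; linarith [h1.1]
  obtain ⟨m, d, hm, hd, hd', h⟩ := H j
  have hKpos : ∀ a, 0 ≤ ((K ^ (j + 1)).mulVec y) a := by
    have : ∀ n, ∀ a b, 0 ≤ (K ^ n) a b := by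
      intro n
      induction n with
      | zero => intro a b; simp only [pow_zero, Matrix.one_apply]; split_ifs <;> norm_num
      | succ n ih =>
        intro a b
        rw [pow_succ, Matrix.mul_apply]
        exact Finset.sum_nonneg (fun s _ => mul_nonneg (ih _ _) (h0 _ _).le)
    exact fun a => Finset.sum_nonneg fun b _ => mul_nonneg (this _ _ _) (hy b)
  refine ⟨m, by linarith, fun a => ⟨(h a).1, (h a).2.trans ?_⟩⟩
  refine mul_le_mul_of_nonneg_right ?_ (hKpos a)
  have : (Q - 1) * (1 - 1 / Q) ^ j * m₀ ≤ (Q - 1) * (1 - 1 / Q) ^ j * m :=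
    mul_le_mul_of_nonneg_left hm (mul_nonneg (by linarith) (pow_nonneg hθ j))
  linarith

/-- Comparison of the quadratic forms of two kernels on almost proportional vectors. -/
lemma quad_compare {G B : Matrix R R ℝ} {F μ ε s : ℝ} {x y : R → ℝ} (hF : 0 ≤ F) (hμ : 0 < μ)
    (hε : 0 ≤ ε) (hs : 0 ≤ s)
    (hG : ∀ a b, |G a b| ≤ F * B a b) (hB : ∀ a b, 0 ≤ B a b) (hy : ∀ a, 0 ≤ y a)
    (h1 : ∀ a, μ * y a ≤ x a) (h2 : ∀ a, x a ≤ μ * (1 + ε) * y a)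
    (hs' : dotProduct y (G.mulVec y) = s * dotProduct y (B.mulVec y)) :
    dotProduct x (G.mulVec x) ≤ (s + (2 * ε + ε ^ 2) * F) * dotProduct x (B.mulVec x) := by
  have hx : ∀ a, 0 ≤ x a := fun a => (mul_nonneg hμ.le (hy a)).trans (h1 a)
  have e1 : ∀ (A : Matrix R R ℝ) (v : R → ℝ), dotProduct v (A.mulVec v) =
      ∑ a, ∑ b, A a b * (v a * v b) := by
    intro A v
    simp only [dotProduct, Matrix.mulVec, Finset.mul_sum]
    exact Finset.sum_congr rfl fun a _ => Finset.sum_congr rfl fun b _ => by ring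
  have hBB : μ ^ 2 * dotProduct y (B.mulVec y) ≤ dotProduct x (B.mulVec x) := by
    rw [e1, e1, Finset.mul_sum]
    refine Finset.sum_le_sum fun a _ => ?_
    rw [Finset.mul_sum]
    refine Finset.sum_le_sum fun b _ => ?_
    have := mul_le_mul (h1 a) (h1 b) (mul_nonneg hμ.le (hy b)) (hx a)
    have := mul_le_mul_of_nonneg_left this (hB a b)
    linarith
  have hGG : dotProduct x (G.mulVec x) ≤ μ ^ 2 * dotProduct y (G.mulVec y) +
      μ ^ 2 * ((2 * ε + ε ^ 2) * F) * dotProduct y (B.mulVec y) := by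
    rw [e1, e1, e1, Finset.mul_sum, Finset.mul_sum, ← Finset.sum_add_distrib]
    refine Finset.sum_le_sum fun a _ => ?_
    rw [Finset.mul_sum, Finset.mul_sum, ← Finset.sum_add_distrib]
    refine Finset.sum_le_sum fun b _ => ?_
    have hd : |x a * x b - μ ^ 2 * (y a * y b)| ≤ μ ^ 2 * (2 * ε + ε ^ 2) * (y a * y b) := by
      have l := mul_le_mul (h1 a) (h1 b) (mul_nonneg hμ.le (hy b)) (hx a)
      have u := mul_le_mul (h2 a) (h2 b) (hx b)
        (mul_nonneg (mul_nonneg hμ.le (by linarith)) (hy a))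
      have : 0 ≤ μ ^ 2 * (2 * ε + ε ^ 2) * (y a * y b) := by
        have := mul_nonneg (hy a) (hy b); positivity
      rw [abs_le]; constructor
      · linarith
      · linarith
    have h3 : G a b * (x a * x b - μ ^ 2 * (y a * y b)) ≤
        (F * B a b) * (μ ^ 2 * (2 * ε + ε ^ 2) * (y a * y b)) := by
      refine (le_abs_self _).trans ?_
      rw [abs_mul]
      exact mul_le_mul (hG a b) hd (abs_nonneg _) (mul_nonneg hF (hB a b))
    linarith
  rw [hs'] at hGG
  have : 0 ≤ s + (2 * ε + ε ^ 2) * F := by positivity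
  have := mul_le_mul_of_nonneg_left hBB this
  linarith

end Contraction

/-! ### The diagonal transfer matrix and the quantum Ising Hamiltonian -/

/-- Rows of `N` free spins. -/
abbrev Row (N : ℕ) : Type := Fin N → Bool

/-- A row of free spins completed by a `+` spin at both ends. -/
def ex {N : ℕ} (σ : Row N) : Fin (N + 2) → Bool :=
  Fin.cons (α := fun _ => Bool) true (Fin.snoc (α := fun _ => Bool) σ true)

@[simp] lemma ex_zero {N : ℕ} (σ : Row N) : ex σ 0 = true := rfl

@[simp] lemma ex_last {N : ℕ} (σ : Row N) : ex σ (Fin.last (N + 1)) = true := by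
  rw [← Fin.succ_last]; simp [ex]

@[simp] lemma ex_mid {N : ℕ} (σ : Row N) (k : Fin N) : ex σ k.castSucc.succ = σ k := by
  simp [ex]

@[simp] lemma ex_mid' {N : ℕ} (σ : Row N) (k : Fin N) : ex σ k.succ.castSucc = σ k := by
  rw [← Fin.succ_castSucc]; simp

lemma fin_cases3 {N : ℕ} (i : Fin (N + 2)) :
    i = 0 ∨ i = Fin.last (N + 1) ∨ ∃ k : Fin N, i = k.castSucc.succ := by
  refine Fin.cases (Or.inl rfl) (fun j => ?_) i
  refine Fin.lastCases (Or.inr (Or.inl (Fin.succ_last _))) (fun k => Or.inr (Or.inr ⟨k, rfl⟩)) j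

/-- Flip the spin with index `k`. -/
def flip {ι : Type*} [DecidableEq ι] (σ : ι → Bool) (k : ι) : ι → Bool :=
  Function.update σ k (!σ k)

lemma flip_flip {ι : Type*} [DecidableEq ι] (σ : ι → Bool) (k : ι) : flip (flip σ k) k = σ := by
  simp [flip]

/-- Flipping a spin as a permutation of the configurations. -/
def flipE {ι : Type*} [DecidableEq ι] (k : ι) : (ι → Bool) ≃ (ι → Bool) :=
  ⟨fun σ => flip σ k, fun σ => flip σ k, fun σ => flip_flip σ k, fun σ => flip_flip σ k⟩

lemma sum_flip {ι : Type*} [DecidableEq ι] [Fintype ι] (k : ι) (f : (ι → Bool) → ℝ) :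
    ∑ σ, f (flip σ k) = ∑ σ, f σ := Equiv.sum_comp (flipE k) f

lemma sum_zz_flip {ι : Type*} [DecidableEq ι] [Fintype ι] (σ : ι → Bool) (k : ι) (a : ι → ℝ) :
    ∑ i, zz (flip σ k i) * a i = ∑ i, zz (σ i) * a i - 2 * (zz (σ k) * a k) := by
  have h : ∀ i, zz (flip σ k i) * a i =
      zz (σ i) * a i - (if i = k then 2 * (zz (σ k) * a k) else 0) := by
    intro i
    by_cases hi : i = k
    · subst hi
      have : zz (!σ i) = - zz (σ i) := by cases σ i <;> simp [zz]
      simp only [flip, Function.update_self, this, if_true]; ring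
    · simp [flip, hi]
  simp only [h, Finset.sum_sub_distrib, Finset.sum_ite_eq', Finset.mem_univ, if_true]

lemma ex_flip {N : ℕ} (σ : Row N) (k : Fin N) : ex (flip σ k) = flip (ex σ) k.castSucc.succ := by
  funext i
  rcases fin_cases3 i with rfl | rfl | ⟨j, rfl⟩
  · have : (0 : Fin (N + 2)) ≠ k.castSucc.succ := (Fin.succ_ne_zero _).symm
    simp only [ex_zero, flip, Function.update_of_ne this]
  · have : (Fin.last (N + 1)) ≠ k.castSucc.succ := by
      rw [Fin.succ_castSucc]; exact (Fin.castSucc_lt_last _).ne'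
    simp only [ex_last, flip, Function.update_of_ne this]
  · by_cases h : j = k
    · subst h; simp [flip]
    · have : j.castSucc.succ ≠ k.castSucc.succ := fun h' => h (by simpa using h')
      simp only [ex_mid, flip, Function.update_of_ne h, Function.update_of_ne this]

/-- The weight of the edges between an even row and the adjacent odd row. -/
def qq {N : ℕ} (σ : Row N) (o : Row (N + 1)) : ℝ :=
  ∏ k : Fin (N + 1), ww (ex σ k.castSucc) (o k) * ww (ex σ k.succ) (o k)

lemma qq_pos {N : ℕ} (σ : Row N) (o : Row (N + 1)) : 0 < qq σ o :=
  Finset.prod_pos fun _ _ => mul_pos (ww_pos _ _) (ww_pos _ _)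

/-- The row weights as a matrix. -/
def QQ (N : ℕ) : Matrix (Row N) (Row (N + 1)) ℝ := qq

/-- The transfer matrix between two consecutive even rows. -/
def TT (N : ℕ) : Matrix (Row N) (Row N) ℝ := QQ N * (QQ N).transpose

lemma TT_apply {N : ℕ} (σ τ : Row N) : TT N σ τ = ∑ o, qq σ o * qq τ o := rfl

lemma TT_pos {N : ℕ} (σ τ : Row N) : 0 < TT N σ τ := by
  rw [TT_apply]
  exact Finset.sum_pos (fun o _ => mul_pos (qq_pos _ _) (qq_pos _ _)) ⟨_, Finset.mem_univ fun _ => true⟩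

lemma TT_transpose (N : ℕ) : (TT N).transpose = TT N := by
  rw [TT, Matrix.transpose_mul, Matrix.transpose_transpose]

lemma ex_inf {N : ℕ} (σ τ : Row N) : ex (σ ⊓ τ) = ex σ ⊓ ex τ := by
  funext i
  rcases fin_cases3 i with rfl | rfl | ⟨j, rfl⟩ <;> simp

lemma ex_sup {N : ℕ} (σ τ : Row N) : ex (σ ⊔ τ) = ex σ ⊔ ex τ := by
  funext i
  rcases fin_cases3 i with rfl | rfl | ⟨j, rfl⟩ <;> simp

lemma qq_MTP (N : ℕ) : MTP (QQ N) := by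
  intro σ o τ p
  simp only [QQ, qq, ← Finset.prod_mul_distrib]
  refine Finset.prod_le_prod (fun k _ => ?_) fun k _ => ?_
  · have := ww_pos
    exact (mul_pos (mul_pos (this _ _) (this _ _)) (mul_pos (this _ _) (this _ _))).le
  · rw [ex_inf, ex_sup]
    have h1 := ww_four (ex σ k.castSucc) (o k) (ex τ k.castSucc) (p k)
    have h2 := ww_four (ex σ k.succ) (o k) (ex τ k.succ) (p k)
    have := mul_le_mul h1 h2 (mul_pos (ww_pos _ _) (ww_pos _ _)).le
      (mul_pos (ww_pos _ _) (ww_pos _ _)).le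
    simp only [Pi.inf_apply, Pi.sup_apply]
    linarith

lemma TT_MTP (N : ℕ) : MTP (TT N) := by
  refine (qq_MTP N).mul (fun a b a' b' => ?_) (fun _ _ => (qq_pos _ _).le) fun _ _ => (qq_pos _ _).le
  have := qq_MTP N b a b' a'
  simpa only [Matrix.transpose_apply, mul_comm] using this

/-- The quantum Ising Hamiltonian with `+` ends. -/
def Hop {N : ℕ} (v : Row N → ℝ) (σ : Row N) : ℝ :=
  (∑ k : Fin (N + 1), zz (ex σ k.castSucc) * zz (ex σ k.succ)) * v σ + ∑ k : Fin N, v (flip σ k)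

/-- The Hamiltonian on the odd rows which intertwines with `Hop`. -/
def Hodd {N : ℕ} (v : Row (N + 1) → ℝ) (o : Row (N + 1)) : ℝ :=
  (∑ k : Fin N, zz (o k.castSucc) * zz (o k.succ)
      + Real.sqrt 2 * (zz (o 0) + zz (o (Fin.last N)))) * v o
    + ∑ k : Fin (N + 1), v (flip o k)

lemma exp_betaC : Real.exp (-2 * betaC) = tc := by
  have h2 : (0 : ℝ) < 1 + Real.sqrt 2 := by positivity
  have h3 : Real.sqrt 2 ^ 2 = 2 := Real.sq_sqrt (by norm_num)
  rw [betaC, show -2 * (Real.log (1 + Real.sqrt 2) / 2) = -Real.log (1 + Real.sqrt 2) by ring,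
    Real.exp_neg, Real.exp_log h2, tc]
  apply inv_eq_of_mul_eq_one_right
  nlinarith

lemma ww_eq_exp (a b : Bool) : ww a b = Real.exp (betaC * (zz a * zz b - 1)) := by
  have h := exp_betaC
  have e : betaC * (-1 - 1) = -2 * betaC := by ring
  cases a <;> cases b <;> simp [ww, zz, ← h, e]

/-- The identity satisfied by the flip ratios at criticality. -/
lemma critical_identity (a b b' : Bool) :
    Real.exp (-(2 * betaC * (zz a * (zz b + zz b')))) =
      2 + zz b * zz b' - Real.sqrt 2 * (zz a * (zz b + zz b')) := by
  have h3 : Real.sqrt 2 ^ 2 = 2 := Real.sq_sqrt (by norm_num)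
  have h := exp_betaC
  have e4 : Real.exp (-(2 * betaC * 2)) = tc ^ 2 := by
    rw [← h, ← Real.exp_nat_mul]; congr 1; push_cast; ring
  have e4' : Real.exp (2 * betaC * 2) = (tc ^ 2)⁻¹ := by
    rw [← e4, ← Real.exp_neg, neg_neg]
  have e5 : (tc ^ 2)⁻¹ = 3 + 2 * Real.sqrt 2 := by
    apply inv_eq_of_mul_eq_one_right
    rw [tc]; nlinarith
  have e6 : tc ^ 2 = 3 - 2 * Real.sqrt 2 := by rw [tc]; ring_nf; rw [h3]; ring
  rw [e5] at e4'
  rw [e6] at e4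
  cases a <;> cases b <;> cases b' <;>
    norm_num [zz, e4, e4'] <;> ring

/-- The exponent of the row weight. -/
def EE {N : ℕ} (σ : Row N) (o : Row (N + 1)) : ℝ :=
  ∑ k : Fin (N + 1), zz (o k) * (zz (ex σ k.castSucc) + zz (ex σ k.succ))

lemma qq_eq_exp {N : ℕ} (σ : Row N) (o : Row (N + 1)) :
    qq σ o = Real.exp (betaC * EE σ o) * Real.exp (-(2 * betaC * (N + 1))) := by
  rw [qq, ← Real.exp_add, EE]
  simp only [ww_eq_exp, ← Real.exp_add]
  rw [← Real.exp_sum]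
  congr 1
  have : (2 : ℝ) * betaC * (N + 1) = ∑ k : Fin (N + 1), 2 * betaC := by
    simp; ring
  rw [this, Finset.mul_sum, ← Finset.sum_neg_distrib, ← Finset.sum_add_distrib]
  exact Finset.sum_congr rfl fun k _ => by ring

lemma EE_eq {N : ℕ} (σ : Row N) (o : Row (N + 1)) :
    EE σ o = zz (o 0) + zz (o (Fin.last N)) +
      ∑ k : Fin N, zz (σ k) * (zz (o k.castSucc) + zz (o k.succ)) := by
  have h1 : ∑ k : Fin (N + 1), zz (o k) * zz (ex σ k.castSucc) =
      zz (o 0) + ∑ k : Fin N, zz (σ k) * zz (o k.succ) := by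
    rw [Fin.sum_univ_succ]
    simp [zz, mul_comm]
  have h2 : ∑ k : Fin (N + 1), zz (o k) * zz (ex σ k.succ) =
      ∑ k : Fin N, zz (σ k) * zz (o k.castSucc) + zz (o (Fin.last N)) := by
    rw [Fin.sum_univ_castSucc]
    simp [zz, mul_comm]
  simp only [EE, mul_add, Finset.sum_add_distrib]
  rw [h1, h2]; ring

/-- The effect of a spin flip in the even row on the row weight. This uses the critical value of
the temperature, which makes the flip factor bilinear in the neighbouring spins. -/
lemma qq_flip_even {N : ℕ} (σ : Row N) (o : Row (N + 1)) (k : Fin N) :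
    qq (flip σ k) o = (2 + zz (o k.castSucc) * zz (o k.succ)
      - Real.sqrt 2 * (zz (σ k) * (zz (o k.castSucc) + zz (o k.succ)))) * qq σ o := by
  rw [← critical_identity, qq_eq_exp, qq_eq_exp]
  simp only [← Real.exp_add]
  congr 1
  rw [EE_eq, EE_eq, sum_zz_flip σ k fun k => zz (o k.castSucc) + zz (o k.succ)]
  ring

/-- The effect of a spin flip in the odd row on the row weight. -/
lemma qq_flip_odd {N : ℕ} (σ : Row N) (o : Row (N + 1)) (k : Fin (N + 1)) :
    qq σ (flip o k) = (2 + zz (ex σ k.castSucc) * zz (ex σ k.succ)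
      - Real.sqrt 2 * (zz (o k) * (zz (ex σ k.castSucc) + zz (ex σ k.succ)))) * qq σ o := by
  rw [← critical_identity, qq_eq_exp, qq_eq_exp]
  simp only [← Real.exp_add]
  congr 1
  rw [EE, EE, sum_zz_flip o k fun k => zz (ex σ k.castSucc) + zz (ex σ k.succ)]
  ring

/-- The row weight intertwines `Hop` on the even rows with `Hodd - 2` on the odd rows. Applied
twice, it shows that `Hop` commutes with `TT = QQ * QQᵀ`. -/
lemma intertwine {N : ℕ} (σ : Row N) (o : Row (N + 1)) :
    Hop (fun σ => qq σ o) σ = Hodd (qq σ) o - 2 * qq σ o := by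
  have h := EE_eq σ o
  rw [EE] at h
  simp only [Hop, Hodd, qq_flip_even, qq_flip_odd, ← Finset.sum_mul, Finset.sum_sub_distrib,
    Finset.sum_add_distrib, ← Finset.mul_sum]
  simp only [Finset.sum_const, Finset.card_univ, Fintype.card_fin, nsmul_eq_mul, Nat.cast_add,
    Nat.cast_one]
  rw [h]; ring

lemma Hop_symm {N : ℕ} (u v : Row N → ℝ) :
    ∑ σ, Hop u σ * v σ = ∑ σ, u σ * Hop v σ := by
  simp only [Hop, add_mul, mul_add, Finset.sum_add_distrib, Finset.sum_mul, Finset.mul_sum]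
  congr 1
  · refine Finset.sum_congr rfl fun σ _ => Finset.sum_congr rfl fun k _ => by ring
  · rw [Finset.sum_comm]
    conv_rhs => rw [Finset.sum_comm]
    refine Finset.sum_congr rfl fun k _ => ?_
    rw [← sum_flip k]
    simp only [flip_flip]

lemma Hodd_symm {N : ℕ} (u v : Row (N + 1) → ℝ) :
    ∑ σ, Hodd u σ * v σ = ∑ σ, u σ * Hodd v σ := by
  have e1 : ∀ (a : Row (N + 1) → ℝ) (f : Row (N + 1) → Fin (N + 1) → ℝ) (w : Row (N + 1) → ℝ),
      ∑ σ, (a σ * w σ + ∑ k, f σ k) = ∑ σ, a σ * w σ + ∑ σ, ∑ k, f σ k :=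
    fun _ _ _ => Finset.sum_add_distrib
  have e2 : ∑ σ, Hodd u σ * v σ = ∑ σ, ((∑ k : Fin N, zz (σ k.castSucc) * zz (σ k.succ)
      + Real.sqrt 2 * (zz (σ 0) + zz (σ (Fin.last N)))) * (u σ * v σ) +
        ∑ k, u (flip σ k) * v σ) :=
    Finset.sum_congr rfl fun σ _ => by rw [Hodd, add_mul, Finset.sum_mul]; ring
  have e3 : ∑ σ, u σ * Hodd v σ = ∑ σ, ((∑ k : Fin N, zz (σ k.castSucc) * zz (σ k.succ)
      + Real.sqrt 2 * (zz (σ 0) + zz (σ (Fin.last N)))) * (u σ * v σ) +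
        ∑ k, u σ * v (flip σ k)) :=
    Finset.sum_congr rfl fun σ _ => by rw [Hodd, mul_add, Finset.mul_sum]; ring
  rw [e2, e3, e1, e1]
  congr 1
  · rw [Finset.sum_comm]
    conv_rhs => rw [Finset.sum_comm]
    refine Finset.sum_congr rfl fun k _ => ?_
    rw [← sum_flip k]
    simp only [flip_flip]

lemma Hop_TT_kernel {N : ℕ} (σ τ : Row N) :
    Hop (fun σ => TT N σ τ) σ = Hop (fun τ => TT N σ τ) τ := by
  have lin : ∀ (g : Row (N + 1) → ℝ) (f : Row N → Row (N + 1) → ℝ) (σ : Row N),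
      Hop (fun σ => ∑ o, f σ o * g o) σ = ∑ o, Hop (fun σ => f σ o) σ * g o := by
    intro g f σ
    simp only [Hop, add_mul, Finset.sum_add_distrib, Finset.mul_sum]
    congr 1
    · exact Finset.sum_congr rfl fun o _ => by ring
    · rw [Finset.sum_comm]; simp only [Finset.sum_mul]
  have e1 : Hop (fun σ => TT N σ τ) σ = ∑ o, (Hodd (qq σ) o - 2 * qq σ o) * qq τ o := by
    simp only [TT_apply, lin, intertwine]
  have e2 : Hop (fun τ => TT N σ τ) τ = ∑ o, (Hodd (qq τ) o - 2 * qq τ o) * qq σ o := by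
    simp only [TT_apply]
    simp only [fun (a : Row N) o => mul_comm (qq σ o) (qq a o), lin, intertwine]
  rw [e1, e2]
  simp only [sub_mul, Finset.sum_sub_distrib]
  rw [Hodd_symm]
  congr 1
  · exact Finset.sum_congr rfl fun o _ => mul_comm _ _
  · exact Finset.sum_congr rfl fun o _ => by ring

/-- The Hamiltonian commutes with the transfer matrix. -/
lemma Hop_TT {N : ℕ} (v : Row N → ℝ) :
    Hop ((TT N).mulVec v) = (TT N).mulVec (Hop v) := by
  funext σ
  have e1 : Hop ((TT N).mulVec v) σ = ∑ τ, Hop (fun σ => TT N σ τ) σ * v τ := by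
    simp only [Hop, Matrix.mulVec, dotProduct, add_mul, Finset.sum_add_distrib, Finset.mul_sum]
    congr 1
    · exact Finset.sum_congr rfl fun o _ => by ring
    · rw [Finset.sum_comm]; simp only [Finset.sum_mul]
  rw [e1]
  simp only [Hop_TT_kernel]
  rw [Hop_symm]
  rfl

lemma Hop_TT_pow {N : ℕ} {E : ℝ} (n : ℕ) {v : Row N → ℝ} (hv : Hop v = E • v) :
    Hop (((TT N) ^ n).mulVec v) = E • ((TT N) ^ n).mulVec v := by
  induction n with
  | zero => simpa using hv
  | succ n ih =>
    rw [pow_succ', ← Matrix.mulVec_mulVec, Hop_TT, ih, Matrix.mulVec_smul]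

/-! ### Partition functions of rotated rectangles as powers of the transfer matrix -/

/-- The vertices strictly inside the rotated rectangle
`|x - y| ≤ 2 h`, `2 b ≤ x + y ≤ 2 b + 2 n`. -/
def FF (h : ℕ) (b : ℤ) (n : ℕ) : Finset Vtx :=
  (Finset.Icc (b - h) (b + n + h) ×ˢ Finset.Icc (b - h) (b + n + h)).filter fun v =>
    (-2 * (h : ℤ) < v.1 - v.2 ∧ v.1 - v.2 < 2 * h) ∧ 2 * b < v.1 + v.2 ∧ v.1 + v.2 < 2 * b + 2 * n

lemma mem_FF {h : ℕ} {b : ℤ} {n : ℕ} {v : Vtx} : v ∈ FF h b n ↔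
    (-2 * (h : ℤ) < v.1 - v.2 ∧ v.1 - v.2 < 2 * h) ∧ 2 * b < v.1 + v.2 ∧
      v.1 + v.2 < 2 * b + 2 * n := by
  simp only [FF, Finset.mem_filter, Finset.mem_product, Finset.mem_Icc, and_iff_right_iff_imp]
  omega

/-- Membership of an edge in the closed rotated rectangle. -/
def inPP (h : ℕ) (b : ℤ) (n : ℕ) (e : Vtx × Bool) : Prop :=
  (-2 * (h : ℤ) ≤ e.1.1 - e.1.2 ∧ e.1.1 - e.1.2 ≤ 2 * h) ∧
  (if e.2 then e.1.1 - e.1.2 + 1 ≤ 2 * h else -2 * (h : ℤ) ≤ e.1.1 - e.1.2 - 1) ∧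
  2 * b ≤ e.1.1 + e.1.2 ∧ e.1.1 + e.1.2 + 1 ≤ 2 * b + 2 * n

/-- The edges of the closed rotated rectangle. -/
def PP (h : ℕ) (b : ℤ) (n : ℕ) : Finset (Vtx × Bool) :=
  ((Finset.Icc (b - h) (b + n + h) ×ˢ Finset.Icc (b - h) (b + n + h)) ×ˢ Finset.univ).filter
    (inPP h b n)

lemma mem_PP {h : ℕ} {b : ℤ} {n : ℕ} {e : Vtx × Bool} : e ∈ PP h b n ↔ inPP h b n e := by
  simp only [PP, inPP, Finset.mem_filter, Finset.mem_product, Finset.mem_Icc, Finset.mem_univ,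
    and_true, and_iff_right_iff_imp]
  rintro ⟨h1, -, h2⟩
  omega

@[simp] lemma estep_true : estep true = (1, 0) := rfl
@[simp] lemma estep_false : estep false = (0, 1) := rfl

/-- The `k`-th vertex of the even row `x + y = 2 b`. -/
def ve (h : ℕ) (b k : ℤ) : Vtx := (b - h + k, b + h - k)

/-- The `k`-th vertex of the odd row `x + y = 2 b + 1`. -/
def vo (h : ℕ) (b k : ℤ) : Vtx := (b - h + k + 1, b + h - k)

/-- The free spins of the even row `x + y = 2 b`. -/
def row (h N : ℕ) (b : ℤ) (s : Vtx → Bool) : Row N := fun k => s (ve h b ((k : ℕ) + 1))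

/-- The configuration is `+` on both sides `x - y = ± 2 h` of the strip. -/
def Side (h : ℕ) (s : Vtx → Bool) : Prop :=
  ∀ v : Vtx, (v.1 - v.2 = -2 * (h : ℤ) ∨ v.1 - v.2 = 2 * (h : ℤ)) → s v = true

lemma ex_row {h N : ℕ} (hN : N + 1 = 2 * h) {b : ℤ} {s : Vtx → Bool} (hs : Side h s)
    (i : Fin (N + 2)) : ex (row h N b s) i = s (ve h b (i : ℕ)) := by
  rcases fin_cases3 i with rfl | rfl | ⟨j, rfl⟩
  · rw [ex_zero, hs]; left; simp [ve]; ring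
  · rw [ex_last, hs]; right; simp [ve]; omega
  · rw [ex_mid, row]; simp

/-- The edge of one layer with indices `k`, direction `d`, in the upper half if `e` holds. -/
def layE (h : ℕ) (b : ℤ) (k : ℤ) (d e : Bool) : Vtx × Bool :=
  ((if e then vo h b k else if d then ve h b k else ve h b (k + 1)), d)

/-- The weight of the edges between two consecutive even rows is the product of the row weights of
the odd row in between with the two even rows. -/
lemma WP_layer {h N : ℕ} (hN : N + 1 = 2 * h) {b : ℤ} {s : Vtx → Bool} (hs : Side h s) :
    WP (PP h b 1) s = qq (row h N b s) (fun k => s (vo h b (k : ℕ))) *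
      qq (row h N (b + 1) s) (fun k => s (vo h b (k : ℕ))) := by
  have e : PP h b 1 = (Finset.univ : Finset (Fin (N + 1) × Bool × Bool)).image
      fun p => layE h b ((p.1 : ℕ) : ℤ) p.2.1 p.2.2 := by
    ext ⟨⟨x, y⟩, d⟩
    simp only [mem_PP, inPP, Finset.mem_image, Finset.mem_univ, true_and, Prod.exists, layE, ve, vo]
    constructor
    · rintro ⟨⟨h1, h2⟩, h3, h4, h5⟩
      cases d
      · simp only [Bool.false_eq_true, if_false] at h3
        by_cases hpar : x + y = 2 * b
        · refine ⟨⟨(x - b + h - 1).toNat, by omega⟩, false, false, ?_⟩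
          simp only [Bool.false_eq_true, if_false, Prod.mk.injEq, and_true]; omega
        · refine ⟨⟨(x - b + h - 1).toNat, by omega⟩, false, true, ?_⟩
          simp only [if_true, Prod.mk.injEq, and_true]; omega
      · simp only [if_true] at h3
        by_cases hpar : x + y = 2 * b
        · refine ⟨⟨(x - b + h).toNat, by omega⟩, true, false, ?_⟩
          simp only [Bool.false_eq_true, if_false, if_true, Prod.mk.injEq, and_true]; omega
        · refine ⟨⟨(x - b + h - 1).toNat, by omega⟩, true, true, ?_⟩
          simp only [if_true, Prod.mk.injEq, and_true]; omega
    · rintro ⟨⟨k, hk⟩, d', e', he⟩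
      cases d' <;> cases e' <;>
        simp only [if_true, Bool.false_eq_true, if_false, Prod.mk.injEq] at he <;>
        obtain ⟨⟨rfl, rfl⟩, rfl⟩ := he <;> simp <;> omega
  rw [WP, e, Finset.prod_image]
  · rw [Fintype.prod_prod_type, qq, qq, ← Finset.prod_mul_distrib]
    refine Finset.prod_congr rfl fun k _ => ?_
    rw [Fintype.prod_prod_type]
    simp only [Fintype.prod_bool, layE, ex_row hN hs, if_true, Bool.false_eq_true, if_false,
      estep_true, estep_false, Fin.val_castSucc, Fin.val_succ]
    have e1 : vo h b (k : ℕ) + ((1, 0) : Vtx) = ve h (b + 1) ((k : ℕ) + 1 : ℕ) := by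
      simp only [vo, ve, Prod.mk_add_mk, Prod.mk.injEq]; push_cast; constructor <;> omega
    have e2 : vo h b (k : ℕ) + ((0, 1) : Vtx) = ve h (b + 1) (k : ℕ) := by
      simp only [vo, ve, Prod.mk_add_mk, Prod.mk.injEq]; constructor <;> omega
    have e3 : ve h b (k : ℕ) + ((1, 0) : Vtx) = vo h b (k : ℕ) := by
      simp only [vo, ve, Prod.mk_add_mk, Prod.mk.injEq]; constructor <;> first | trivial | omega
    have e4 : ve h b ((k : ℕ) + 1) + ((0, 1) : Vtx) = vo h b (k : ℕ) := by
      simp only [vo, ve, Prod.mk_add_mk, Prod.mk.injEq]; constructor <;> omega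
    rw [e1, e2, e3, e4]
    rw [ww_comm (s (vo h b (k : ℕ))), ww_comm (s (vo h b (k : ℕ)))]
    push_cast
    ring
  · rintro ⟨k, d, e⟩ - ⟨k', d', e'⟩ - he
    simp only [layE, ve, vo] at he
    have h0 : d = d' := congrArg Prod.snd he
    subst h0
    have h1 := congrArg (fun p : Vtx × Bool => p.1.1) he
    have h2 := congrArg (fun p : Vtx × Bool => p.1.2) he
    have : (k : ℕ) = k' ∧ e = e' := by
      cases d <;> cases e <;> cases e' <;> simp at h1 h2 ⊢ <;> omega
    rw [Fin.ext this.1, this.2]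

lemma ZI_layer {h N : ℕ} (hN : N + 1 = 2 * h) (b : ℤ) {s : Vtx → Bool} (hs : Side h s) :
    ZI (FF h b 1) (PP h b 1) s = TT N (row h N b s) (row h N (b + 1) s) := by
  have e : FF h b 1 = (Finset.univ : Finset (Fin (N + 1))).image fun k : Fin (N + 1) => vo h b ((k : ℕ) : ℤ) := by
    ext ⟨x, y⟩
    simp only [mem_FF, Finset.mem_image, Finset.mem_univ, true_and, vo, Prod.mk.injEq]
    constructor
    · rintro ⟨⟨h1, h2⟩, h3, h4⟩
      exact ⟨⟨(x - b + h - 1).toNat, by omega⟩, by simp; omega⟩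
    · rintro ⟨⟨k, hk⟩, h1, h2⟩
      simp at h1 h2; omega
  have inj : Function.Injective fun k : Fin (N + 1) => vo h b ((k : ℕ) : ℤ) := by
    intro k k' hk
    have := congrArg Prod.fst hk
    simp [vo] at this
    exact Fin.ext this
  -- the configuration with odd row `o`
  let u : (Fin (N + 1) → Bool) → Vtx → Bool := fun o v =>
    if hv : ∃ k : Fin (N + 1), v = vo h b ((k : ℕ) : ℤ) then o hv.choose else s v
  have hu : ∀ o k, u o (vo h b ((k : Fin (N + 1)) : ℕ)) = o k := by
    intro o k
    have hv : ∃ k' : Fin (N + 1), vo h b ((k : ℕ) : ℤ) = vo h b ((k' : ℕ) : ℤ) := ⟨k, rfl⟩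
    simp only [u, hv, dif_pos]
    rw [inj hv.choose_spec.symm]
  have hu' : ∀ o v, (∀ k : Fin (N + 1), v ≠ vo h b ((k : ℕ) : ℤ)) → u o v = s v := by
    intro o v hv
    have : ¬ ∃ k : Fin (N + 1), v = vo h b ((k : ℕ) : ℤ) := by push Not; exact hv
    simp only [u, this, dif_neg, not_false_iff]
  rw [ZI, e, RS_image _ inj _ s u hu hu', TT_apply]
  refine Finset.sum_congr rfl fun o _ => ?_
  have hside : Side h (u o) := by
    intro v hv
    rw [hu', hs v hv]
    rintro ⟨k, hk⟩ rfl
    simp [vo] at hv; omega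
  rw [WP_layer hN hside]
  have r1 : ∀ b', row h N b' (u o) = row h N b' s := by
    intro b'; funext k
    simp only [row]
    rw [hu']
    intro k' hk'
    simp only [ve, vo, Prod.mk.injEq] at hk'
    omega
  simp only [r1, hu]

/-- The Markov property: cutting a rectangle along an inner even row, a function of that row is
inserted between the powers of the transfer matrix of the two parts. -/
lemma RS_split {h N : ℕ} (hN : N + 1 = 2 * h) (n m : ℕ) (b : ℤ)
    (hn : ∀ s, Side h s → ZI (FF h b (n + 1)) (PP h b (n + 1)) s =
      (TT N ^ (n + 1)) (row h N b s) (row h N (b + n + 1) s))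
    (hm : ∀ s, Side h s → ZI (FF h (b + n + 1) (m + 1)) (PP h (b + n + 1) (m + 1)) s =
      (TT N ^ (m + 1)) (row h N (b + n + 1) s) (row h N (b + n + m + 2) s))
    (φ : Row N → ℝ) {s : Vtx → Bool} (hs : Side h s) :
    RS (FF h b (n + m + 2)) (fun s => φ (row h N (b + n + 1) s) * WP (PP h b (n + m + 2)) s) s =
      ∑ σ, (TT N ^ (n + 1)) (row h N b s) σ * φ σ *
        (TT N ^ (m + 1)) σ (row h N (b + n + m + 2) s) := by
  set β := b + n + 1 with hβ
  set G : Finset Vtx := (Finset.univ : Finset (Fin N)).image fun k : Fin N => ve h β ((k : ℕ) + 1) with hG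
  have memG : ∀ v : Vtx, v ∈ G ↔ v.1 + v.2 = 2 * β ∧ -2 * (h : ℤ) < v.1 - v.2 ∧
      v.1 - v.2 < 2 * h := by
    rintro ⟨x, y⟩
    simp only [hG, Finset.mem_image, Finset.mem_univ, true_and, ve, Prod.mk.injEq]
    constructor
    · rintro ⟨⟨k, hk⟩, h1, h2⟩
      simp at h1 h2; omega
    · rintro ⟨h1, h2, h3⟩
      exact ⟨⟨(x - β + h - 1).toNat, by omega⟩, by simp; omega⟩
  have eF : FF h b (n + m + 2) = G ∪ (FF h b (n + 1) ∪ FF h β (m + 1)) := by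
    ext v
    simp only [Finset.mem_union, mem_FF, memG]
    push_cast
    omega
  have eP : PP h b (n + m + 2) = PP h b (n + 1) ∪ PP h β (m + 1) := by
    ext ⟨v, d⟩
    simp only [Finset.mem_union, mem_PP, inPP]
    push_cast
    cases d <;> simp <;> omega
  have dP : Disjoint (PP h b (n + 1)) (PP h β (m + 1)) := by
    rw [Finset.disjoint_left]
    rintro ⟨v, d⟩
    simp only [mem_PP, inPP]
    push_cast
    omega
  have d1 : Disjoint G (FF h b (n + 1) ∪ FF h β (m + 1)) := by
    rw [Finset.disjoint_left]
    intro v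
    simp only [Finset.mem_union, mem_FF, memG]
    push_cast
    omega
  have d2 : Disjoint (FF h b (n + 1)) (FF h β (m + 1)) := by
    rw [Finset.disjoint_left]
    intro v
    simp only [mem_FF]
    push_cast
    omega
  have inj : Function.Injective fun k : Fin N => ve h β ((k : ℕ) + 1) := by
    intro k k' hk
    have := congrArg Prod.fst hk
    simp [ve] at this
    exact Fin.ext this
  let u : Row N → Vtx → Bool := fun o v =>
    if hv : ∃ k : Fin N, v = ve h β ((k : ℕ) + 1) then o hv.choose else s v
  have hu : ∀ o k, u o (ve h β ((k : Fin N) + 1)) = o k := by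
    intro o k
    have hv : ∃ k' : Fin N, ve h β ((k : ℕ) + 1) = ve h β ((k' : ℕ) + 1) := ⟨k, rfl⟩
    simp only [u, hv, dif_pos]
    rw [inj hv.choose_spec.symm]
  have hu' : ∀ o v, (∀ k : Fin N, v ≠ ve h β ((k : ℕ) + 1)) → u o v = s v := by
    intro o v hv
    have : ¬ ∃ k : Fin N, v = ve h β ((k : ℕ) + 1) := by push Not; exact hv
    simp only [u, this, dif_neg, not_false_iff]
  rw [eF, RS_union d1, hG, RS_image _ inj _ s u hu hu']
  refine Finset.sum_congr rfl fun σ _ => ?_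
  have hside : Side h (u σ) := by
    intro v hv
    rw [hu', hs v hv]
    rintro ⟨k, hk⟩ rfl
    simp [ve] at hv; omega
  have rσ : row h N β (u σ) = σ := by
    funext k; exact hu σ k
  have r1 : ∀ b', b' ≠ β → row h N b' (u σ) = row h N b' s := by
    intro b' hb'; funext k
    simp only [row]
    rw [hu']
    intro k' hk'
    simp only [ve, Prod.mk.injEq] at hk'
    omega
  rw [RS_union d2]
  -- vertices off `FF h β (m+1)` determine the first factors
  have inner : ∀ s' : Vtx → Bool, (∀ v, v ∉ FF h b (n + 1) → s' v = u σ v) →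
      RS (FF h β (m + 1)) (fun s => φ (row h N β s) * WP (PP h b (n + m + 2)) s) s' =
      (φ σ * (TT N ^ (m + 1)) σ (row h N (b + n + m + 2) s)) * WP (PP h b (n + 1)) s' := by
    intro s' hs'
    have hside' : Side h s' := by
      intro v hv
      rw [hs', hside v hv]
      rw [mem_FF]; omega
    have rr : ∀ b', β ≤ b' → row h N b' s' = row h N b' (u σ) := by
      intro b' hb'; funext k
      simp only [row]
      rw [hs']
      rw [mem_FF]; simp only [ve]; push_cast; omega
    have e1 : RS (FF h β (m + 1)) (fun s => φ (row h N β s) * WP (PP h b (n + m + 2)) s) s' =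
        RS (FF h β (m + 1)) (fun s => (φ (row h N β s) * WP (PP h b (n + 1)) s) *
          WP (PP h β (m + 1)) s) s' := by
      refine RS_congr fun s'' _ => ?_
      rw [eP, WP, Finset.prod_union dP, ← WP, ← WP]; ring
    rw [e1, RS_mul_left (Ψ := fun s => φ (row h N β s) * WP (PP h b (n + 1)) s), ← ZI, hm s' hside',
      rr _ le_rfl, rr _ (by omega), rσ, r1 _ (by omega)]
    · ring
    · intro s'' hs''
      have f1 : row h N β s'' = row h N β s' := by
        funext k
        simp only [row]
        rw [hs'']
        rw [mem_FF]; simp only [ve]; omega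
      have f2 : WP (PP h b (n + 1)) s'' = WP (PP h b (n + 1)) s' := by
        refine Finset.prod_congr rfl fun e he => ?_
        rw [mem_PP, inPP] at he
        push_cast at he
        rw [hs'', hs'']
        · rw [mem_FF]
          obtain ⟨⟨x, y⟩, d⟩ := e
          cases d <;> simp <;> simp at he <;> omega
        · rw [mem_FF]; omega
      simp only [f1, f2]
  rw [RS_congr inner, RS_const_mul, ← ZI, hn _ hside, rσ, r1 b (by omega)]
  ring

/-- The partition function of a rotated rectangle. -/
lemma ZI_eq_pow {h N : ℕ} (hN : N + 1 = 2 * h) (n : ℕ) (b : ℤ) {s : Vtx → Bool}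
    (hs : Side h s) : ZI (FF h b (n + 1)) (PP h b (n + 1)) s =
      (TT N ^ (n + 1)) (row h N b s) (row h N (b + n + 1) s) := by
  induction n generalizing b s with
  | zero => simpa using ZI_layer hN b hs
  | succ n ih =>
    have h1 := RS_split hN n 0 b (fun s hs => ih b hs)
      (fun s hs => by
        have := ZI_layer hN (b + n + 1) hs
        simpa [add_assoc, one_add_one_eq_two] using this) (fun _ => 1) hs
    simp only [one_mul, mul_one, add_zero, zero_add, pow_one, Nat.cast_zero] at h1
    rw [pow_succ, Matrix.mul_apply, ZI, show n + 1 + 1 = n + 2 from rfl, h1]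
    push_cast
    simp only [add_assoc, one_add_one_eq_two]

/-- The signed partition function of a rotated rectangle centred at the origin. -/
lemma MI_eq_pow {h N : ℕ} (hN : N + 1 = 2 * h) (n : ℕ) (k₀ : Fin N) (hk₀ : (k₀ : ℕ) + 1 = h)
    {b : ℤ} (hb : b + n + 1 = 0) {s : Vtx → Bool} (hs : Side h s) :
    MI (FF h b (n + n + 2)) (PP h b (n + n + 2)) s =
      (TT N ^ (n + 1) * Matrix.diagonal (fun σ : Row N => zz (σ k₀)) * TT N ^ (n + 1))
        (row h N b s) (row h N (b + n + n + 2) s) := by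
  have h1 := RS_split hN n n b (fun s hs => ZI_eq_pow hN n _ hs)
    (fun s hs => by
      have := ZI_eq_pow hN n (b + n + 1) hs
      rw [this, show b + n + 1 + n + 1 = b + n + n + 2 by ring]) (fun σ => zz (σ k₀)) hs
  have e4 : ∀ s : Vtx → Bool, row h N (b + n + 1) s k₀ = s (0, 0) := by
    intro s
    have : ve h (b + n + 1) ((k₀ : ℕ) + 1) = (0, 0) := by
      rw [ve, Prod.mk.injEq]; omega
    rw [row, this]
  simp only [e4] at h1
  rw [MI, h1, Matrix.mul_apply]
  refine Finset.sum_congr rfl fun σ _ => ?_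
  rw [Matrix.mul_diagonal]

/-! ### Planar crossings of a diamond -/

/-- The closed diamond `|x| + |y| ≤ 2 h`. -/
def dia (h : ℕ) (v : Vtx) : Prop :=
  (-2 * (h : ℤ) ≤ v.1 - v.2 ∧ v.1 - v.2 ≤ 2 * h) ∧ -2 * (h : ℤ) ≤ v.1 + v.2 ∧ v.1 + v.2 ≤ 2 * h

/-- The open upper right side of the diamond. -/
def onT (h : ℕ) (v : Vtx) : Prop :=
  v.1 + v.2 = 2 * (h : ℤ) ∧ -2 * (h : ℤ) < v.1 - v.2 ∧ v.1 - v.2 < 2 * h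

/-- The open lower left side of the diamond. -/
def onB (h : ℕ) (v : Vtx) : Prop :=
  v.1 + v.2 = -2 * (h : ℤ) ∧ -2 * (h : ℤ) < v.1 - v.2 ∧ v.1 - v.2 < 2 * h

/-- The closed upper left side of the diamond. -/
def onL (h : ℕ) (v : Vtx) : Prop := v.1 - v.2 = -2 * (h : ℤ) ∧ dia h v

/-- The closed lower right side of the diamond. -/
def onR (h : ℕ) (v : Vtx) : Prop := v.1 - v.2 = 2 * (h : ℤ) ∧ dia h v

/-- One step between neighbouring vertices of the diamond with value `b`. -/
def stp (h : ℕ) (g : Vtx → Bool) (b : Bool) (u v : Vtx) : Prop :=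
  (g u = b ∧ dia h u) ∧ (g v = b ∧ dia h v) ∧ ∃ d, v = u + estep d ∨ u = v + estep d

/-- A path of `false` vertices between the sides `L`, `R` and a path of `true` vertices between
the sides `T`, `B` cannot coexist. The function `m` built along the first path is the parity of
the number of its horizontal edges above a point, corrected for the starting point; it would be
constant along the second path but differs on `T` and `B`. -/
lemma no_cross {h : ℕ} {g : Vtx → Bool} (hT : ∀ v, onT h v → g v = true)
    (hB : ∀ v, onB h v → g v = true) {v₀ v₁ t b : Vtx} (h₀ : onL h v₀)
    (hg₀ : g v₀ = false) (h₁ : onR h v₁)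
    (hp : Relation.ReflTransGen (stp h g false) v₀ v₁) (ht : onT h t) (hb : onB h b)
    (hq : Relation.ReflTransGen (stp h g true) t b) : False := by
  obtain ⟨m, m1, m2, m3, m4, -⟩ : ∃ m : Vtx → Bool,
      (∀ x y, g (x, y) = true → g (x + 1, y) = true → dia h (x, y) → dia h (x + 1, y) →
        m (x + 1, y) = xor (m (x, y)) (decide (x + 1 = v₁.1 ∧ y < v₁.2))) ∧
      (∀ x y, g (x, y) = true → g (x, y + 1) = true → dia h (x, y) → dia h (x, y + 1) →
        m (x, y + 1) = m (x, y)) ∧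
      (∀ v, onT h v → m v = true) ∧ (∀ v, onB h v → m v = decide (v₁.1 ≤ v.1)) ∧
      g v₁ = false := by
    clear h₁ ht hb hq
    induction hp with
    | refl =>
      refine ⟨fun u => decide (v₀.1 ≤ u.1), ?_, ?_, ?_, ?_, hg₀⟩
      · intro x y hx hx' hd hd'
        have hne : (x + 1, y) ≠ v₀ := by rintro rfl; simp [hg₀] at hx'
        have hne' : ¬ (x + 1 = v₀.1 ∧ y = v₀.2) := fun h => hne (Prod.ext h.1 h.2)
        unfold onL dia at h₀
        unfold dia at hd hd'
        simp only at hd hd'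
        by_cases e : x + 1 = v₀.1
        · have e1 : v₀.1 ≤ x + 1 := by omega
          have e2 : ¬ v₀.1 ≤ x := by omega
          have e3 : y < v₀.2 := by omega
          simp [e, e2, e3]
        · have : v₀.1 ≤ x + 1 ↔ v₀.1 ≤ x := by omega
          simp [e, this]
      · intros; rfl
      · intro v hv
        unfold onL dia at h₀
        unfold onT at hv
        simp; omega
      · intros; rfl
    | @tail v w _ hs ih =>
      obtain ⟨m, m1, m2, m3, m4, hgv⟩ := ih
      obtain ⟨⟨-, dv⟩, ⟨gw, dw⟩, d, hd⟩ := hs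
      obtain ⟨p, q⟩ := v
      obtain ⟨p', q'⟩ := w
      simp only at m1 m4
      have hne : ∀ x y, g (x, y) = true → ¬ (x = p ∧ y = q) := by
        rintro x y hx ⟨rfl, rfl⟩; simp [hgv] at hx
      have hne' : ∀ x y, g (x, y) = true → ¬ (x = p' ∧ y = q') := by
        rintro x y hx ⟨rfl, rfl⟩; simp [gw] at hx
      have : (p' = p + 1 ∧ q' = q) ∨ (p' = p ∧ q' = q + 1) ∨ (p = p' + 1 ∧ q = q') ∨
          (p = p' ∧ q = q' + 1) := by
        cases d <;> simp at hd <;> omega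
      have horiz : (p' = p + 1 ∧ q' = q) ∨ (p = p' + 1 ∧ q' = q) →
          ∀ x y, g (x, y) = true → dia h (x, y) →
          (onT h (x, y) → ¬ (x = min p p' ∧ y < q)) ∧
          (onB h (x, y) → x = min p p' → y < q) ∧ ¬ (x = min p p' ∧ y = q) := by
        intro hh x y hg hxy
        have a1 := hne x y hg
        have a2 := hne' x y hg
        unfold dia at dv dw hxy
        unfold onT onB
        simp only at dv dw hxy ⊢
        omega
      have fin : (p' = p + 1 ∧ q' = q) ∨ (p = p' + 1 ∧ q' = q) →
          ∃ m : Vtx → Bool,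
          (∀ x y, g (x, y) = true → g (x + 1, y) = true → dia h (x, y) → dia h (x + 1, y) →
            m (x + 1, y) = xor (m (x, y)) (decide (x + 1 = p' ∧ y < q'))) ∧
          (∀ x y, g (x, y) = true → g (x, y + 1) = true → dia h (x, y) → dia h (x, y + 1) →
            m (x, y + 1) = m (x, y)) ∧
          (∀ v, onT h v → m v = true) ∧ (∀ v, onB h v → m v = decide (p' ≤ v.1)) ∧
          g (p', q') = false := by
        intro hh
        have hz := horiz hh
        have hqq : q' = q := by omega
        subst hqq
        refine ⟨fun u => xor (m u) (decide (u.1 = min p p' ∧ u.2 < q')), ?_, ?_, ?_, ?_, gw⟩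
        · intro x y hg hg' hd hd'
          simp only [m1 x y hg hg' hd hd']
          by_cases hy : y < q'
          · simp only [hy, and_true]
            have hx : ∀ a0 a1 a2 a3 a4 : Bool, xor (xor a1 a2) (xor a3 a4) = false →
                xor (xor a0 a1) a2 = xor (xor a0 a3) a4 := by decide
            apply hx
            by_cases c1 : x + 1 = p
            · by_cases c2 : x + 1 = min p p'
              · rw [decide_eq_true c1, decide_eq_true c2,
                  decide_eq_false (show ¬ x = min p p' by omega),
                  decide_eq_false (show ¬ x + 1 = p' by omega)]; rfl
              · rw [decide_eq_true c1, decide_eq_false c2,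
                  decide_eq_true (show x = min p p' by omega),
                  decide_eq_false (show ¬ x + 1 = p' by omega)]; rfl
            · by_cases c2 : x + 1 = min p p'
              · rw [decide_eq_false c1, decide_eq_true c2,
                  decide_eq_false (show ¬ x = min p p' by omega),
                  decide_eq_true (show x + 1 = p' by omega)]; rfl
              · by_cases c3 : x = min p p'
                · rw [decide_eq_false c1, decide_eq_false c2, decide_eq_true c3,
                    decide_eq_true (show x + 1 = p' by omega)]; rfl
                · rw [decide_eq_false c1, decide_eq_false c2, decide_eq_false c3,
                    decide_eq_false (show ¬ x + 1 = p' by omega)]; rfl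
          · simp [hy]
        · intro x y hg hg' hd hd'
          simp only [m2 x y hg hg' hd hd']
          have a1 := (hz x y hg hd).2.2
          have a2 := (hz x _ hg' hd').2.2
          have : (x = min p p' ∧ y + 1 < q') ↔ (x = min p p' ∧ y < q') := by omega
          simp only [this]
        · rintro ⟨x, y⟩ hv
          have a := (hz x y (hT _ hv) (by unfold onT at hv; unfold dia; simp only at *; omega)).1 hv
          simp only [m3 _ hv, a, decide_false, Bool.xor_false]
        · rintro ⟨x, y⟩ hv
          have a := (hz x y (hB _ hv)
            (by unfold onB at hv; unfold dia; simp only at *; omega)).2.1 hv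
          simp only [m4 _ hv]
          by_cases c1 : x = min p p'
          · have c3 := a c1
            by_cases c2 : p ≤ x
            · rw [decide_eq_true c2, decide_eq_true (show x = min p p' ∧ y < q' from ⟨c1, c3⟩),
                decide_eq_false (show ¬ p' ≤ x by omega)]; rfl
            · rw [decide_eq_false c2, decide_eq_true (show x = min p p' ∧ y < q' from ⟨c1, c3⟩),
                decide_eq_true (show p' ≤ x by omega)]; rfl
          · have c4 : p' ≤ x ↔ p ≤ x := by omega
            simp [c1, c4]
      rcases this with ⟨rfl, rfl⟩ | ⟨rfl, rfl⟩ | ⟨rfl, rfl⟩ | ⟨rfl, rfl⟩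
      · exact fin (Or.inl ⟨rfl, rfl⟩)
      · refine ⟨m, ?_, m2, m3, m4, gw⟩
        intro x y hg hg' hd hd'
        rw [m1 x y hg hg' hd hd']
        have a1 := hne (x + 1) y hg'
        have : (x + 1 = p' ∧ y < q) ↔ (x + 1 = p' ∧ y < q + 1) := by omega
        simp only [this]
      · exact fin (Or.inr ⟨rfl, rfl⟩)
      · refine ⟨m, ?_, m2, m3, m4, gw⟩
        intro x y hg hg' hd hd'
        rw [m1 x y hg hg' hd hd']
        have a1 := hne' (x + 1) y hg'
        have : (x + 1 = p ∧ y < q' + 1) ↔ (x + 1 = p ∧ y < q') := by omega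
        simp only [this]
  have key : ∀ w, Relation.ReflTransGen (stp h g true) t w → m w = true := by
    intro w hw
    induction hw with
    | refl => exact m3 _ ht
    | @tail u w _ hs ih =>
      obtain ⟨⟨gu, du⟩, ⟨gw, dw⟩, d, hd⟩ := hs
      unfold onR dia at h₁
      obtain ⟨x, y⟩ := u
      obtain ⟨x', y'⟩ := w
      have : (x' = x + 1 ∧ y' = y) ∨ (x' = x ∧ y' = y + 1) ∨ (x = x' + 1 ∧ y = y') ∨
          (x = x' ∧ y = y' + 1) := by
        cases d <;> simp at hd <;> omega
      have nj : ∀ x y, dia h (x + 1, y) → ¬ (x + 1 = v₁.1 ∧ y < v₁.2) := by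
        intro x y hd; unfold dia at hd; simp only at hd; omega
      rcases this with ⟨rfl, rfl⟩ | ⟨rfl, rfl⟩ | ⟨rfl, rfl⟩ | ⟨rfl, rfl⟩
      · rw [m1 x y' gu gw du dw, ih]; simp [nj x y' dw]
      · rw [m2 x' y gu gw du dw, ih]
      · rw [m1 x' y gw gu dw du] at ih; simpa [nj x' y du] using ih
      · rwa [m2 x y' gw gu dw du] at ih
  have h1 := key b hq
  rw [m4 b hb] at h1
  unfold onR dia at h₁
  unfold onB at hb
  simp at h1
  omega

/-! ### A crossing estimate for the diamond -/

/-- Pointwise sum modulo two of configurations. -/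
def xr (s w : Vtx → Bool) : Vtx → Bool := fun v => xor (s v) (w v)

lemma RS_xor (F : Finset Vtx) (Φ : (Vtx → Bool) → ℝ) (w s : Vtx → Bool) :
    RS F (fun s' => Φ (xr s' w)) s = RS F Φ (xr s w) := by
  induction F using Finset.induction_on generalizing s with
  | empty => simp only [RS_empty]
  | insert v F hv ih =>
    rw [RS_insert hv, RS_insert hv, ← Equiv.sum_comp (Equiv.boolNot.trans Equiv.boolNot) _]
    have : ∀ b, xr (Function.update s v b) w = Function.update (xr s w) v (xor b (w v)) := by
      intro b; funext u
      by_cases hu : u = v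
      · subst hu; simp [xr]
      · simp [xr, hu]
    simp only [ih, this, Fintype.sum_bool]
    cases w v <;> simp [add_comm]

lemma RS_comm (F : Finset Vtx) (Φ : (Vtx → Bool) → (Vtx → Bool) → ℝ) (s s' : Vtx → Bool) :
    RS F (fun σ => RS F (fun τ => Φ σ τ) s') s = RS F (fun τ => RS F (fun σ => Φ σ τ) s) s' := by
  simp only [RS]
  exact Finset.sum_comm

lemma RS_mono' {F : Finset Vtx} {Φ Ψ : (Vtx → Bool) → ℝ} {s : Vtx → Bool}
    (h : ∀ s', (∀ v, v ∉ F → s' v = s v) → Φ s' ≤ Ψ s') : RS F Φ s ≤ RS F Ψ s :=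
  Finset.sum_le_sum fun A _ => h _ fun v hv => by simp [ov, hv]

/-- The interior of the diamond. -/
abbrev FD (h : ℕ) : Finset Vtx := FF h (-h) (2 * h)

/-- The edges of the diamond. -/
abbrev PD (h : ℕ) : Finset (Vtx × Bool) := PP h (-h) (2 * h)

lemma mem_FD {h : ℕ} {v : Vtx} : v ∈ FD h ↔ (-2 * (h : ℤ) < v.1 - v.2 ∧ v.1 - v.2 < 2 * h) ∧
    -2 * (h : ℤ) < v.1 + v.2 ∧ v.1 + v.2 < 2 * h := by
  rw [mem_FF]; push_cast; omega

lemma mem_PD {h : ℕ} {e : Vtx × Bool} : e ∈ PD h ↔ dia h e.1 ∧ dia h (e.1 + estep e.2) := by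
  rw [mem_PP, inPP]
  obtain ⟨⟨x, y⟩, d⟩ := e
  unfold dia
  cases d <;> simp <;> omega

lemma dia_not_FD {h : ℕ} {v : Vtx} (hd : dia h v) (hv : v ∉ FD h) :
    onT h v ∨ onB h v ∨ onL h v ∨ onR h v := by
  rw [mem_FD] at hv
  unfold onT onB onL onR
  unfold dia at *
  omega

lemma WP_congr_dia {h : ℕ} {s s' : Vtx → Bool} (H : ∀ v, dia h v → s v = s' v) :
    WP (PD h) s = WP (PD h) s' :=
  Finset.prod_congr rfl fun e he => by
    rw [mem_PD] at he
    rw [H _ he.1, H _ he.2]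

/-- A sum over the interior of the diamond of a function of the spins in the diamond depends
only on the spins on its sides. -/
lemma RS_congr_dia {h : ℕ} {s s' : Vtx → Bool} {Φ : (Vtx → Bool) → ℝ}
    (hΦ : ∀ s s', (∀ v, dia h v → s v = s' v) → Φ s = Φ s')
    (H : ∀ v, dia h v → v ∉ FD h → s v = s' v) : RS (FD h) Φ s = RS (FD h) Φ s' := by
  refine Finset.sum_congr rfl fun A _ => hΦ _ _ fun v hv => ?_
  by_cases hF : v ∈ FD h
  · simp [ov, hF]
  · simp [ov, hF, H v hv hF]

/-- The partition function of the diamond. -/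
def ZD (h : ℕ) (s : Vtx → Bool) : ℝ := ZI (FD h) (PD h) s

lemma ZD_pos (h : ℕ) (s : Vtx → Bool) : 0 < ZD h s := ZI_pos _ _ _

lemma ZD_congr {h : ℕ} {s s' : Vtx → Bool} (H : ∀ v, dia h v → v ∉ FD h → s v = s' v) :
    ZD h s = ZD h s' :=
  RS_congr_dia (fun _ _ hh => WP_congr_dia hh) H

/-- Two independent copies of the model in terms of the first copy and of their sum mod 2. -/
lemma ZD_mul (h : ℕ) (s w : Vtx → Bool) :
    ZD h s * ZD h (xr s w) =
      RS (FD h) (fun π => RS (FD h) (fun σ => WP (PD h) σ * WP (PD h) (xr π σ)) s) w := by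
  rw [RS_comm]
  have key : ∀ σ, (∀ v, v ∉ FD h → σ v = s v) →
      RS (FD h) (fun π => WP (PD h) σ * WP (PD h) (xr π σ)) w =
        ZD h (xr s w) * WP (PD h) σ := by
    intro σ hσ
    have h1 := RS_const_mul (FD h) (fun π => WP (PD h) (xr π σ)) (WP (PD h) σ) w
    have h2 := RS_xor (FD h) (WP (PD h)) σ w
    have h3 : RS (FD h) (WP (PD h)) (xr w σ) = ZD h (xr s w) :=
      RS_eq_of_eqOff _ fun v hv => by simp only [xr, hσ v hv, Bool.xor_comm]
    rw [h1, h2, h3, mul_comm]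
  have h4 := RS_const_mul (FD h) (WP (PD h)) (ZD h (xr s w)) s
  exact ((RS_congr key).trans h4).trans (mul_comm _ _) |>.symm

lemma ww_xor (a1 a2 b1 b2 c1 c2 : Bool) (H : a1 = a2 → b1 = b2) :
    ww c1 c2 * ww (xor a1 c1) (xor a2 c2) =
      ww (xor c1 b1) (xor c2 b2) * ww (xor a1 (xor c1 b1)) (xor a2 (xor c2 b2)) := by
  revert H
  cases a1 <;> cases a2 <;> cases b1 <;> cases b2 <;> cases c1 <;> cases c2 <;> simp [ww]

/-- Flipping both copies along a set of disagreement edges does not change the weight. -/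
lemma WP_shift {P : Finset (Vtx × Bool)} {π w : Vtx → Bool}
    (H : ∀ e ∈ P, π e.1 = π (e.1 + estep e.2) → w e.1 = w (e.1 + estep e.2)) (σ : Vtx → Bool) :
    WP P σ * WP P (xr π σ) = WP P (xr σ w) * WP P (xr π (xr σ w)) := by
  simp only [WP, ← Finset.prod_mul_distrib]
  refine Finset.prod_congr rfl fun e he => ?_
  exact ww_xor _ _ _ _ _ _ (H e he)

/-- The indicator of the pair of sides `T`, `B`. -/
def sTB (h : ℕ) : Vtx → Bool := fun v => decide (onT h v ∨ onB h v)

/-- The planar dichotomy: a configuration `π` equal to one on `T`, `B` and to zero on `L`, `R` has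
a set of disagreement edges separating `T` from the other sides, or `L` from the other sides. -/
lemma exists_wall {h : ℕ} {π : Vtx → Bool} (hπ : ∀ v, v ∉ FD h → π v = sTB h v) :
    ∃ w : Vtx → Bool,
      (∀ e ∈ PD h, π e.1 = π (e.1 + estep e.2) → w e.1 = w (e.1 + estep e.2)) ∧
      ((∀ v, dia h v → v ∉ FD h → w v = decide (onT h v)) ∨
       (∀ v, dia h v → v ∉ FD h → w v = !decide (onL h v))) := by
  have nT : ∀ v, onT h v → v ∉ FD h := by intro v hv; rw [mem_FD]; unfold onT at hv; omega
  have nB : ∀ v, onB h v → v ∉ FD h := by intro v hv; rw [mem_FD]; unfold onB at hv; omega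
  have nL : ∀ v, onL h v → v ∉ FD h := by intro v hv; rw [mem_FD]; unfold onL at hv; omega
  have nR : ∀ v, onR h v → v ∉ FD h := by intro v hv; rw [mem_FD]; unfold onR at hv; omega
  have dT : ∀ v, onT h v → dia h v := by intro v hv; unfold onT at hv; unfold dia; omega
  have hT : ∀ v, onT h v → π v = true := fun v hv => by
    rw [hπ v (nT v hv)]; simp [sTB, hv]
  have hB : ∀ v, onB h v → π v = true := fun v hv => by
    rw [hπ v (nB v hv)]; simp [sTB, hv]
  have hL : ∀ v, onL h v → π v = false := fun v hv => by
    rw [hπ v (nL v hv)]; exact decide_eq_false (by unfold onL at hv; unfold onT onB; omega)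
  have hR : ∀ v, onR h v → π v = false := fun v hv => by
    rw [hπ v (nR v hv)]; exact decide_eq_false (by unfold onR at hv; unfold onT onB; omega)
  by_cases hLR : ∃ v₀ v₁, onL h v₀ ∧ onR h v₁ ∧ Relation.ReflTransGen (stp h π false) v₀ v₁
  · obtain ⟨v₀, v₁, h0, h1, hp⟩ := hLR
    refine ⟨fun v => decide (∃ t, onT h t ∧ Relation.ReflTransGen (stp h π true) t v), ?_,
      Or.inl ?_⟩
    · intro e he heq
      rw [mem_PD] at he
      have pt : ∀ v, (∃ t, onT h t ∧ Relation.ReflTransGen (stp h π true) t v) →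
          π v = true := by
        rintro v ⟨t, ht, hp⟩
        rcases Relation.ReflTransGen.cases_tail hp with rfl | ⟨u, -, hu⟩
        · exact hT _ ht
        · exact hu.2.1.1
      rw [decide_eq_decide]
      constructor
      · intro hh
        have := pt _ hh
        obtain ⟨t, ht, hp⟩ := hh
        exact ⟨t, ht, hp.tail ⟨⟨this, he.1⟩, ⟨heq ▸ this, he.2⟩, e.2, Or.inl rfl⟩⟩
      · intro hh
        have := pt _ hh
        obtain ⟨t, ht, hp⟩ := hh
        exact ⟨t, ht, hp.tail ⟨⟨this, he.2⟩, ⟨heq.trans this, he.1⟩, e.2, Or.inr rfl⟩⟩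
    · intro v hv hvF
      rw [decide_eq_decide]
      constructor
      · rintro ⟨t, ht, hp'⟩
        rcases dia_not_FD hv hvF with h2 | h2 | h2 | h2
        · exact h2
        · exact (no_cross hT hB h0 (hL _ h0) h1 hp ht h2 hp').elim
        all_goals
          exfalso
          rcases Relation.ReflTransGen.cases_tail hp' with rfl | ⟨u, -, hu⟩
          · have := hT _ ht
            first
              | rw [hL _ h2] at this; exact absurd this (by simp)
              | rw [hR _ h2] at this; exact absurd this (by simp)
          · have := hu.2.1.1
            first
              | rw [hL _ h2] at this; exact absurd this (by simp)
              | rw [hR _ h2] at this; exact absurd this (by simp)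
      · intro hv; exact ⟨v, hv, Relation.ReflTransGen.refl⟩
  · push Not at hLR
    refine ⟨fun v => !decide (∃ t, onL h t ∧ Relation.ReflTransGen (stp h π false) t v), ?_,
      Or.inr ?_⟩
    · intro e he heq
      rw [mem_PD] at he
      have pt : ∀ v, (∃ t, onL h t ∧ Relation.ReflTransGen (stp h π false) t v) →
          π v = false := by
        rintro v ⟨t, ht, hp⟩
        rcases Relation.ReflTransGen.cases_tail hp with rfl | ⟨u, -, hu⟩
        · exact hL _ ht
        · exact hu.2.1.1
      simp only
      congr 1
      rw [decide_eq_decide]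
      constructor
      · intro hh
        have := pt _ hh
        obtain ⟨t, ht, hp⟩ := hh
        exact ⟨t, ht, hp.tail ⟨⟨this, he.1⟩, ⟨heq ▸ this, he.2⟩, e.2, Or.inl rfl⟩⟩
      · intro hh
        have := pt _ hh
        obtain ⟨t, ht, hp⟩ := hh
        exact ⟨t, ht, hp.tail ⟨⟨this, he.2⟩, ⟨heq.trans this, he.1⟩, e.2, Or.inr rfl⟩⟩
    · intro v hv hvF
      simp only
      congr 1
      rw [decide_eq_decide]
      constructor
      · rintro ⟨t, ht, hp'⟩
        rcases dia_not_FD hv hvF with h2 | h2 | h2 | h2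
        · exfalso
          rcases Relation.ReflTransGen.cases_tail hp' with rfl | ⟨u, -, hu⟩
          · have := hL _ ht
            rw [hT _ h2] at this; exact absurd this (by simp)
          · have := hu.2.1.1
            rw [hT _ h2] at this; exact absurd this (by simp)
        · exfalso
          rcases Relation.ReflTransGen.cases_tail hp' with rfl | ⟨u, -, hu⟩
          · have := hL _ ht
            rw [hB _ h2] at this; exact absurd this (by simp)
          · have := hu.2.1.1
            rw [hB _ h2] at this; exact absurd this (by simp)
        · exact h2
        · exact absurd hp' (hLR _ _ ht h2)
      · intro hv; exact ⟨v, hv, Relation.ReflTransGen.refl⟩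

/-- The planar dichotomy applied to two copies of the model, with equal boundary values on `L`, `R`
and opposite ones on `T`, `B`: flipping both copies along the wall of `exists_wall` produces one of
the two pairs of boundary values on the right. -/
lemma ZD_split {h : ℕ} (hh : 0 < h) : ZD h (fun _ => true) * ZD h (fun v => !sTB h v) ≤
    ZD h (fun v => !decide (onT h v)) * ZD h (fun v => !decide (onB h v)) +
      ZD h (fun v => decide (onL h v)) * ZD h (fun v => !decide (onR h v)) := by
  have e0 : (fun v => !sTB h v) = xr (fun _ => true) (sTB h) := by funext v; simp [xr]
  have e1 : ZD h (fun v => !decide (onB h v)) =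
      ZD h (xr (fun v => !decide (onT h v)) (sTB h)) := by
    refine ZD_congr fun v hv hF => ?_
    have : ¬ (onT h v ∧ onB h v) := by unfold onT onB; omega
    by_cases h1 : onT h v <;> by_cases h2 : onB h v <;> simp [xr, sTB, h1, h2]
    exact this ⟨h1, h2⟩
  have e2 : ZD h (fun v => !decide (onR h v)) =
      ZD h (xr (fun v => decide (onL h v)) (sTB h)) := by
    refine ZD_congr fun v hv hF => ?_
    have h0 := dia_not_FD hv hF
    have h3 : ¬ (onL h v ∧ onR h v) := by unfold onL onR; omega
    have h4 : ¬ ((onL h v ∨ onR h v) ∧ (onT h v ∨ onB h v)) := by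
      unfold onL onR onT onB; omega
    by_cases h1 : onT h v ∨ onB h v
    · have h2 : ¬ onL h v := fun h => h4 ⟨Or.inl h, h1⟩
      have h5 : ¬ onR h v := fun h => h4 ⟨Or.inr h, h1⟩
      rw [xr, sTB, decide_eq_true h1, decide_eq_false h2, decide_eq_false h5, Bool.not_false,
        Bool.false_xor]
    · by_cases h2 : onL h v
      · have h5 : ¬ onR h v := fun h => h3 ⟨h2, h⟩
        rw [xr, sTB, decide_eq_false h1, decide_eq_true h2, decide_eq_false h5, Bool.not_false,
          Bool.xor_false]
      · have h5 : onR h v := by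
          rcases h0 with h0 | h0 | h0 | h0
          · exact absurd (Or.inl h0) h1
          · exact absurd (Or.inr h0) h1
          · exact absurd h0 h2
          · exact h0
        rw [xr, sTB, decide_eq_false h1, decide_eq_false h2, decide_eq_true h5, Bool.not_true,
          Bool.xor_false]
  rw [e0, e1, e2, ZD_mul, ZD_mul, ZD_mul, ← RS_add]
  refine RS_mono' fun π hπ => ?_
  obtain ⟨w, hw, hw'⟩ := exists_wall hπ
  have dep : ∀ s s' : Vtx → Bool, (∀ v, dia h v → s v = s' v) →
      WP (PD h) s * WP (PD h) (xr π s) = WP (PD h) s' * WP (PD h) (xr π s') := by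
    intro s s' H
    rw [WP_congr_dia H, WP_congr_dia (s := xr π s) (s' := xr π s')]
    intro v hv; simp only [xr, H v hv]
  have pos : ∀ s, 0 ≤ RS (FD h) (fun σ => WP (PD h) σ * WP (PD h) (xr π σ)) s :=
    RS_nonneg fun s => (mul_pos (WP_pos _ _) (WP_pos _ _)).le
  have e3 : RS (FD h) (fun σ => WP (PD h) σ * WP (PD h) (xr π σ)) (fun _ => true) =
      RS (FD h) (fun σ => WP (PD h) σ * WP (PD h) (xr π σ)) (xr (fun _ => true) w) := by
    rw [← RS_xor (FD h) (fun σ => WP (PD h) σ * WP (PD h) (xr π σ)) w]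
    exact RS_congr fun σ _ => WP_shift hw σ
  rw [e3]
  rcases hw' with hw' | hw'
  · rw [RS_congr_dia dep (s' := fun v => !decide (onT h v))]
    · exact le_add_of_nonneg_right (pos _)
    · intro v hv hF; simp [xr, hw' v hv hF]
  · rw [RS_congr_dia dep (s' := fun v => decide (onL h v))]
    · exact le_add_of_nonneg_left (pos _)
    · intro v hv hF; simp [xr, hw' v hv hF]

/-- Changing the spins only along the edges of `S` costs at most `1 / tc` for each of them. -/
lemma WP_flip {P S : Finset (Vtx × Bool)} (hS : S ⊆ P) {s s' : Vtx → Bool}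
    (H : ∀ e ∈ P, e ∉ S → ww (s e.1) (s (e.1 + estep e.2)) = ww (s' e.1) (s' (e.1 + estep e.2))) :
    WP P s ≤ (tc⁻¹) ^ S.card * WP P s' := by
  rw [WP, WP, ← Finset.prod_sdiff hS, ← Finset.prod_sdiff hS,
    Finset.prod_congr rfl (fun e he => H e (Finset.mem_sdiff.1 he).1 (Finset.mem_sdiff.1 he).2)]
  set A := ∏ e ∈ P \ S, ww (s' e.1) (s' (e.1 + estep e.2))
  have hA : 0 ≤ A := Finset.prod_nonneg fun _ _ => (ww_pos _ _).le
  have h1 : ∏ e ∈ S, ww (s e.1) (s (e.1 + estep e.2)) ≤ 1 :=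
    Finset.prod_le_one (fun _ _ => (ww_pos _ _).le) fun _ _ => ww_le_one _ _
  have h2 : tc ^ S.card ≤ ∏ e ∈ S, ww (s' e.1) (s' (e.1 + estep e.2)) := by
    rw [← Finset.prod_const]
    refine Finset.prod_le_prod (fun _ _ => tc_pos.le) fun _ _ => ?_
    unfold ww; split_ifs
    · exact tc_lt_one.le
    · exact le_rfl
  have h3 : (tc⁻¹) ^ S.card * tc ^ S.card = 1 := by
    rw [← mul_pow, inv_mul_cancel₀ tc_pos.ne', one_pow]
  have h4 : 0 ≤ (tc⁻¹) ^ S.card := pow_nonneg (inv_nonneg.2 tc_pos.le) _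
  nlinarith [mul_le_mul_of_nonneg_left h1 hA, mul_le_mul_of_nonneg_left h2 h4,
    mul_le_mul_of_nonneg_left (mul_le_mul_of_nonneg_left h2 h4) hA]

/-- Boundary spins all of whose edges lie in a set `S` of at most two edges may be changed at the
cost of a constant factor. -/
lemma ZD_flip {h : ℕ} {s s' : Vtx → Bool} {S : Finset (Vtx × Bool)} (hS : S ⊆ PD h)
    (hc : S.card ≤ 2)
    (H : ∀ v, dia h v → v ∉ FD h → s v = s' v ∨
      ∀ e ∈ PD h, (e.1 = v ∨ e.1 + estep e.2 = v) → e ∈ S) :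
    ZD h s ≤ (tc⁻¹) ^ 2 * ZD h s' := by
  have h0 := RS_const_mul (FD h) (WP (PD h)) ((tc⁻¹) ^ 2) s'
  rw [ZD, ZD, ZI, ZI, ← h0]
  refine Finset.sum_le_sum fun A _ => ?_
  have h1 : (tc⁻¹) ^ S.card ≤ (tc⁻¹) ^ 2 :=
    pow_le_pow_right₀ (one_le_inv_iff₀.2 ⟨tc_pos, tc_lt_one.le⟩) hc
  refine (WP_flip hS ?_).trans (mul_le_mul_of_nonneg_right h1 (WP_pos _ _).le)
  intro e he heS
  have he' := mem_PD.1 he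
  have hv : ∀ v, dia h v → (e.1 = v ∨ e.1 + estep e.2 = v) →
      ov (FD h) A s v = ov (FD h) A s' v := by
    intro v hv hev
    by_cases hF : v ∈ FD h
    · simp [ov, hF]
    · simp only [ov, hF, if_false]
      exact (H v hv hF).resolve_right fun hh => heS (hh e he hev)
  rw [hv _ he'.1 (Or.inl rfl), hv _ he'.2 (Or.inr rfl)]

/-- The reflection `(x, y) ↦ (x, -y)`. -/
def refl2 : Vtx ≃ Vtx where
  toFun v := (v.1, -v.2)
  invFun v := (v.1, -v.2)
  left_inv v := by simp
  right_inv v := by simp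

lemma ZD_refl (h : ℕ) (s : Vtx → Bool) : ZD h (fun v => s (v.1, -v.2)) = ZD h s := by
  have hF : (FD h).image refl2 = FD h := by
    ext ⟨x, y⟩
    simp only [Finset.mem_image]
    constructor
    · rintro ⟨⟨x', y'⟩, hv, hh⟩
      simp only [refl2, Equiv.coe_fn_mk, Prod.mk.injEq] at hh
      rw [mem_FD] at hv ⊢; simp only at hv ⊢; omega
    · intro hv
      refine ⟨(x, -y), ?_, by simp [refl2]⟩
      rw [mem_FD] at hv ⊢; simp only at hv ⊢; omega
  have hP : ∀ s : Vtx → Bool, WP (PD h) (s ∘ refl2.symm) = WP (PD h) s := by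
    intro s
    let i : Vtx × Bool → Vtx × Bool := fun e =>
      if e.2 then ((e.1.1, -e.1.2), true) else ((e.1.1, -e.1.2 - 1), false)
    have ii : ∀ e, i (i e) = e := by rintro ⟨⟨x, y⟩, d⟩; cases d <;> simp [i]
    have hi : ∀ e ∈ PD h, i e ∈ PD h := by
      rintro ⟨⟨x, y⟩, d⟩ he
      rw [mem_PD] at he ⊢
      cases d <;> simp [i, dia] at he ⊢ <;> omega
    refine Finset.prod_nbij' i i hi hi (fun e _ => ii e) (fun e _ => ii e) ?_
    rintro ⟨⟨x, y⟩, d⟩ -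
    cases d
    · rw [ww_comm]; simp [i, refl2]; rw [show -1 + -y = -y - 1 by ring]
    · simp [i, refl2]
  have h1 := RS_equiv refl2 (FD h) (WP (PD h)) s
  rw [hF] at h1
  rw [ZD, ZD, ZI, ZI, h1]
  simp only [hP]
  rfl

/-- The crossing estimate: the product of the partition functions with `+` on `T`, `B` and with `-`
on `T`, `B` is at most a constant times the product of those with `-` on `T` only and on `B` only.
The second term of `ZD_split` is reduced to the first one by a reflection exchanging the pairs of
opposite sides, up to four edges at the corners. -/
lemma ZD_cross {h : ℕ} (hh : 0 < h) : ZD h (fun _ => true) * ZD h (fun v => !sTB h v) ≤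
    (1 + (tc⁻¹) ^ 4) *
      (ZD h (fun v => !decide (onT h v)) * ZD h (fun v => !decide (onB h v))) := by
  have h1 : ZD h (fun v => decide (onL h v)) ≤
      (tc⁻¹) ^ 2 * ZD h (fun v => !decide (onB h v)) := by
    have e1 : ZD h (fun v => !decide (onB h v)) =
        ZD h (fun v => decide (onB h (v.1, -v.2))) := by
      rw [ZD_refl h (fun v => decide (onB h v)), ZD, ZD, ← ZI_not]
      simp
    rw [e1]
    refine ZD_flip (S := ({((0, 2 * (h : ℤ) - 1), false), ((-2 * (h : ℤ), 0), true)} :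
      Finset (Vtx × Bool))) ?_
      ((Finset.card_insert_le _ _).trans (by simp)) ?_
    · intro e he
      rw [Finset.mem_insert, Finset.mem_singleton] at he
      rw [mem_PD]
      rcases he with rfl | rfl <;> simp [dia] <;> omega
    · rintro ⟨x, y⟩ hv hF
      by_cases hc : x = 0 ∧ y = 2 * h ∨ x = -2 * h ∧ y = 0
      · right
        rintro ⟨⟨a, b⟩, d⟩ he hd
        rw [mem_PD] at he
        simp only [Finset.mem_insert, Finset.mem_singleton, Prod.mk.injEq]
        cases d <;> simp [dia] at he hd ⊢ <;> omega
      · left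
        have hv' := dia_not_FD hv hF
        simp only [decide_eq_decide]
        unfold onL onB dia at *
        simp only at *
        omega
  have h2 : ZD h (fun v => !decide (onR h v)) ≤
      (tc⁻¹) ^ 2 * ZD h (fun v => !decide (onT h v)) := by
    rw [← ZD_refl h (fun v => !decide (onT h v))]
    refine ZD_flip (S := ({((0, -2 * (h : ℤ)), false), ((2 * (h : ℤ) - 1, 0), true)} :
      Finset (Vtx × Bool))) ?_
      ((Finset.card_insert_le _ _).trans (by simp)) ?_
    · intro e he
      rw [Finset.mem_insert, Finset.mem_singleton] at he
      rw [mem_PD]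
      rcases he with rfl | rfl <;> simp [dia] <;> omega
    · rintro ⟨x, y⟩ hv hF
      by_cases hc : x = 0 ∧ y = -2 * h ∨ x = 2 * h ∧ y = 0
      · right
        rintro ⟨⟨a, b⟩, d⟩ he hd
        rw [mem_PD] at he
        simp only [Finset.mem_insert, Finset.mem_singleton, Prod.mk.injEq]
        cases d <;> simp [dia] at he hd ⊢ <;> omega
      · left
        have hv' := dia_not_FD hv hF
        simp only
        congr 1
        rw [decide_eq_decide]
        unfold onR onT dia at *
        simp only at *
        omega
  refine (ZD_split hh).trans ?_
  have p1 := ZD_pos h (fun v => decide (onL h v))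
  have p2 := ZD_pos h (fun v => !decide (onR h v))
  have p3 := ZD_pos h (fun v => !decide (onB h v))
  have h3 := mul_le_mul h1 h2 p2.le (mul_nonneg (pow_nonneg (inv_nonneg.2 tc_pos.le) 2) p3.le)
  refine (add_le_add_right h3 _).trans (le_of_eq ?_)
  ring

/-- The constant of the crossing estimate; the power `4` counts the edges at the corners. -/
def CR : ℝ := 1 + (tc⁻¹) ^ 4

lemma CR_ge : 1 ≤ CR := by
  unfold CR; have := pow_pos (inv_pos.2 tc_pos) 4; linarith

/-- The crossing estimate as a bound for a cross ratio of the transfer matrix of the square. -/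
lemma TT_cross {h N : ℕ} (hN : N + 1 = 2 * h) :
    (TT N ^ (N + 1)) ⊤ ⊤ * (TT N ^ (N + 1)) ⊥ ⊥ ≤
      CR * ((TT N ^ (N + 1)) ⊤ ⊥ * (TT N ^ (N + 1)) ⊥ ⊤) := by
  have key : ∀ s : Vtx → Bool, Side h s → ZD h s =
      (TT N ^ (N + 1)) (row h N (-h) s) (row h N h s) := by
    intro s hs
    have := ZI_eq_pow hN N (-h) hs
    have e : (-(h : ℤ) + N + 1) = h := by omega
    rw [e] at this
    rw [ZD, FD, PD, ← hN, this]
  have hh : 0 < h := by omega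
  have rT : ∀ k : Fin N, onT h (ve h h ((k : ℕ) + 1)) ∧ ¬ onB h (ve h h ((k : ℕ) + 1)) := by
    intro k; have := k.2; simp only [onT, onB, ve]; omega
  have rB : ∀ k : Fin N, onB h (ve h (-h) ((k : ℕ) + 1)) ∧ ¬ onT h (ve h (-h) ((k : ℕ) + 1)) := by
    intro k; have := k.2; simp only [onT, onB, ve]; omega
  have nT : ∀ v : Vtx, (v.1 - v.2 = -2 * (h : ℤ) ∨ v.1 - v.2 = 2 * h) →
    ¬ onT h v ∧ ¬ onB h v := by intro v; unfold onT onB; omega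
  have H := ZD_cross hh
  rw [key (fun _ => true) (fun _ _ => rfl),
    key (fun v => !sTB h v) (fun v hv => by simp [sTB, nT v hv]),
    key (fun v => !decide (onT h v)) (fun v hv => by simp [nT v hv]),
    key (fun v => !decide (onB h v)) (fun v hv => by simp [nT v hv])] at H
  have a1 : ∀ b, row h N b (fun _ => true) = ⊤ := fun b => rfl
  have a2 : row h N (-h) (fun v => !sTB h v) = ⊥ := by
    funext k; simp [row, sTB, rB k]
  have a3 : row h N h (fun v => !sTB h v) = ⊥ := by
    funext k; simp [row, sTB, rT k]
  have a4 : row h N (-h) (fun v => !decide (onT h v)) = ⊤ := by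
    funext k; simp [row, rB k]
  have a5 : row h N h (fun v => !decide (onT h v)) = ⊥ := by
    funext k; simp [row, rT k]
  have a6 : row h N (-h) (fun v => !decide (onB h v)) = ⊥ := by
    funext k; simp [row, rB k]
  have a7 : row h N h (fun v => !decide (onB h v)) = ⊤ := by
    funext k; simp [row, rT k]
  rwa [a1, a1, a2, a3, a4, a5, a6, a7] at H

/-! ### Majorana operators -/

/-- Configurations on the chain `0, …, n`. -/
abbrev Conf (n : ℕ) : Type := Fin (n + 1) → Bool

/-- The spin at site `k` of the chain, `0` off the chain. -/
def sp {n : ℕ} (τ : Conf n) (k : ℕ) : ℝ := if h : k < n + 1 then zz (τ ⟨k, h⟩) else 0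

/-- Flip all the spins at sites `< m`. -/
def FL {n : ℕ} (m : ℕ) (τ : Conf n) : Conf n := fun i => if (i : ℕ) < m then !τ i else τ i

lemma zz_not (b : Bool) : zz (!b) = -zz b := by cases b <;> simp [zz]

lemma zz_sq (b : Bool) : zz b * zz b = 1 := by cases b <;> simp [zz]

lemma sp_FL {n : ℕ} (m : ℕ) (τ : Conf n) (k : ℕ) :
    sp (FL m τ) k = (if k < m then -1 else 1) * sp τ k := by
  unfold sp FL
  split_ifs <;> simp_all [zz_not]

lemma sp_sq {n : ℕ} (τ : Conf n) {k : ℕ} (hk : k ≤ n) : sp τ k * sp τ k = 1 := by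
  rw [sp, dif_pos (by omega), zz_sq]

lemma FL_FL {n : ℕ} (m : ℕ) (τ : Conf n) : FL m (FL m τ) = τ := by
  funext i; unfold FL; split_ifs <;> simp

lemma FL_comm {n : ℕ} (m p : ℕ) (τ : Conf n) : FL m (FL p τ) = FL p (FL m τ) := by
  funext i; unfold FL; split_ifs <;> simp

lemma sum_FL {n : ℕ} (m : ℕ) (f : Conf n → ℝ) : ∑ τ, f (FL m τ) = ∑ τ, f τ :=
  Equiv.sum_comp ⟨FL m, FL m, FL_FL m, FL_FL m⟩ f

/-- Operators on functions of the spin configuration of the chain. -/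
abbrev Op (n : ℕ) : Type := Module.End ℝ (Conf n → ℝ)

/-- The operator `ψ ↦ sp · k * ψ ∘ FL m`. -/
def gam {n : ℕ} (k m : ℕ) : Op n where
  toFun ψ τ := sp τ k * ψ (FL m τ)
  map_add' ψ φ := by funext τ; simp [mul_add]
  map_smul' r ψ := by funext τ; simp; ring

@[simp] lemma gam_apply {n : ℕ} (k m : ℕ) (ψ : Conf n → ℝ) (τ : Conf n) :
    gam k m ψ τ = sp τ k * ψ (FL m τ) := rfl

/-- The first family of Majorana operators. -/
def ma {n : ℕ} (k : ℕ) : Op n := gam (k + 1) (k + 1)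

/-- The second family of Majorana operators. -/
def mb {n : ℕ} (k : ℕ) : Op n := gam k (k + 1)

lemma op_ext {n : ℕ} {X Y : Op n} (h : ∀ ψ τ, X ψ τ = Y ψ τ) : X = Y :=
  LinearMap.ext fun ψ => funext fun τ => h ψ τ

lemma op_mul_neg {n : ℕ} (X Y : Op n) : X * (-Y) = -(X * Y) := by
  refine op_ext fun ψ τ => ?_
  simp [Module.End.mul_apply]

lemma op_neg_mul {n : ℕ} (X Y : Op n) : (-X) * Y = -(X * Y) := by
  refine op_ext fun ψ τ => ?_
  simp [Module.End.mul_apply]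

lemma gam_mul {n : ℕ} (k m k' m' : ℕ) (ψ : Conf n → ℝ) (τ : Conf n) :
    ((gam k m * gam k' m' : Op n)) ψ τ =
      (if k' < m then -1 else 1) * (sp τ k * sp τ k') * ψ (FL m' (FL m τ)) := by
  rw [Module.End.mul_apply, gam_apply, gam_apply, sp_FL]; ring

lemma ma_sq {n k : ℕ} (hk : k < n) : (ma k : Op n) * ma k = 1 := by
  refine op_ext fun ψ τ => ?_
  rw [ma, gam_mul, sp_sq τ (by omega), FL_FL]; simp

lemma mb_sq {n k : ℕ} (hk : k < n) : (mb k : Op n) * mb k = -1 := by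
  refine op_ext fun ψ τ => ?_
  rw [mb, gam_mul, sp_sq τ (by omega), FL_FL]; simp

lemma ma_ma {n k l : ℕ} (h : k ≠ l) : (ma k : Op n) * ma l = -(ma l * ma k) := by
  refine op_ext fun ψ τ => ?_
  rw [LinearMap.neg_apply, Pi.neg_apply, ma, ma, gam_mul, gam_mul, FL_comm]
  rcases lt_or_gt_of_ne h with h | h
  · rw [if_neg (by omega), if_pos (by omega)]; ring
  · rw [if_pos (by omega), if_neg (by omega)]; ring

lemma mb_mb {n k l : ℕ} (h : k ≠ l) : (mb k : Op n) * mb l = -(mb l * mb k) := by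
  refine op_ext fun ψ τ => ?_
  rw [LinearMap.neg_apply, Pi.neg_apply, mb, mb, gam_mul, gam_mul, FL_comm]
  rcases lt_or_gt_of_ne h with h | h
  · rw [if_neg (by omega), if_pos (by omega)]; ring
  · rw [if_pos (by omega), if_neg (by omega)]; ring

lemma ma_mb {n : ℕ} (k l : ℕ) : (ma k : Op n) * mb l = -(mb l * ma k) := by
  refine op_ext fun ψ τ => ?_
  rw [LinearMap.neg_apply, Pi.neg_apply, ma, mb, gam_mul, gam_mul, FL_comm]
  rcases le_or_gt l k with h | h
  · rw [if_pos (by omega), if_neg (by omega)]; ring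
  · rw [if_neg (by omega), if_pos (by omega)]; ring

lemma mb_anti {n l k : ℕ} (hl : l < n) :
    (mb l : Op n) * mb k = (if l = k then -2 else 0 : ℝ) • 1 - mb k * mb l := by
  split_ifs with h
  · subst h; rw [mb_sq hl]; module
  · rw [mb_mb h]; simp

/-- The `ℓ²` scalar product. -/
def ip {n : ℕ} (φ ψ : Conf n → ℝ) : ℝ := ∑ τ, φ τ * ψ τ

lemma ip_comm {n : ℕ} (φ ψ : Conf n → ℝ) : ip φ ψ = ip ψ φ :=
  Finset.sum_congr rfl fun _ _ => mul_comm _ _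

lemma ip_add {n : ℕ} (φ ψ χ : Conf n → ℝ) : ip φ (ψ + χ) = ip φ ψ + ip φ χ := by
  simp [ip, mul_add, Finset.sum_add_distrib]

lemma ip_smul {n : ℕ} (φ ψ : Conf n → ℝ) (r : ℝ) : ip φ (r • ψ) = r * ip φ ψ := by
  simp only [ip, Pi.smul_apply, smul_eq_mul, Finset.mul_sum]
  exact Finset.sum_congr rfl fun _ _ => by ring

lemma ip_neg {n : ℕ} (φ ψ : Conf n → ℝ) : ip φ (-ψ) = -ip φ ψ := by
  simp [ip]

lemma ip_sum {n : ℕ} {ι : Type*} (s : Finset ι) (φ : Conf n → ℝ) (ψ : ι → Conf n → ℝ) :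
    ip φ (∑ i ∈ s, ψ i) = ∑ i ∈ s, ip φ (ψ i) := by
  simp only [ip, Finset.sum_apply, Finset.mul_sum]
  exact Finset.sum_comm

lemma ip_self_nonneg {n : ℕ} (ψ : Conf n → ℝ) : 0 ≤ ip ψ ψ :=
  Finset.sum_nonneg fun _ _ => mul_self_nonneg _

lemma ip_self_pos {n : ℕ} {ψ : Conf n → ℝ} (h : ψ ≠ 0) : 0 < ip ψ ψ := by
  obtain ⟨τ, hτ⟩ := Function.ne_iff.1 h
  exact Finset.sum_pos' (fun _ _ => mul_self_nonneg _) ⟨τ, Finset.mem_univ _, mul_self_pos.2 hτ⟩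

lemma ip_gam {n : ℕ} (k m : ℕ) (φ ψ : Conf n → ℝ) :
    ip (gam k m φ) ψ = (if k < m then -1 else 1) * ip φ (gam k m ψ) := by
  rw [ip, ip, Finset.mul_sum, ← sum_FL m]
  refine Finset.sum_congr rfl fun τ _ => ?_
  rw [gam_apply, gam_apply, FL_FL, sp_FL]; ring

lemma ip_ma {n : ℕ} (k : ℕ) (φ ψ : Conf n → ℝ) : ip (ma k φ) ψ = ip φ (ma k ψ) := by
  rw [ma, ip_gam, if_neg (by omega), one_mul]

lemma ip_mb {n : ℕ} (k : ℕ) (φ ψ : Conf n → ℝ) : ip (mb k φ) ψ = -ip φ (mb k ψ) := by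
  rw [mb, ip_gam, if_pos (by omega), neg_one_mul]

/-! ### Wick's theorem -/

/-- The product `b_{k 0} ⋯ b_{k (j - 1)}`. -/
def Bprod {n : ℕ} : {j : ℕ} → (Fin j → ℕ) → Op n
  | 0, _ => 1
  | _ + 1, k => mb (k 0) * Bprod (fun r => k r.succ)

/-- The product `a_{i (j - 1)} ⋯ a_{i 0}`. -/
def Aprod {n : ℕ} : {j : ℕ} → (Fin j → ℕ) → Op n
  | 0, _ => 1
  | _ + 1, i => Aprod (fun r => i r.succ) * ma (i 0)

lemma Aprod_mb {n j : ℕ} (i : Fin j → ℕ) (l : ℕ) :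
    (Aprod i : Op n) * mb l = ((-1 : ℝ) ^ j) • (mb l * Aprod i) := by
  induction j with
  | zero => simp [Aprod]
  | succ j ih =>
    rw [Aprod, mul_assoc, ma_mb, op_mul_neg, ← mul_assoc, ih, smul_mul_assoc, pow_succ, mul_assoc]
    module

lemma ma_Aprod {n j : ℕ} (i : Fin j → ℕ) (l : ℕ) (hl : ∀ r, i r ≠ l) :
    (ma l : Op n) * Aprod i = ((-1 : ℝ) ^ j) • (Aprod i * ma l) := by
  induction j with
  | zero => simp [Aprod]
  | succ j ih =>
    rw [Aprod, ← mul_assoc, ih _ fun r => hl _, smul_mul_assoc, mul_assoc, ma_ma (hl 0).symm,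
      op_mul_neg, pow_succ, mul_assoc]
    module

lemma ma_Bprod {n j : ℕ} (k : Fin j → ℕ) (l : ℕ) :
    (ma l : Op n) * Bprod k = ((-1 : ℝ) ^ j) • (Bprod k * ma l) := by
  induction j with
  | zero => simp [Bprod]
  | succ j ih =>
    rw [Bprod, ← mul_assoc, ma_mb, op_neg_mul, mul_assoc, ih, mul_smul_comm, pow_succ, mul_assoc]
    module

lemma mb_Bprod {n j : ℕ} (k : Fin (j + 1) → ℕ) {l : ℕ} (hl : l < n) :
    (mb l : Op n) * Bprod k =
      ∑ r : Fin (j + 1), ((-1 : ℝ) ^ (r : ℕ) * (if l = k r then -2 else 0)) •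
        Bprod (fun s => k (r.succAbove s)) + ((-1 : ℝ) ^ (j + 1)) • (Bprod k * mb l) := by
  induction j with
  | zero =>
    simp only [Bprod, mul_one, Fin.sum_univ_succ, Finset.univ_eq_empty, Finset.sum_empty]
    rw [mb_anti hl]; simp; module
  | succ j ih =>
    rw [Fin.sum_univ_succ, Bprod, ← mul_assoc, mb_anti hl, sub_mul, mul_assoc, ih]
    have e : ∀ r : Fin (j + 1), (Bprod (fun s => k (r.succ.succAbove s)) : Op n) =
        mb (k 0) * Bprod (fun s => k (r.succAbove s).succ) := by
      intro r; rw [Bprod]; simp [Fin.succ_succAbove_succ]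
    simp only [e, Fin.succAbove_zero, mul_add, Finset.mul_sum, mul_smul_comm, Fin.val_succ,
      pow_succ _ (_ : ℕ), Fin.val_zero, pow_zero, one_mul, smul_mul_assoc]
    rw [← mul_assoc (mb (k 0) : Op n)]
    have e2 : ∀ (f : Fin (j + 1) → ℝ) (X : Fin (j + 1) → Op n),
        ∑ r, (f r * -1) • X r = -∑ r, f r • X r := by
      intro f X; rw [← Finset.sum_neg_distrib]; exact Finset.sum_congr rfl fun r _ => by module
    have e3 : ∀ r : Fin (j + 1), ((-1 : ℝ) ^ (r : ℕ) * -1 * (if l = k r.succ then -2 else 0)) =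
      ((-1 : ℝ) ^ (r : ℕ) * (if l = k r.succ then -2 else 0)) * -1 := fun r => by ring
    simp only [e3, e2]
    module

/-- Wick's theorem: if the vector `Ω` is annihilated by the operators `ma i + ∑ l, O l i • mb l`,
the correlations of the Majorana operators are minors of `O`. -/
lemma wick {n : ℕ} {Ω : Conf n → ℝ} {O : ℕ → ℕ → ℝ}
    (hΩ : ∀ i < n, ma i Ω = -∑ l ∈ Finset.range n, O l i • mb l Ω) {j : ℕ}
    (k i : Fin j → ℕ) (hk : ∀ r, k r < n) (hi : ∀ r, i r < n) (hinj : Function.Injective i) :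
    ip Ω ((Bprod k * Aprod i : Op n) Ω) =
      (Matrix.of fun r s => O (k r) (i s)).det * ip Ω Ω := by
  induction j with
  | zero => simp [Bprod, Aprod]
  | succ j ih =>
    set X : Op n := Bprod k * Aprod (fun r => i r.succ) with hX
    have e0 : (Bprod k * Aprod i : Op n) = X * ma (i 0) := by rw [hX, Aprod, mul_assoc]
    -- `X` is a product of an odd number of factors
    have e1 : (ma (i 0) : Op n) * X = -(X * ma (i 0)) := by
      rw [hX, ← mul_assoc, ma_Bprod, smul_mul_assoc, mul_assoc,
        ma_Aprod _ _ (fun r hr => Fin.succ_ne_zero r (hinj hr)), mul_smul_comm, smul_smul,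
        mul_assoc, pow_succ]
      have : ((-1 : ℝ) ^ j * -1) * (-1) ^ j = -1 := by
        rw [mul_right_comm, ← mul_pow]; norm_num
      rw [this]; module
    have e2 : ∀ l < n, (X * mb l : Op n) + mb l * X = ∑ r : Fin (j + 1),
        ((-1 : ℝ) ^ (r : ℕ) * (if l = k r then -2 else 0)) •
          (Bprod (fun s => k (r.succAbove s)) * Aprod (fun r => i r.succ) : Op n) := by
      intro l hl
      rw [hX, mul_assoc, Aprod_mb, ← mul_assoc, mb_Bprod k hl, mul_smul_comm, add_mul,
        Finset.sum_mul, ← mul_assoc]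
      simp only [smul_mul_assoc, pow_succ]
      module
    clear_value X
    have e3 : ip Ω ((X * ma (i 0) : Op n) Ω) =
        -∑ l ∈ Finset.range n, O l (i 0) * ip Ω ((X * mb l : Op n) Ω) := by
      rw [Module.End.mul_apply, hΩ _ (hi 0), map_neg, ip_neg, map_sum, ip_sum]
      simp only [map_smul, ip_smul, Module.End.mul_apply]
    have e4 : ip Ω ((X * ma (i 0) : Op n) Ω) =
        -∑ l ∈ Finset.range n, O l (i 0) * ip Ω ((mb l * X : Op n) Ω) := by
      have h1 : ip Ω ((X * ma (i 0) : Op n) Ω) = -ip Ω ((ma (i 0) * X : Op n) Ω) := by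
        rw [e1, LinearMap.neg_apply, ip_neg, neg_neg]
      rw [h1, Module.End.mul_apply, ← ip_ma, hΩ _ (hi 0), ip_comm, ip_neg, ip_sum,
        ← Finset.sum_neg_distrib, ← Finset.sum_neg_distrib, ← Finset.sum_neg_distrib]
      refine Finset.sum_congr rfl fun l _ => ?_
      rw [ip_smul, ip_comm, ip_mb, Module.End.mul_apply]; ring
    have e5 : ip Ω ((X * ma (i 0) : Op n) Ω) = ∑ r : Fin (j + 1), (-1 : ℝ) ^ (r : ℕ) * O (k r) (i 0) *
        ip Ω ((Bprod (fun s => k (r.succAbove s)) * Aprod (fun r => i r.succ) : Op n) Ω) := by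
      have h2 : 2 * ip Ω ((X * ma (i 0) : Op n) Ω) = -∑ l ∈ Finset.range n, O l (i 0) *
          ip Ω ((X * mb l + mb l * X : Op n) Ω) := by
        rw [two_mul]
        conv_lhs => lhs; rw [e3]
        conv_lhs => rhs; rw [e4]
        rw [← neg_add, ← Finset.sum_add_distrib]
        congr 1
        refine Finset.sum_congr rfl fun l _ => ?_
        rw [LinearMap.add_apply, ip_add]; ring
      have h3 : ∑ l ∈ Finset.range n, O l (i 0) * ip Ω ((X * mb l + mb l * X : Op n) Ω) =
          ∑ r : Fin (j + 1), ∑ l ∈ Finset.range n, if l = k r then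
            -2 * ((-1 : ℝ) ^ (r : ℕ) * O (k r) (i 0) * ip Ω ((Bprod (fun s => k (r.succAbove s)) *
              Aprod (fun r => i r.succ) : Op n) Ω)) else 0 := by
        rw [Finset.sum_comm]
        refine Finset.sum_congr rfl fun l hl => ?_
        rw [e2 l (Finset.mem_range.1 hl), LinearMap.sum_apply, ip_sum, Finset.mul_sum]
        refine Finset.sum_congr rfl fun r _ => ?_
        rw [LinearMap.smul_apply, ip_smul]
        split_ifs with h
        · rw [h]; ring
        · ring
      simp only [Finset.sum_ite_eq', Finset.mem_range, hk, if_true, ← Finset.mul_sum] at h3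
      linarith
    rw [e0, e5, Matrix.det_succ_column_zero, Finset.sum_mul]
    refine Finset.sum_congr rfl fun r _ => ?_
    rw [ih _ _ (fun s => hk _) (fun s => hi _) (hinj.comp (Fin.succ_injective _))]
    simp only [Matrix.of_apply, Matrix.submatrix]
    ring

/-- A string of consecutive Majorana operators telescopes to the product of the spins at its
ends. -/
lemma chain_prod {n j : ℕ} (s : ℕ) (h : s + j ≤ n) (ψ : Conf n → ℝ) (τ : Conf n) :
    (Bprod (fun r : Fin j => s + (r : ℕ)) * Aprod (fun r : Fin j => s + (r : ℕ)) : Op n) ψ τ =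
      sp τ s * sp τ (s + j) * ψ τ := by
  induction j generalizing s ψ τ with
  | zero => simp [Bprod, Aprod, sp_sq τ (by omega : s ≤ n)]
  | succ j ih =>
    have e : ∀ r : Fin j, s + ((r.succ : Fin (j + 1)) : ℕ) = s + 1 + r := by
      intro r; simp; omega
    have := ih (s + 1) (by omega)
    simp only [Module.End.mul_apply] at this
    simp only [Bprod, Aprod, Module.End.mul_apply, e, Fin.val_zero, add_zero]
    rw [mb, gam_apply, this, ma, gam_apply, FL_FL, sp_FL, sp_FL, if_neg (by omega),
      if_neg (by omega)]
    have h1 := sp_sq τ (by omega : s + 1 ≤ n)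
    have h2 : s + 1 + j = s + (j + 1) := by omega
    rw [h2]
    linear_combination (sp τ s * sp τ (s + (j + 1)) * ψ τ) * h1

/-! ### The Hamiltonian as a quadratic form in the Majorana operators -/

/-- The Hamiltonian on the chain with frozen end spins. -/
def HH (N : ℕ) : Op (N + 1) :=
  ∑ k ∈ Finset.range (N + 1), mb k * ma k + ∑ k ∈ Finset.range N, ma k * mb (k + 1)

section
variable {R : Type*} [Ring R] {X Y Z : R}

lemma comm_zero (h1 : X * Y = -(Y * X)) (h2 : X * Z = -(Z * X)) :
    Y * Z * X - X * (Y * Z) = 0 := by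
  have : X * (Y * Z) = Y * Z * X := by
    rw [← mul_assoc, h1, neg_mul, mul_assoc, h2, mul_neg, neg_neg, mul_assoc]
  rw [this, sub_self]

lemma comm_right (h : Z * Y = -(Y * Z)) : Y * Z * Z - Z * (Y * Z) = 2 * (Y * (Z * Z)) := by
  rw [← mul_assoc, h]; noncomm_ring

lemma comm_left (h : Z * Y = -(Y * Z)) : Y * Z * Y - Y * (Y * Z) = -(2 * (Y * Y * Z)) := by
  rw [mul_assoc Y Z Y, h]; noncomm_ring

end

/-- A linear combination of Majorana operators. -/
def CC (n : ℕ) (u v : ℕ → ℝ) : Op n :=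
  ∑ k ∈ Finset.range n, (u (k + 1) • ma k + v k • mb k)

/-- The commutator of a bond term of the Hamiltonian with a linear combination of Majorana
operators is again linear. -/
lemma comm_ba {n k : ℕ} (hk : k < n) (u v : ℕ → ℝ) :
    (mb k * ma k : Op n) * CC n u v - CC n u v * (mb k * ma k) =
      2 • (u (k + 1) • mb k + v k • ma k) := by
  have h1 : ∀ i, (mb k * ma k : Op n) * ma i - ma i * (mb k * ma k) =
      if i = k then (2 : ℝ) • mb k else 0 := by
    intro i
    split_ifs with h
    · subst h
      refine (comm_right (ma_mb i i)).trans ?_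
      rw [ma_sq hk, mul_one, two_mul]; module
    · exact comm_zero (ma_mb _ _) (ma_ma h)
  have h2 : ∀ i, (mb k * ma k : Op n) * mb i - mb i * (mb k * ma k) =
      if i = k then (2 : ℝ) • ma k else 0 := by
    intro i
    split_ifs with h
    · subst h
      refine (comm_left (ma_mb i i)).trans ?_
      rw [mb_sq hk, op_neg_mul, one_mul, two_mul]; module
    · exact comm_zero (mb_mb h) (by rw [ma_mb, neg_neg])
  have h3 : ∀ i, (mb k * ma k : Op n) * (u (i + 1) • ma i + v i • mb i) -
      (u (i + 1) • ma i + v i • mb i) * (mb k * ma k) =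
      if i = k then (2 : ℝ) • (u (k + 1) • mb k + v k • ma k) else 0 := by
    intro i
    have e : (mb k * ma k : Op n) * (u (i + 1) • ma i + v i • mb i) -
      (u (i + 1) • ma i + v i • mb i) * (mb k * ma k) =
      u (i + 1) • ((mb k * ma k : Op n) * ma i - ma i * (mb k * ma k)) +
      v i • ((mb k * ma k : Op n) * mb i - mb i * (mb k * ma k)) := by
      simp only [mul_add, add_mul, mul_smul_comm, smul_mul_assoc]; module
    rw [e, h1, h2]
    split_ifs with h
    · subst h; module
    · simp
  rw [CC, Finset.mul_sum, Finset.sum_mul, ← Finset.sum_sub_distrib]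
  simp only [h3]
  rw [Finset.sum_ite_eq' , if_pos (Finset.mem_range.2 hk)]
  module

/-- The commutator of a spin flip term of the Hamiltonian with a linear combination of Majorana
operators. -/
lemma comm_ab {n k : ℕ} (hk : k + 1 < n) (u v : ℕ → ℝ) :
    (ma k * mb (k + 1) : Op n) * CC n u v - CC n u v * (ma k * mb (k + 1)) =
      -(2 • (u (k + 1) • mb (k + 1) + v (k + 1) • ma k)) := by
  have h1 : ∀ i, (ma k * mb (k + 1) : Op n) * ma i - ma i * (ma k * mb (k + 1)) =
      if i = k then (-2 : ℝ) • mb (k + 1) else 0 := by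
    intro i
    split_ifs with h
    · subst h
      refine (comm_left (by rw [ma_mb, neg_neg])).trans ?_
      rw [ma_sq (by omega), one_mul, two_mul]; module
    · exact comm_zero (ma_ma h) (ma_mb _ _)
  have h2 : ∀ i, (ma k * mb (k + 1) : Op n) * mb i - mb i * (ma k * mb (k + 1)) =
      if i = k + 1 then (-2 : ℝ) • ma k else 0 := by
    intro i
    split_ifs with h
    · subst h
      refine (comm_right (by rw [ma_mb, neg_neg])).trans ?_
      rw [mb_sq hk, op_mul_neg, mul_one, two_mul]; module
    · exact comm_zero (by rw [ma_mb, neg_neg]) (mb_mb h)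
  have h3 : ∀ i, (ma k * mb (k + 1) : Op n) * (u (i + 1) • ma i + v i • mb i) -
      (u (i + 1) • ma i + v i • mb i) * (ma k * mb (k + 1)) =
      (if i = k then (-2 : ℝ) • (u (k + 1) • mb (k + 1)) else 0 : Op n) +
      (if i = k + 1 then (-2 : ℝ) • (v (k + 1) • ma k) else 0 : Op n) := by
    intro i
    have e : (ma k * mb (k + 1) : Op n) * (u (i + 1) • ma i + v i • mb i) -
      (u (i + 1) • ma i + v i • mb i) * (ma k * mb (k + 1)) =
      u (i + 1) • ((ma k * mb (k + 1) : Op n) * ma i - ma i * (ma k * mb (k + 1))) +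
      v i • ((ma k * mb (k + 1) : Op n) * mb i - mb i * (ma k * mb (k + 1))) := by
      simp only [mul_add, add_mul, mul_smul_comm, smul_mul_assoc]; module
    rw [e, h1, h2]
    split_ifs with h h' h'
    · omega
    · subst h; module
    · subst h'; module
    · simp
  rw [CC, Finset.mul_sum, Finset.sum_mul, ← Finset.sum_sub_distrib]
  simp only [h3, Finset.sum_add_distrib]
  rw [Finset.sum_ite_eq', Finset.sum_ite_eq', if_pos (Finset.mem_range.2 (by omega)),
    if_pos (Finset.mem_range.2 hk)]
  module

/-- A normal mode with eigenvalue `l` raises the energy by `2 * l`: it maps eigenvectors of `HH` to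
eigenvectors, or to zero. -/
lemma HH_comm {N : ℕ} {u v : ℕ → ℝ} {l : ℝ} (hu0 : u 0 = 0) (hv0 : v (N + 1) = 0)
    (hu : ∀ k, u (k + 1) - u k = l * v k) (hv : ∀ k, v k - v (k + 1) = l * u (k + 1)) :
    HH N * CC (N + 1) u v = CC (N + 1) u v * HH N + (2 * l) • CC (N + 1) u v := by
  rw [← sub_eq_iff_eq_add']
  have e : HH N * CC (N + 1) u v - CC (N + 1) u v * HH N =
      ∑ k ∈ Finset.range (N + 1), (2 : ℝ) • (u (k + 1) • mb k + v k • ma k : Op (N + 1)) -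
      ∑ k ∈ Finset.range N, (2 : ℝ) • (u (k + 1) • mb (k + 1) + v (k + 1) • ma k :
        Op (N + 1)) := by
    have e1 : HH N * CC (N + 1) u v - CC (N + 1) u v * HH N =
        ∑ k ∈ Finset.range (N + 1), ((mb k * ma k : Op (N + 1)) * CC (N + 1) u v -
          CC (N + 1) u v * (mb k * ma k)) +
        ∑ k ∈ Finset.range N, ((ma k * mb (k + 1) : Op (N + 1)) * CC (N + 1) u v -
          CC (N + 1) u v * (ma k * mb (k + 1))) := by
      rw [HH, add_mul, mul_add, Finset.sum_mul, Finset.sum_mul, Finset.mul_sum, Finset.mul_sum,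
        Finset.sum_sub_distrib, Finset.sum_sub_distrib]
      abel
    rw [e1, sub_eq_add_neg, ← Finset.sum_neg_distrib]
    congr 1
    · exact Finset.sum_congr rfl fun k hk => by
        rw [comm_ba (Finset.mem_range.1 hk)]; module
    · exact Finset.sum_congr rfl fun k hk => by
        have := Finset.mem_range.1 hk
        rw [comm_ab (by omega)]; module
  have e2 : ∑ k ∈ Finset.range N, (2 : ℝ) • (u (k + 1) • mb (k + 1) + v (k + 1) • ma k :
        Op (N + 1)) =
      ∑ k ∈ Finset.range (N + 1), (2 : ℝ) • (u k • mb k + v (k + 1) • ma k : Op (N + 1)) := by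
    simp only [← Finset.smul_sum, Finset.sum_add_distrib]
    rw [Finset.sum_range_succ' (fun k => u k • (mb k : Op (N + 1))),
      Finset.sum_range_succ (fun k => v (k + 1) • (ma k : Op (N + 1))), hu0, hv0]
    simp
  rw [e, e2, ← Finset.sum_sub_distrib, CC, Finset.smul_sum]
  refine Finset.sum_congr rfl fun k _ => ?_
  have h1 := hu k
  have h2 := hv k
  have h3 : (2 : ℝ) • (u (k + 1) • mb k + v k • ma k : Op (N + 1)) -
      (2 : ℝ) • (u k • mb k + v (k + 1) • ma k) =
      (2 : ℝ) • ((u (k + 1) - u k) • mb k + (v k - v (k + 1)) • ma k) := by module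
  rw [h3, h1, h2]; module

/-! ### The ground state of the Hamiltonian -/

lemma HH_symm {N : ℕ} (φ ψ : Conf (N + 1) → ℝ) : ip (HH N φ) ψ = ip φ (HH N ψ) := by
  rw [ip_comm]
  simp only [HH, LinearMap.add_apply, ip_add, LinearMap.sum_apply, ip_sum, Module.End.mul_apply]
  congr 1
  · refine Finset.sum_congr rfl fun k _ => ?_
    have h := congrArg (fun X : Op (N + 1) => X ψ) (ma_mb (n := N + 1) k k)
    simp only [LinearMap.neg_apply, Module.End.mul_apply] at h
    rw [ip_comm, ip_mb, ip_ma, h, ip_neg, neg_neg]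
  · refine Finset.sum_congr rfl fun k _ => ?_
    have h := congrArg (fun X : Op (N + 1) => X ψ) (ma_mb (n := N + 1) k (k + 1))
    simp only [LinearMap.neg_apply, Module.End.mul_apply] at h
    rw [ip_comm, ip_ma, ip_mb, h, ip_neg]

lemma HH_apply {N : ℕ} (ψ : Conf (N + 1) → ℝ) (τ : Conf (N + 1)) :
    HH N ψ τ = (∑ k ∈ Finset.range (N + 1), sp τ k * sp τ (k + 1)) * ψ τ +
      ∑ k ∈ Finset.range N, ψ (FL (k + 2) (FL (k + 1) τ)) := by
  rw [HH, LinearMap.add_apply, Pi.add_apply, LinearMap.sum_apply, LinearMap.sum_apply,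
    Finset.sum_apply, Finset.sum_apply, Finset.sum_mul]
  congr 1
  · refine Finset.sum_congr rfl fun k _ => ?_
    rw [mb, ma, gam_mul, FL_FL, if_neg (by omega)]; ring
  · refine Finset.sum_congr rfl fun k hk => ?_
    have := Finset.mem_range.1 hk
    rw [mb, ma, gam_mul, if_neg (by omega), sp_sq τ (by omega)]; ring

lemma FL_flip {n : ℕ} (m : ℕ) (hm : m < n + 1) (τ : Conf n) :
    FL (m + 1) (FL m τ) = flip τ ⟨m, hm⟩ := by
  funext i
  by_cases h : i = ⟨m, hm⟩
  · subst h; simp [FL, flip]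
  · have h' : (i : ℕ) ≠ m := fun h' => h (Fin.ext h')
    simp only [FL, flip, Function.update_of_ne h]
    split_ifs <;> first | omega | simp

lemma sub_smul_ip {n : ℕ} (φ ψ : Conf n → ℝ) (t : ℝ) :
    ip (φ + t • ψ) (φ + t • ψ) = ip φ φ + 2 * t * ip φ ψ + t ^ 2 * ip ψ ψ := by
  rw [ip_add, ip_smul, ip_comm (φ + t • ψ) φ, ip_comm (φ + t • ψ) ψ, ip_add, ip_add, ip_smul,
    ip_smul, ip_comm ψ φ]
  ring

/-- A maximizer of the Rayleigh quotient of the Hamiltonian. The sign of `HH` is such that its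
ground states are the top eigenvectors. -/
lemma exists_top (N : ℕ) : ∃ (E : ℝ) (ψ : Conf (N + 1) → ℝ), ψ ≠ 0 ∧
    ip ψ (HH N ψ) = E * ip ψ ψ ∧ ∀ φ, ip φ (HH N φ) ≤ E * ip φ φ := by
  have hc1 : Continuous fun ψ : Conf (N + 1) → ℝ => ip ψ ψ := by unfold ip; fun_prop
  have hc2 : Continuous fun ψ : Conf (N + 1) → ℝ => ip ψ (HH N ψ) := by
    have := LinearMap.continuous_of_finiteDimensional (HH N)
    unfold ip
    refine continuous_finsetSum _ fun τ _ => ?_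
    exact (continuous_apply τ).mul ((continuous_apply τ).comp this)
  have hK : IsCompact {ψ : Conf (N + 1) → ℝ | ip ψ ψ = 1} := by
    refine Metric.isCompact_of_isClosed_isBounded (isClosed_eq hc1 continuous_const) ?_
    refine (Metric.isBounded_closedBall (x := (0 : Conf (N + 1) → ℝ)) (r := 1)).subset ?_
    intro ψ hψ
    rw [mem_closedBall_zero_iff, pi_norm_le_iff_of_nonneg zero_le_one]
    intro τ
    have h1 : ψ τ * ψ τ ≤ ip ψ ψ :=
      Finset.single_le_sum (f := fun τ => ψ τ * ψ τ) (fun _ _ => mul_self_nonneg _)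
        (Finset.mem_univ τ)
    rw [show ip ψ ψ = 1 from hψ] at h1
    rw [Real.norm_eq_abs]
    exact abs_le_one_iff_mul_self_le_one.2 h1
  have hscale : ∀ φ : Conf (N + 1) → ℝ, φ ≠ 0 → ∃ r : ℝ, r ≠ 0 ∧ ip (r • φ) (r • φ) = 1 := by
    intro φ hφ
    have h := ip_self_pos hφ
    have h2 := Real.sqrt_pos.2 h
    refine ⟨(Real.sqrt (ip φ φ))⁻¹, inv_ne_zero h2.ne', ?_⟩
    rw [ip_smul, ip_comm (_ • φ) φ, ip_smul, ← mul_assoc, ← mul_inv, Real.mul_self_sqrt h.le,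
      inv_mul_cancel₀ h.ne']
  have hne : {ψ : Conf (N + 1) → ℝ | ip ψ ψ = 1}.Nonempty := by
    have : (fun _ => 1 : Conf (N + 1) → ℝ) ≠ 0 := fun h => one_ne_zero (congrFun h fun _ => true)
    obtain ⟨r, -, hr⟩ := hscale _ this
    exact ⟨_, hr⟩
  obtain ⟨ψ, hψ, hmax⟩ := hK.exists_isMaxOn hne hc2.continuousOn
  have hψ1 : ip ψ ψ = 1 := hψ
  refine ⟨ip ψ (HH N ψ), ψ, ?_, by rw [hψ1, mul_one], fun φ => ?_⟩
  · rintro rfl; simp [ip] at hψ1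
  · by_cases h0 : φ = 0
    · subst h0; simp [ip]
    · obtain ⟨r, hr0, hr⟩ := hscale φ h0
      have h1 : ip (r • φ) (HH N (r • φ)) ≤ ip ψ (HH N ψ) := hmax hr
      rw [map_smul, ip_smul, ip_comm, ip_smul, ip_comm] at h1
      rw [ip_smul, ip_comm, ip_smul] at hr
      have h2 : r * (r * ip φ (HH N φ)) ≤ ip ψ (HH N ψ) * (r * (r * ip φ φ)) := by
        rw [hr, mul_one]; exact h1
      have h3 : 0 < r * r := mul_self_pos.2 hr0
      nlinarith

/-- The variational characterization of the top eigenvectors. -/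
lemma eig_of_top {N : ℕ} {E : ℝ} (hE : ∀ φ, ip φ (HH N φ) ≤ E * ip φ φ)
    {ψ : Conf (N + 1) → ℝ} (h : ip ψ (HH N ψ) = E * ip ψ ψ) : HH N ψ = E • ψ := by
  set δ := HH N ψ + (-E) • ψ with hδ
  have hd : ip δ δ = ip δ (HH N ψ) - E * ip δ ψ := by
    conv_lhs => rw [hδ]
    rw [ip_add, ip_smul]; ring
  have key : ∀ t : ℝ, 0 ≤ (E * ip δ δ - ip δ (HH N δ)) * t ^ 2 - 2 * t * ip δ δ := by
    intro t
    have h1 := hE (ψ + t • δ)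
    rw [sub_smul_ip, map_add, map_smul, ip_add, ip_smul, ip_comm (ψ + t • δ),
      ip_comm (ψ + t • δ), ip_add, ip_add, ip_smul, ip_smul, ip_comm (HH N ψ) ψ, h,
      HH_symm δ ψ, ip_comm (HH N ψ) δ, ip_comm (HH N δ) δ, ip_comm ψ δ] at h1
    rw [hd]; rw [hd] at *
    nlinarith
  have h0 : ip δ δ = 0 := by
    have hn := ip_self_nonneg δ
    by_contra hne
    have hp : 0 < ip δ δ := lt_of_le_of_ne hn (Ne.symm hne)
    set A := E * ip δ δ - ip δ (HH N δ) with hA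
    have hA0 : 0 ≤ A := by have := hE δ; linarith
    have h2 := key (ip δ δ / (A + 1))
    have h3 : 0 < A + 1 := by linarith
    have h4 : A * (ip δ δ / (A + 1)) ^ 2 - 2 * (ip δ δ / (A + 1)) * ip δ δ =
        (ip δ δ) ^ 2 / (A + 1) ^ 2 * (-A - 2) := by field_simp; ring
    rw [h4] at h2
    have h5 : 0 < (ip δ δ) ^ 2 / (A + 1) ^ 2 := by positivity
    nlinarith
  by_contra hne
  have : δ ≠ 0 := by
    intro h'
    apply hne
    rw [hδ, neg_smul, ← sub_eq_add_neg, sub_eq_zero] at h'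
    exact h'
  exact (ip_self_pos this).ne' h0

/-- A raising operator annihilates the top eigenvectors. -/
lemma CC_kill {N : ℕ} {E : ℝ} (hE : ∀ φ, ip φ (HH N φ) ≤ E * ip φ φ)
    {ψ : Conf (N + 1) → ℝ} (h : HH N ψ = E • ψ) {u v : ℕ → ℝ} {l : ℝ} (hl : 0 < l)
    (hu0 : u 0 = 0) (hv0 : v (N + 1) = 0)
    (hu : ∀ k, u (k + 1) - u k = l * v k) (hv : ∀ k, v k - v (k + 1) = l * u (k + 1)) :
    CC (N + 1) u v ψ = 0 := by
  have h1 := congrArg (fun X : Op (N + 1) => X ψ) (HH_comm hu0 hv0 hu hv)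
  simp only [LinearMap.add_apply, Module.End.mul_apply, LinearMap.smul_apply, h, map_smul] at h1
  by_contra hne
  have h2 := hE (CC (N + 1) u v ψ)
  rw [h1, ip_add, ip_smul, ip_smul] at h2
  nlinarith [ip_self_pos hne]

/-- The Dirichlet kernel. -/
lemma dirichlet (n : ℕ) (x : ℝ) :
    2 * Real.sin x * ∑ m ∈ Finset.range n, Real.cos (2 * (m + 1) * x) =
      Real.sin ((2 * n + 1) * x) - Real.sin x := by
  induction n with
  | zero => simp
  | succ n ih =>
    rw [Finset.sum_range_succ, mul_add, ih]
    have e1 : (2 * ((n + 1 : ℕ) : ℝ) + 1) * x = 2 * (n + 1) * x + x := by push_cast; ring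
    have e2 : (2 * (n : ℝ) + 1) * x = 2 * (n + 1) * x - x := by ring
    rw [e1, e2, Real.sin_add, Real.sin_sub]; ring

/-- The basic angle `π / (2 (2 n + 1))`; the momenta of the normal modes are multiples of it. -/
def al (n : ℕ) : ℝ := Real.pi / (2 * (2 * n + 1))

lemma al_pos (n : ℕ) : 0 < al n := by unfold al; positivity

lemma al_mul (n : ℕ) : (2 * n + 1) * al n = Real.pi / 2 := by unfold al; field_simp

lemma sin_al_pos {n : ℕ} {p : ℝ} (h0 : 0 < p) (h : p < 2 * (2 * n + 1)) :
    0 < Real.sin (al n * p) := by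
  refine Real.sin_pos_of_pos_of_lt_pi (mul_pos (al_pos n) h0) ?_
  have := al_mul n
  have := al_pos n
  nlinarith

/-- The values of the sums of cosines. -/
lemma cos_sum_odd {n : ℕ} (p : ℤ) (hs : Real.sin (al n * (2 * p + 1)) ≠ 0) :
    ∑ m ∈ Finset.range n, Real.cos (2 * (m + 1) * (al n * (2 * p + 1))) =
      ((-1) ^ p / Real.sin (al n * (2 * p + 1)) - 1) / 2 := by
  have h := dirichlet n (al n * (2 * p + 1))
  have e : (2 * (n : ℝ) + 1) * (al n * (2 * p + 1)) = p * Real.pi + Real.pi / 2 := by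
    rw [← mul_assoc, al_mul]; ring
  rw [e, Real.sin_add_pi_div_two, Real.cos_int_mul_pi] at h
  generalize (∑ m ∈ Finset.range n, Real.cos (2 * ((m : ℝ) + 1) * (al n * (2 * p + 1)))) = S at *
  field_simp
  linarith

lemma cos_sum_even {n : ℕ} (p : ℤ) (hs : Real.sin (al n * (2 * p)) ≠ 0) :
    ∑ m ∈ Finset.range n, Real.cos (2 * (m + 1) * (al n * (2 * p))) = -1 / 2 := by
  have h := dirichlet n (al n * (2 * p))
  have e : (2 * (n : ℝ) + 1) * (al n * (2 * p)) = p * Real.pi := by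
    rw [← mul_assoc, al_mul]; ring
  rw [e, Real.sin_int_mul_pi] at h
  have : Real.sin (al n * (2 * p)) * (2 * (∑ m ∈ Finset.range n,
    Real.cos (2 * (m + 1) * (al n * (2 * p)))) + 1) = 0 := by linarith
  rcases mul_eq_zero.1 this with h | h
  · exact absurd h hs
  · linarith

/-- The first component of the normal modes. -/
def mu (n m k : ℕ) : ℝ := (-1) ^ k * Real.sin (2 * k * (2 * (m + 1) * al n))

/-- The second component of the normal modes. -/
def mv (n m k : ℕ) : ℝ := (-1) ^ (k + 1) * Real.sin ((2 * k + 1) * (2 * (m + 1) * al n))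

/-- The matrix relating the two families of Majorana operators on the ground state. -/
def Om (n l i : ℕ) : ℝ := 1 / (2 * n + 1) *
  (1 / Real.sin (al n * (2 * i - 2 * l + 1)) + 1 / Real.sin (al n * (2 * i + 2 * l + 3)))

lemma sin_ne {n : ℕ} {p : ℝ} (h0 : p ≠ 0) (h : |p| < 2 * (2 * n + 1)) :
    Real.sin (al n * p) ≠ 0 := by
  rcases lt_or_gt_of_ne h0 with h1 | h1
  · have := sin_al_pos (n := n) (p := -p) (by linarith) (by rwa [abs_of_neg h1] at h)
    rw [mul_neg, Real.sin_neg] at this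
    exact (by linarith : Real.sin (al n * p) < 0).ne
  · exact (sin_al_pos h1 (by rwa [abs_of_pos h1] at h)).ne'

/-- Orthogonality, summed over the modes, of the first components at two sites. -/
lemma mu_orth {n i k : ℕ} (hi : i < n) (hk : k < n) :
    ∑ m ∈ Finset.range n, mu n m (i + 1) * mu n m (k + 1) =
      if i = k then (2 * (n : ℝ) + 1) / 4 else 0 := by
  have hi' : (i : ℝ) + 1 ≤ n := by exact_mod_cast hi
  have hk' : (k : ℝ) + 1 ≤ n := by exact_mod_cast hk
  have hi0 : (0 : ℝ) ≤ i := Nat.cast_nonneg _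
  have hk0 : (0 : ℝ) ≤ k := Nat.cast_nonneg _
  have e : ∀ m : ℕ, mu n m (i + 1) * mu n m (k + 1) = (-1) ^ (i + k) * (1 / 2) *
      (Real.cos (2 * (m + 1) * (al n * (2 * ((i - k : ℤ) : ℝ)))) -
        Real.cos (2 * (m + 1) * (al n * (2 * ((i + k + 2 : ℤ) : ℝ))))) := by
    intro m
    have e1 : 2 * ((m : ℝ) + 1) * (al n * (2 * ((i - k : ℤ) : ℝ))) =
      2 * ((i + 1 : ℕ) : ℝ) * (2 * (m + 1) * al n) - 2 * ((k + 1 : ℕ) : ℝ) * (2 * (m + 1) * al n) := by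
      push_cast; ring
    have e2 : 2 * ((m : ℝ) + 1) * (al n * (2 * ((i + k + 2 : ℤ) : ℝ))) =
      2 * ((i + 1 : ℕ) : ℝ) * (2 * (m + 1) * al n) + 2 * ((k + 1 : ℕ) : ℝ) * (2 * (m + 1) * al n) := by
      push_cast; ring
    rw [e1, e2, Real.cos_sub, Real.cos_add, mu, mu]
    ring
  simp only [e]
  rw [← Finset.mul_sum, Finset.sum_sub_distrib,
    cos_sum_even (i + k + 2) (sin_ne (by push_cast; positivity) (by
      push_cast; rw [abs_of_nonneg (by positivity)]; linarith))]
  split_ifs with h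
  · subst h
    simp
    ring
  · rw [cos_sum_even (i - k) (sin_ne (by
        push_cast; intro h'; apply h; exact_mod_cast (by linarith : (i : ℝ) = k)) (by
      push_cast; rw [abs_lt]; constructor <;> linarith))]
    ring

/-- Summing over the modes gives the matrix `Om` in closed form. -/
lemma mu_mv {n i l : ℕ} (hi : i < n) (hl : l < n) :
    4 / (2 * n + 1) * ∑ m ∈ Finset.range n, mu n m (i + 1) * mv n m l = Om n l i := by
  have hi' : (i : ℝ) + 1 ≤ n := by exact_mod_cast hi
  have hk' : (l : ℝ) + 1 ≤ n := by exact_mod_cast hl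
  have hi0 : (0 : ℝ) ≤ i := Nat.cast_nonneg _
  have hk0 : (0 : ℝ) ≤ l := Nat.cast_nonneg _
  have e : ∀ m : ℕ, mu n m (i + 1) * mv n m l = (-1) ^ (i + l) * (1 / 2) *
      (Real.cos (2 * (m + 1) * (al n * (2 * ((i - l : ℤ) : ℝ) + 1))) -
        Real.cos (2 * (m + 1) * (al n * (2 * ((i + l + 1 : ℤ) : ℝ) + 1)))) := by
    intro m
    have e1 : 2 * ((m : ℝ) + 1) * (al n * (2 * ((i - l : ℤ) : ℝ) + 1)) =
      2 * ((i + 1 : ℕ) : ℝ) * (2 * (m + 1) * al n) - (2 * l + 1) * (2 * (m + 1) * al n) := by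
      push_cast; ring
    have e2 : 2 * ((m : ℝ) + 1) * (al n * (2 * ((i + l + 1 : ℤ) : ℝ) + 1)) =
      2 * ((i + 1 : ℕ) : ℝ) * (2 * (m + 1) * al n) + (2 * l + 1) * (2 * (m + 1) * al n) := by
      push_cast; ring
    rw [e1, e2, Real.cos_sub, Real.cos_add, mu, mv]
    ring
  simp only [e]
  rw [← Finset.mul_sum, Finset.sum_sub_distrib,
    cos_sum_odd (i + l + 1) (sin_ne (by push_cast; positivity) (by
      push_cast; rw [abs_of_nonneg (by positivity)]; linarith)),
    cos_sum_odd (i - l) (sin_ne (by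
        exact_mod_cast (by omega : 2 * ((i : ℤ) - l) + 1 ≠ 0)) (by
      push_cast; rw [abs_lt]; constructor <;> linarith)), Om]
  have s1 : ((-1 : ℝ)) ^ ((i : ℤ) - l) = (-1) ^ (i + l) := by
    rw [zpow_sub₀ (by norm_num), zpow_natCast, zpow_natCast, pow_add, div_eq_iff (by positivity),
      mul_assoc, ← pow_add, ← two_mul, pow_mul]; norm_num
  have s2 : ((-1 : ℝ)) ^ ((i : ℤ) + l + 1) = -(-1) ^ (i + l) := by
    rw [zpow_add₀ (by norm_num)]; norm_cast; simp
  have s3 : ((-1 : ℝ)) ^ (i + l) * (-1) ^ (i + l) = 1 := by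
    rw [← pow_add, ← two_mul, pow_mul]; norm_num
  rw [s1, s2]
  push_cast
  have t1 : al n * (2 * ((i : ℝ) - l) + 1) = al n * (2 * i - 2 * l + 1) := by ring
  have t2 : al n * (2 * ((i : ℝ) + l + 1) + 1) = al n * (2 * i + 2 * l + 3) := by ring
  rw [t1, t2]
  simp only [div_eq_mul_inv]
  linear_combination ((2 * (n : ℝ) + 1)⁻¹ * ((Real.sin (al n * (2 * i - 2 * l + 1)))⁻¹ +
    (Real.sin (al n * (2 * i + 2 * l + 3)))⁻¹)) * s3

/-- The relation between the two families on a top eigenvector. -/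
lemma top_rel {N : ℕ} {E : ℝ} (hE : ∀ φ, ip φ (HH N φ) ≤ E * ip φ φ)
    {ψ : Conf (N + 1) → ℝ} (h : HH N ψ = E • ψ) (i : ℕ) (hi : i < N + 1) :
    ma i ψ = -∑ l ∈ Finset.range (N + 1), Om (N + 1) l i • mb l ψ := by
  have hk : ∀ m ∈ Finset.range (N + 1), ∑ k ∈ Finset.range (N + 1), mu (N + 1) m (k + 1) • ma k ψ =
      -∑ l ∈ Finset.range (N + 1), mv (N + 1) m l • mb l ψ := by
    intro m hm
    have hm' : (m : ℝ) + 1 ≤ ((N + 1 : ℕ) : ℝ) := by exact_mod_cast Finset.mem_range.1 hm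
    have hc := CC_kill hE h (u := mu (N + 1) m) (v := mv (N + 1) m) (l := 2 * Real.cos (2 * (m + 1) * al (N + 1)))
      ?_ ?_ ?_ ?_ ?_
    · rw [CC, LinearMap.sum_apply] at hc
      simp only [LinearMap.add_apply, LinearMap.smul_apply, Finset.sum_add_distrib] at hc
      exact eq_neg_of_add_eq_zero_left hc
    · have := al_mul (N + 1)
      have := al_pos (N + 1)
      refine mul_pos two_pos (Real.cos_pos_of_mem_Ioo ⟨?_, ?_⟩)
      · have : 0 ≤ 2 * ((m : ℝ) + 1) * al (N + 1) := by positivity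
        linarith [Real.pi_pos]
      · nlinarith
    · simp [mu]
    · have : (2 * ((N + 1 : ℕ) : ℝ) + 1) * (2 * (m + 1) * al (N + 1)) = ((m + 1 : ℕ) : ℝ) * Real.pi := by
        rw [show (2 * ((N + 1 : ℕ) : ℝ) + 1) * (2 * (m + 1) * al (N + 1)) =
          ((2 * ((N + 1 : ℕ) : ℝ) + 1) * al (N + 1)) * (2 * (m + 1)) by ring, al_mul]
        push_cast; ring
      rw [mv, this, Real.sin_nat_mul_pi, mul_zero]
    · intro k
      have e1 : 2 * ((k + 1 : ℕ) : ℝ) * (2 * (m + 1) * al (N + 1)) =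
        (2 * k + 1) * (2 * (m + 1) * al (N + 1)) + (2 * (m + 1) * al (N + 1)) := by push_cast; ring
      have e2 : 2 * (k : ℝ) * (2 * (m + 1) * al (N + 1)) =
        (2 * k + 1) * (2 * (m + 1) * al (N + 1)) - (2 * (m + 1) * al (N + 1)) := by ring
      rw [mu, mu, mv, e1, e2, Real.sin_add, Real.sin_sub]; ring
    · intro k
      have e1 : (2 * ((k + 1 : ℕ) : ℝ) + 1) * (2 * (m + 1) * al (N + 1)) =
        2 * ((k + 1 : ℕ) : ℝ) * (2 * (m + 1) * al (N + 1)) + (2 * (m + 1) * al (N + 1)) := by push_cast; ring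
      have e2 : (2 * (k : ℝ) + 1) * (2 * (m + 1) * al (N + 1)) =
        2 * ((k + 1 : ℕ) : ℝ) * (2 * (m + 1) * al (N + 1)) - (2 * (m + 1) * al (N + 1)) := by push_cast; ring
      rw [mv, mv, mu, e1, e2, Real.sin_add, Real.sin_sub]; ring
  have h1 : ∑ m ∈ Finset.range (N + 1), mu (N + 1) m (i + 1) • ∑ k ∈ Finset.range (N + 1), mu (N + 1) m (k + 1) • ma k ψ =
      ((2 * ((N + 1 : ℕ) : ℝ) + 1) / 4) • ma i ψ := by
    simp only [Finset.smul_sum, smul_smul]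
    rw [Finset.sum_comm]
    simp only [← Finset.sum_smul]
    have : ∀ k ∈ Finset.range (N + 1), (∑ m ∈ Finset.range (N + 1), mu (N + 1) m (i + 1) * mu (N + 1) m (k + 1)) • ma k ψ =
        if i = k then ((2 * ((N + 1 : ℕ) : ℝ) + 1) / 4) • ma k ψ else 0 := by
      intro k hk
      rw [mu_orth hi (Finset.mem_range.1 hk)]
      split_ifs <;> simp
    rw [Finset.sum_congr rfl this, Finset.sum_ite_eq, if_pos (Finset.mem_range.2 hi)]
  have h2 : ∑ m ∈ Finset.range (N + 1), mu (N + 1) m (i + 1) • ∑ k ∈ Finset.range (N + 1), mu (N + 1) m (k + 1) • ma k ψ =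
      -∑ l ∈ Finset.range (N + 1), (∑ m ∈ Finset.range (N + 1), mu (N + 1) m (i + 1) * mv (N + 1) m l) • mb l ψ := by
    rw [Finset.sum_congr rfl fun m hm => by rw [hk m hm]]
    simp only [smul_neg, Finset.sum_neg_distrib, Finset.smul_sum, smul_smul, Finset.sum_smul]
    rw [Finset.sum_comm]
  have h3 : (4 / (2 * ((N + 1 : ℕ) : ℝ) + 1)) • (((2 * ((N + 1 : ℕ) : ℝ) + 1) / 4) • ma i ψ) = ma i ψ := by
    rw [smul_smul]
    have : 4 / (2 * ((N + 1 : ℕ) : ℝ) + 1) * ((2 * ((N + 1 : ℕ) : ℝ) + 1) / 4) = 1 := by field_simp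
    rw [this, one_smul]
  rw [← h3, ← h1, h2, smul_neg, Finset.smul_sum]
  congr 1
  refine Finset.sum_congr rfl fun l hl => ?_
  rw [smul_smul, mu_mv hi (Finset.mem_range.1 hl)]

/-! ### Correlations in the ground state -/

/-- The determinant giving the two-point functions in the ground state. -/
def Dd (n j : ℕ) : ℝ := (Matrix.of fun r s : Fin j => Om n r s).det

/-- In a top eigenvector the correlation of the spins at the left end and at site `j` is a
determinant. -/
lemma corr {N : ℕ} {E : ℝ} (hE : ∀ φ, ip φ (HH N φ) ≤ E * ip φ φ)
    {ψ : Conf (N + 1) → ℝ} (h : HH N ψ = E • ψ) {j : ℕ} (hj : j ≤ N + 1) :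
    ∑ τ, sp τ 0 * sp τ j * (ψ τ * ψ τ) = Dd (N + 1) j * ip ψ ψ := by
  have h1 := wick (top_rel hE h) (fun r : Fin j => 0 + (r : ℕ)) (fun r : Fin j => 0 + (r : ℕ))
    (fun r => by have := r.2; omega) (fun r => by have := r.2; omega)
    (fun r s hrs => by ext; simpa using hrs)
  simp only [Nat.zero_add] at h1
  rw [Dd, ← h1, ip]
  refine Finset.sum_congr rfl fun τ _ => ?_
  have h2 := chain_prod (n := N + 1) (j := j) 0 (by omega) ψ τ
  simp only [Nat.zero_add] at h2
  rw [h2]; ring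

lemma sp_lt {n k : ℕ} (τ : Conf n) (hk : k < n + 1) : sp τ k = zz (τ ⟨k, hk⟩) := by
  simp [sp, hk]

lemma HH_apply' {N : ℕ} (ψ : Conf (N + 1) → ℝ) (τ : Conf (N + 1)) :
    HH N ψ τ = (∑ k : Fin (N + 1), zz (τ k.castSucc) * zz (τ k.succ)) * ψ τ +
      ∑ k : Fin N, ψ (flip τ k.castSucc.succ) := by
  rw [HH_apply, Finset.sum_range, Finset.sum_range]
  congr 1
  · congr 1
    refine Finset.sum_congr rfl fun k _ => ?_
    rw [sp_lt τ (show (k : ℕ) < N + 1 + 1 by omega), sp_lt τ (show (k : ℕ) + 1 < N + 1 + 1 by omega)]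
    rfl
  · refine Finset.sum_congr rfl fun k _ => ?_
    rw [FL_flip (k + 1) (by omega)]
    rfl

/-- Restricted to configurations with both end spins `+`, the Hamiltonian `HH` is `Hop`. -/
lemma HH_ex {N : ℕ} (ψ : Conf (N + 1) → ℝ) (σ : Row N) :
    HH N ψ (ex σ) = Hop (fun σ => ψ (ex σ)) σ := by
  rw [HH_apply', Hop]
  simp only [ex_flip]

/-- The Hamiltonian commutes with the global spin flip. -/
lemma HH_not {N : ℕ} (ψ : Conf (N + 1) → ℝ) (τ : Conf (N + 1)) :
    HH N ψ (fun i => !τ i) = HH N (fun τ => ψ (fun i => !τ i)) τ := by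
  rw [HH_apply', HH_apply']
  congr 1
  · congr 1
    refine Finset.sum_congr rfl fun k _ => ?_
    rw [zz_not, zz_not]; ring
  · refine Finset.sum_congr rfl fun k _ => ?_
    congr 1
    funext i
    by_cases hi : i = k.castSucc.succ
    · subst hi; simp [flip]
    · simp [flip, Function.update_of_ne hi]

/-- The inner sites of a configuration. -/
def mid {N : ℕ} (τ : Conf (N + 1)) : Row N := fun k => τ k.castSucc.succ

lemma mid_ex {N : ℕ} (σ : Row N) : mid (ex σ) = σ := funext fun k => ex_mid σ k

lemma ex_mid_eq {N : ℕ} {τ : Conf (N + 1)} (h0 : τ 0 = true) (h1 : τ (Fin.last (N + 1)) = true) :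
    ex (mid τ) = τ := by
  funext i
  rcases fin_cases3 i with rfl | rfl | ⟨j, rfl⟩
  · simp [h0]
  · simp [h1]
  · simp [mid]

/-- Extension of a function of the inner sites to a function supported by the configurations
with both end spins up. -/
def emb {N : ℕ} (w : Row N → ℝ) (τ : Conf (N + 1)) : ℝ :=
  if τ 0 = true ∧ τ (Fin.last (N + 1)) = true then w (mid τ) else 0

lemma emb_ex {N : ℕ} (w : Row N → ℝ) (σ : Row N) : emb w (ex σ) = w σ := by
  simp [emb, mid_ex]

lemma emb_eig {N : ℕ} {E : ℝ} {w : Row N → ℝ} (h : Hop w = E • w) :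
    HH N (emb w) = E • emb w := by
  funext τ
  by_cases hτ : τ 0 = true ∧ τ (Fin.last (N + 1)) = true
  · obtain ⟨σ, rfl⟩ : ∃ σ, τ = ex σ := ⟨mid τ, (ex_mid_eq hτ.1 hτ.2).symm⟩
    rw [HH_ex, Pi.smul_apply, emb_ex]
    simp only [emb_ex]
    exact congrFun h σ
  · rw [HH_apply', Pi.smul_apply, emb, if_neg hτ, mul_zero, smul_zero, zero_add]
    refine Finset.sum_eq_zero fun k _ => ?_
    rw [emb, if_neg]
    have h1 : (0 : Fin (N + 2)) ≠ k.castSucc.succ := (Fin.succ_ne_zero _).symm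
    have h2 : (Fin.last (N + 1)) ≠ k.castSucc.succ := by
      rw [Fin.succ_castSucc]; exact (Fin.castSucc_lt_last _).ne'
    simpa only [flip, Function.update_of_ne h1, Function.update_of_ne h2] using hτ

lemma sum_emb {N : ℕ} (w : Row N → ℝ) (f : Conf (N + 1) → ℝ) :
    ∑ τ, f τ * (emb w τ * emb w τ) = ∑ σ, f (ex σ) * (w σ * w σ) := by
  symm
  refine Fintype.sum_of_injective ex (fun σ σ' h => ?_) _ _ (fun τ hτ => ?_) (fun σ => ?_)
  · rw [← mid_ex σ, h, mid_ex]
  · rw [emb, if_neg]; · ring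
    exact fun h => hτ ⟨mid τ, ex_mid_eq h.1 h.2⟩
  · rw [emb_ex]

/-- If the determinant of full size is positive, the ground state of the chain with both end spins
up exists in the sector, and all the one-point functions in every top eigenvector of this sector
are given by determinants. -/
lemma ground {N : ℕ} (hD : 0 < Dd (N + 1) (N + 1)) :
    ∃ (v : Row N → ℝ) (E : ℝ), (∀ σ, 0 ≤ v σ) ∧ v ≠ 0 ∧ Hop v = E • v ∧
      ∀ w : Row N → ℝ, Hop w = E • w → ∀ k₀ : Fin N,
        ∑ σ, zz (σ k₀) * (w σ * w σ) = Dd (N + 1) (k₀ + 1) * ∑ σ, w σ * w σ := by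
  obtain ⟨E, ψ₀, h0, he, hE⟩ := exists_top N
  -- the absolute value of a maximizer is again a maximizer
  set ψ : Conf (N + 1) → ℝ := fun τ => |ψ₀ τ| with hψ
  have hn : ip ψ ψ = ip ψ₀ ψ₀ := Finset.sum_congr rfl fun τ _ => abs_mul_abs_self _
  have hpos : 0 < ip ψ ψ := by rw [hn]; exact ip_self_pos h0
  have heig : HH N ψ = E • ψ := by
    refine eig_of_top hE (le_antisymm (hE ψ) ?_)
    rw [hn, ← he, ip, ip]
    refine Finset.sum_le_sum fun τ _ => ?_
    rw [HH_apply', HH_apply', mul_add, mul_add]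
    have e : |ψ₀ τ| * |ψ₀ τ| = ψ₀ τ * ψ₀ τ := abs_mul_abs_self _
    refine add_le_add (le_of_eq ?_) ?_
    · simp only [hψ]
      linear_combination (-(∑ k : Fin (N + 1), zz (τ k.castSucc) * zz (τ k.succ))) * e
    · rw [Finset.mul_sum, Finset.mul_sum]
      refine Finset.sum_le_sum fun k _ => ?_
      rw [hψ]; simp only; rw [← abs_mul]; exact le_abs_self _
  have hex : ∃ τ, ψ τ ≠ 0 ∧ τ 0 = τ (Fin.last (N + 1)) := by
    by_contra hcon
    push Not at hcon
    have h1 := corr hE heig le_rfl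
    have h2 : ∑ τ, sp τ 0 * sp τ (N + 1) * (ψ τ * ψ τ) = -ip ψ ψ := by
      rw [ip, ← Finset.sum_neg_distrib]
      refine Finset.sum_congr rfl fun τ _ => ?_
      by_cases hτ : ψ τ = 0
      · simp [hτ]
      · have h3 := hcon τ hτ
        rw [sp_lt τ (show 0 < N + 1 + 1 by omega), sp_lt τ (show N + 1 < N + 1 + 1 by omega)]
        have : zz (τ ⟨0, by omega⟩) * zz (τ ⟨N + 1, by omega⟩) = -1 := by
          change zz (τ 0) * zz (τ (Fin.last (N + 1))) = -1
          revert h3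
          cases τ 0 <;> cases τ (Fin.last (N + 1)) <;> simp [zz]
        rw [this]; ring
    rw [h2] at h1
    nlinarith [mul_pos hD hpos]
  have hall : ∀ w : Row N → ℝ, Hop w = E • w → ∀ k₀ : Fin N,
        ∑ σ, zz (σ k₀) * (w σ * w σ) = Dd (N + 1) (k₀ + 1) * ∑ σ, w σ * w σ := by
    intro w hw k₀
    have h1 := corr hE (emb_eig hw) (show (k₀ : ℕ) + 1 ≤ N + 1 by omega)
    have h2 := sum_emb w fun _ => 1
    simp only [one_mul] at h2
    rw [sum_emb w fun τ => sp τ 0 * sp τ (k₀ + 1), ip, h2] at h1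
    rw [← h1]
    refine Finset.sum_congr rfl fun σ _ => ?_
    rw [sp_lt (ex σ) (show 0 < N + 1 + 1 by omega),
      sp_lt (ex σ) (show (k₀ : ℕ) + 1 < N + 1 + 1 by omega)]
    have e1 : ex σ ⟨0, by omega⟩ = true := ex_zero σ
    have e2 : ex σ ⟨(k₀ : ℕ) + 1, by omega⟩ = σ k₀ := ex_mid σ k₀
    rw [e1, e2]; simp [zz]
  obtain ⟨τ, hτ, hends⟩ := hex
  by_cases hb : τ 0 = true
  · refine ⟨fun σ => ψ (ex σ), E, fun σ => abs_nonneg _, fun h => hτ ?_, ?_, hall⟩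
    · have := congrFun h (mid τ)
      simp only [ex_mid_eq hb (hends ▸ hb)] at this
      exact this
    · funext σ
      rw [← HH_ex, heig]; rfl
  · have hb' : (!τ 0) = true := by simpa using hb
    refine ⟨fun σ => ψ (fun i => !ex σ i), E, fun σ => abs_nonneg _, fun h => hτ ?_, ?_, hall⟩
    · have := congrFun h (mid fun i => !τ i)
      simp only [ex_mid_eq (τ := fun i => !τ i) hb' (hends ▸ hb')] at this
      simpa using this
    · funext σ
      have := HH_ex (fun τ => ψ (fun i => !τ i)) σ
      rw [← this, ← HH_not, heig]; rfl

/-! ### Evaluation of the Cauchy determinant -/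

/-- Elimination of the last row and column of a Cauchy determinant. -/
lemma cauchy_step (f g X Y : ℕ → ℝ) (p : ℕ) (hne : ∀ r ≤ p, ∀ s ≤ p, Y s - X r ≠ 0)
    (hf : f p ≠ 0) (hg : g p ≠ 0) :
    (Matrix.of fun r s : Fin (p + 1) => f r * g s / (Y s - X r)).det =
      f p * g p / (Y p - X p) *
        (∏ k ∈ Finset.range p, (Y p - Y k) * (X k - X p) / ((Y p - X k) * (Y k - X p))) *
        (Matrix.of fun r s : Fin p => f r * g s / (Y s - X r)).det := by
  set M : Matrix (Fin (p + 1)) (Fin (p + 1)) ℝ := Matrix.of fun r s => f r * g s / (Y s - X r)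
    with hM
  -- eliminate the last column with the last row
  set A : Matrix (Fin (p + 1)) (Fin (p + 1)) ℝ := Matrix.of fun r s =>
    if (r : ℕ) = p then M r s else
      M r s * ((Y p - Y s) * (X r - X p) / ((Y p - X r) * (Y s - X p))) with hA
  have hdet : A.det = M.det := by
    refine Matrix.det_eq_of_forall_row_eq_smul_add_const
      (fun r : Fin (p + 1) => if (r : ℕ) = p then 0 else -(f r / f p * ((Y p - X p) / (Y p - X r))))
      (Fin.last p) (by simp) (fun r s => ?_)
    have hs : (s : ℕ) ≤ p := by omega
    have hr : (r : ℕ) ≤ p := by omega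
    have h1 := hne r hr s hs
    have h2 := hne r hr p le_rfl
    have h3 := hne p le_rfl s hs
    simp only [hA, hM, Matrix.of_apply, Fin.val_last]
    split_ifs with h
    · simp
    · field_simp
      ring
  have hcol : ∀ k : Fin p, A k.castSucc (Fin.last p) = 0 := by
    intro k
    have : ((k.castSucc : Fin (p + 1)) : ℕ) ≠ p := by simpa using k.2.ne
    simp only [hA, Matrix.of_apply, if_neg this, Fin.val_last, sub_self, zero_mul, zero_div, mul_zero]
  rw [← hdet, Matrix.det_succ_column A (Fin.last p), Fin.sum_univ_castSucc]
  simp only [hcol, mul_zero, zero_mul, Finset.sum_const_zero, zero_add, Fin.succAbove_last]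
  have e1 : ((-1 : ℝ)) ^ (((Fin.last p : Fin (p + 1)) : ℕ) + ((Fin.last p : Fin (p + 1)) : ℕ)) = 1 := by
    rw [← two_mul, pow_mul]; norm_num
  have e2 : A (Fin.last p) (Fin.last p) = f p * g p / (Y p - X p) := by simp [hA, hM]
  rw [e1, e2, one_mul, mul_assoc]
  congr 1
  have e3 : A.submatrix Fin.castSucc Fin.castSucc = Matrix.of fun r s : Fin p =>
      (X r - X p) / (Y p - X r) * (((Y p - Y s) / (Y s - X p)) *
        (Matrix.of (fun r s : Fin p => f r * g s / (Y s - X r)) r s)) := by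
    ext r s
    have : (r : ℕ) ≠ p := r.2.ne
    have h1 := hne r r.2.le s s.2.le
    have h2 := hne r r.2.le p le_rfl
    have h3 := hne p le_rfl s s.2.le
    simp only [hA, hM, Matrix.submatrix_apply, Matrix.of_apply, Fin.val_castSucc, this, if_false]
    field_simp
  rw [e3]
  have e4 := Matrix.det_mul_column (fun r : Fin p => (X r - X p) / (Y p - X r))
    (Matrix.of fun r s : Fin p => ((Y p - Y s) / (Y s - X p)) *
        (Matrix.of (fun r s : Fin p => f r * g s / (Y s - X r)) r s))
  have e5 := Matrix.det_mul_row (fun s : Fin p => (Y p - Y s) / (Y s - X p))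
    (Matrix.of (fun r s : Fin p => f r * g s / (Y s - X r)))
  simp only [Matrix.of_apply] at e4 e5 ⊢
  rw [e4, e5, ← mul_assoc, ← Finset.prod_mul_distrib, Finset.prod_range]
  congr 1
  refine Finset.prod_congr rfl fun k _ => ?_
  have h2 := hne k k.2.le p le_rfl
  have h3 := hne p le_rfl k k.2.le
  field_simp

/-- The sine of a multiple of the basic angle. -/
def sn (n : ℕ) (x : ℝ) : ℝ := Real.sin (al n * x)

lemma sn_pos {n : ℕ} {x : ℝ} (h0 : 0 < x) (h : x < 2 * (2 * n + 1)) : 0 < sn n x :=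
  sin_al_pos h0 h

lemma sn_sq_sub (n : ℕ) (x y : ℝ) : sn n x ^ 2 - sn n y ^ 2 = sn n (x - y) * sn n (x + y) := by
  simp only [sn, mul_sub, mul_add, Real.sin_sub, Real.sin_add]
  linear_combination Real.sin (al n * y) ^ 2 * Real.sin_sq_add_cos_sq (al n * x) -
    Real.sin (al n * x) ^ 2 * Real.sin_sq_add_cos_sq (al n * y)

/-- The matrix `Om` is of Cauchy type in the variables `sn n _ ^ 2`. -/
lemma Om_eq {n l i : ℕ} (hl : l < n) (hi : i < n) :
    Om n l i = (2 / (2 * n + 1) * Real.cos (al n * (2 * l + 1))) * sn n (2 * i + 2) /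
      (sn n (2 * i + 2) ^ 2 - sn n (2 * l + 1) ^ 2) := by
  have hi' : (i : ℝ) + 1 ≤ n := by exact_mod_cast hi
  have hl' : (l : ℝ) + 1 ≤ n := by exact_mod_cast hl
  have hi0 : (0 : ℝ) ≤ i := Nat.cast_nonneg _
  have hl0 : (0 : ℝ) ≤ l := Nat.cast_nonneg _
  have h1 : Real.sin (al n * (2 * i - 2 * l + 1)) ≠ 0 := by
    refine sin_ne ?_ ?_
    · have : (2 * (i : ℤ) - 2 * l + 1) ≠ 0 := by omega
      exact_mod_cast this
    · rw [abs_lt]; constructor <;> linarith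
  have h2 : Real.sin (al n * (2 * i + 2 * l + 3)) ≠ 0 := by
    refine sin_ne (by positivity) ?_
    rw [abs_of_nonneg (by positivity)]; linarith
  rw [sn_sq_sub, show (2 * (i : ℝ) + 2 - (2 * l + 1)) = 2 * i - 2 * l + 1 by ring,
    show (2 * (i : ℝ) + 2 + (2 * l + 1)) = 2 * i + 2 * l + 3 by ring, sn, sn, sn, Om]
  have key : Real.sin (al n * (2 * i + 2 * l + 3)) + Real.sin (al n * (2 * i - 2 * l + 1)) =
      2 * Real.cos (al n * (2 * l + 1)) * Real.sin (al n * (2 * i + 2)) := by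
    rw [show al n * (2 * (i : ℝ) + 2 * l + 3) = al n * (2 * i + 2) + al n * (2 * l + 1) by ring,
      show al n * (2 * (i : ℝ) - 2 * l + 1) = al n * (2 * i + 2) - al n * (2 * l + 1) by ring,
      Real.sin_add, Real.sin_sub]; ring
  generalize Real.sin (al n * (2 * i - 2 * l + 1)) = a at *
  generalize Real.sin (al n * (2 * i + 2 * l + 3)) = b at *
  generalize Real.sin (al n * (2 * i + 2)) = c at *
  generalize Real.cos (al n * (2 * l + 1)) = d at *
  have h3 : (2 * (n : ℝ) + 1) ≠ 0 := by positivity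
  field_simp
  linear_combination key

/-- The ratio of successive determinants. -/
def rh (n p : ℕ) : ℝ :=
  (2 / (2 * n + 1) * Real.cos (al n * (2 * p + 1))) * sn n (2 * p + 2) / (sn n 1 * sn n (4 * p + 3)) *
    ∏ k ∈ Finset.range p, sn n (2 * p - 2 * k) ^ 2 * (sn n (2 * p + 2 * k + 2) *
      sn n (2 * p + 2 * k + 4)) / ((sn n (2 * p - 2 * k + 1) * sn n (2 * p - 2 * k - 1)) *
        sn n (2 * p + 2 * k + 3) ^ 2)

lemma cos_al_pos {n p : ℕ} (hp : p < n) : 0 < Real.cos (al n * (2 * p + 1)) := by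
  have := al_mul n
  have := al_pos n
  have hp' : (p : ℝ) + 1 ≤ n := by exact_mod_cast hp
  refine Real.cos_pos_of_mem_Ioo ⟨?_, ?_⟩
  · have : 0 ≤ al n * (2 * p + 1) := by positivity
    linarith [Real.pi_pos]
  · nlinarith

/-- The determinants are products of the explicit ratios `rh`. -/
lemma Dd_succ {n p : ℕ} (hp : p < n) : Dd n (p + 1) = rh n p * Dd n p := by
  have hp' : (p : ℝ) + 1 ≤ n := by exact_mod_cast hp
  have hmat : ∀ j ≤ n, Dd n j = (Matrix.of fun r s : Fin j =>
      (fun l : ℕ => 2 / (2 * n + 1) * Real.cos (al n * (2 * l + 1))) r *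
        (fun i : ℕ => sn n (2 * i + 2)) s / ((fun i : ℕ => sn n (2 * i + 2) ^ 2) s -
          (fun l : ℕ => sn n (2 * l + 1) ^ 2) r)).det := by
    intro j hj
    rw [Dd]
    congr 1
    ext r s
    exact Om_eq (by omega) (by omega)
  rw [hmat _ hp, hmat p hp.le, cauchy_step (fun l : ℕ => 2 / (2 * n + 1) * Real.cos (al n * (2 * l + 1)))
    (fun i : ℕ => sn n (2 * i + 2)) (fun l : ℕ => sn n (2 * l + 1) ^ 2)
    (fun i : ℕ => sn n (2 * i + 2) ^ 2)]
  · congr 1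
    rw [rh]
    simp only [sn_sq_sub]
    congr 1
    · ring_nf
    · refine Finset.prod_congr rfl fun k _ => ?_
      have e1 : sn n (2 * (k : ℝ) + 1 - (2 * p + 1)) = -sn n (2 * p - 2 * k) := by
        rw [sn, sn, ← Real.sin_neg]; congr 1; ring
      have e2 : sn n (2 * (k : ℝ) + 2 - (2 * p + 1)) = -sn n (2 * p - 2 * k - 1) := by
        rw [sn, sn, ← Real.sin_neg]; congr 1; ring
      rw [e1, e2]
      rw [show 2 * (p : ℝ) + 2 - (2 * k + 2) = 2 * p - 2 * k by ring,
        show 2 * (p : ℝ) + 2 + (2 * k + 2) = 2 * p + 2 * k + 4 by ring,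
        show 2 * (k : ℝ) + 1 + (2 * p + 1) = 2 * p + 2 * k + 2 by ring,
        show 2 * (p : ℝ) + 2 - (2 * k + 1) = 2 * p - 2 * k + 1 by ring,
        show 2 * (p : ℝ) + 2 + (2 * k + 1) = 2 * p + 2 * k + 3 by ring,
        show 2 * (k : ℝ) + 2 + (2 * p + 1) = 2 * p + 2 * k + 3 by ring]
      rw [← neg_div_neg_eq]
      congr 1 <;> ring
  · intro r hr s hs
    have hr' : (r : ℝ) ≤ p := by exact_mod_cast hr
    have hs' : (s : ℝ) ≤ p := by exact_mod_cast hs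
    have hr0 : (0 : ℝ) ≤ r := Nat.cast_nonneg _
    have hs0 : (0 : ℝ) ≤ s := Nat.cast_nonneg _
    simp only [sn_sq_sub]
    refine mul_ne_zero (sin_ne ?_ ?_) (sin_ne (by positivity) ?_)
    · have : (2 * (s : ℤ) + 2 - (2 * r + 1)) ≠ 0 := by omega
      exact_mod_cast this
    · rw [abs_lt]; constructor <;> linarith
    · rw [abs_of_nonneg (by positivity)]; linarith
  · have := cos_al_pos hp
    positivity
  · have hp0 : (0 : ℝ) ≤ p := Nat.cast_nonneg _
    exact (sn_pos (by positivity) (by linarith)).ne'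

lemma rh_pos {n p : ℕ} (hp : p < n) : 0 < rh n p := by
  have hp' : (p : ℝ) + 1 ≤ n := by exact_mod_cast hp
  have hp0 : (0 : ℝ) ≤ p := Nat.cast_nonneg _
  have h1 := cos_al_pos hp
  have h2 : 0 < sn n (2 * p + 2) := sn_pos (by positivity) (by linarith)
  have h3 : 0 < sn n 1 := sn_pos (by positivity) (by linarith)
  have h4 : 0 < sn n (4 * p + 3) := sn_pos (by positivity) (by linarith)
  rw [rh]
  refine mul_pos (by positivity) (Finset.prod_pos fun k hk => ?_)
  have hk' : (k : ℝ) + 1 ≤ p := by exact_mod_cast Finset.mem_range.1 hk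
  have hk0 : (0 : ℝ) ≤ k := Nat.cast_nonneg _
  have g1 : 0 < sn n (2 * p - 2 * k) := sn_pos (by linarith) (by linarith)
  have g2 : 0 < sn n (2 * p + 2 * k + 2) := sn_pos (by linarith) (by linarith)
  have g3 : 0 < sn n (2 * p + 2 * k + 4) := sn_pos (by linarith) (by linarith)
  have g4 : 0 < sn n (2 * p - 2 * k + 1) := sn_pos (by linarith) (by linarith)
  have g5 : 0 < sn n (2 * p - 2 * k - 1) := sn_pos (by linarith) (by linarith)
  have g6 : 0 < sn n (2 * p + 2 * k + 3) := sn_pos (by linarith) (by linarith)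
  positivity

lemma Dd_pos {n j : ℕ} (hj : j ≤ n) : 0 < Dd n j := by
  induction j with
  | zero => simp [Dd]
  | succ p ih => rw [Dd_succ hj]; exact mul_pos (rh_pos hj) (ih (by omega))

/-! ### Asymptotics of the determinants -/

/-- A sharp upper bound for the partial Wallis products: the sequence
`W k * (4 k + 3) / (4 k + 2)` increases to `π / 2`. -/
lemma wallis_upper (k : ℕ) : Real.Wallis.W k ≤ Real.pi / 2 * ((4 * k + 2) / (4 * k + 3)) := by
  have hmono : Monotone fun k : ℕ => Real.Wallis.W k * ((4 * (k : ℝ) + 3) / (4 * k + 2)) := by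
    refine monotone_nat_of_le_succ fun k => ?_
    rw [Real.Wallis.W_succ, mul_assoc]
    refine mul_le_mul_of_nonneg_left ?_ (Real.Wallis.W_pos k).le
    push_cast
    rw [div_mul_div_comm, div_mul_div_comm, div_le_div_iff₀ (by positivity) (by positivity)]
    have hk : (0 : ℝ) ≤ k := Nat.cast_nonneg k
    have : 0 ≤ (4 * (k : ℝ) + 2) * (4 * k + 6) := by positivity
    nlinarith
  have hlim : Tendsto (fun k : ℕ => Real.Wallis.W k * ((4 * (k : ℝ) + 3) / (4 * k + 2))) atTop
      (nhds (Real.pi / 2 * 1)) := by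
    refine Real.Wallis.tendsto_W_nhds_pi_div_two.mul ?_
    have h1 : Tendsto (fun k : ℕ => 1 + (1 / ((k : ℝ) + 1)) * ((k + 1) / (4 * k + 2))) atTop
        (nhds (1 + 0)) := by
      refine tendsto_const_nhds.add ?_
      refine squeeze_zero (fun k => by positivity) (fun k => ?_)
        tendsto_one_div_add_atTop_nhds_zero_nat
      refine mul_le_of_le_one_right (by positivity) ?_
      rw [div_le_one (by positivity)]
      have hk : (0 : ℝ) ≤ k := Nat.cast_nonneg k
      linarith
    rw [add_zero] at h1
    refine h1.congr fun k => ?_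
    field_simp
    ring
  have h := hmono.ge_of_tendsto hlim k
  rw [mul_one] at h
  have h2 : Real.Wallis.W k =
      Real.Wallis.W k * ((4 * (k : ℝ) + 3) / (4 * k + 2)) * ((4 * k + 2) / (4 * k + 3)) := by
    field_simp
  rw [h2]
  exact mul_le_mul_of_nonneg_right h (by positivity)

lemma sin_lower {y : ℝ} (h0 : 0 < y) : y * (1 - y ^ 2 / 4) ≤ Real.sin y := by
  have h := Real.sin_gt_sub_cube h0
  have : 0 < y ^ 3 := by positivity
  linarith [show y * (1 - y ^ 2 / 4) = y - y ^ 3 / 4 by ring]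

lemma sin_nat_mul_le {x : ℝ} (h0 : 0 ≤ x) (h1 : x ≤ Real.pi) (m : ℕ) :
    |Real.sin (m * x)| ≤ m * Real.sin x := by
  have hs := Real.sin_nonneg_of_nonneg_of_le_pi h0 h1
  induction m with
  | zero => simp
  | succ m ih =>
    push_cast
    rw [add_mul, one_mul, Real.sin_add, add_mul, one_mul]
    refine (abs_add_le _ _).trans (add_le_add ?_ ?_)
    · rw [abs_mul]
      exact (mul_le_of_le_one_right (abs_nonneg _) (Real.abs_cos_le_one _)).trans ih
    · rw [abs_mul, abs_of_nonneg hs]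
      exact mul_le_of_le_one_left hs (Real.abs_cos_le_one _)

/-- The first factor of `rh` compared with its limit `4 / π` for a chain of infinite length. -/
lemma bound_a {n : ℕ} (hn : 1 ≤ n) :
    2 / (2 * n + 1) / sn n 1 ≤ 4 / Real.pi * Real.exp (al n ^ 2) := by
  have hα := al_pos n
  have hm := al_mul n
  have hn' : (1 : ℝ) ≤ n := by exact_mod_cast hn
  have hα1 : al n ≤ 0.6 := by nlinarith [Real.pi_lt_d2]
  have hs : 0 < sn n 1 := sn_pos (by positivity) (by linarith)
  have h1 : 2 / (2 * (n : ℝ) + 1) = 4 / Real.pi * al n := by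
    rw [al]; field_simp; norm_num
  rw [h1, mul_div_assoc]
  refine mul_le_mul_of_nonneg_left ?_ (by positivity)
  rw [div_le_iff₀ hs]
  have h2 : al n * (1 - al n ^ 2 / 4) ≤ sn n 1 := by
    rw [sn, mul_one]; exact sin_lower hα
  have h3 : 1 + al n ^ 2 ≤ Real.exp (al n ^ 2) := by
    linarith [Real.add_one_le_exp (al n ^ 2)]
  have h4 : (1 + al n ^ 2) * (al n * (1 - al n ^ 2 / 4)) ≤ Real.exp (al n ^ 2) * sn n 1 :=
    mul_le_mul h3 h2 (mul_nonneg hα.le (by nlinarith)) (Real.exp_pos _).le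
  refine le_trans ?_ h4
  have h5 : (1 + al n ^ 2) * (al n * (1 - al n ^ 2 / 4)) =
      al n + al n * (al n ^ 2 * (3 / 4 - al n ^ 2 / 4)) := by ring
  rw [h5]
  have : 0 ≤ al n * (al n ^ 2 * (3 / 4 - al n ^ 2 / 4)) :=
    mul_nonneg hα.le (mul_nonneg (sq_nonneg _) (by nlinarith))
  linarith

lemma al_small {h p : ℕ} (hp : p < h) : al (2 * h) * (2 * p + 2) ≤ 0.786 := by
  have hα := al_pos (2 * h)
  have hm := al_mul (2 * h)
  have hp' : (p : ℝ) + 1 ≤ h := by exact_mod_cast hp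
  push_cast at hm
  nlinarith [Real.pi_lt_d4]

/-- The second factor of `rh` compared with its limit for a chain of infinite length. -/
lemma bound_b {h p : ℕ} (hp : p < h) :
    Real.cos (al (2 * h) * (2 * p + 1)) * sn (2 * h) (2 * p + 2) / sn (2 * h) (4 * p + 3) ≤
      (2 * p + 2) / (4 * p + 3) * Real.exp (12 * (p + 1) * al (2 * h) ^ 2) := by
  have hα := al_pos (2 * h)
  have hy := al_small hp
  have hp' : (p : ℝ) + 1 ≤ h := by exact_mod_cast hp
  have hp0 : (0 : ℝ) ≤ p := Nat.cast_nonneg p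
  have hcos := cos_al_pos (n := 2 * h) (p := p) (by omega)
  have hs43 : 0 < sn (2 * h) (4 * p + 3) := sn_pos (by positivity) (by push_cast; linarith)
  set α := al (2 * h) with hαdef
  set y := α * (2 * p + 2) with hydef
  have hy0 : 0 < y := by positivity
  set P := Real.cos (α * (2 * p + 1)) * sn (2 * h) (2 * p + 2) with hP
  have hsum : sn (2 * h) (4 * p + 3) = 2 * P - Real.sin α := by
    have e1 : α * (4 * (p : ℝ) + 3) = α * (2 * p + 1) + y := by rw [hydef]; ring
    have e2 : α = y - α * (2 * p + 1) := by rw [hydef]; ring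
    have e3 : Real.sin α = Real.sin y * Real.cos (α * (2 * p + 1)) -
        Real.cos y * Real.sin (α * (2 * p + 1)) := by
      rw [← Real.sin_sub]; congr 1
    rw [hP, sn, sn, ← hαdef, e1, ← hydef, Real.sin_add, e3]; ring
  have hsin : Real.sin α ≤ α := Real.sin_le hα.le
  set w := 3 * y ^ 2 / 4 with hw
  have hw1 : w ≤ 0.47 := by nlinarith
  have hw0 : 0 ≤ w := by positivity
  have hPlow : y * (1 - w) ≤ P := by
    have h1 : y * (1 - y ^ 2 / 4) ≤ sn (2 * h) (2 * p + 2) := sin_lower hy0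
    have h2 : 1 - y ^ 2 / 2 ≤ Real.cos (α * (2 * p + 1)) := by
      have := Real.one_sub_sq_div_two_le_cos (x := α * (2 * p + 1))
      have h3 : (α * (2 * p + 1)) ^ 2 ≤ y ^ 2 := by
        rw [hydef]; gcongr; linarith
      linarith
    have h3 : (1 - y ^ 2 / 2) * (y * (1 - y ^ 2 / 4)) ≤ P :=
      mul_le_mul h2 h1 (mul_nonneg hy0.le (by nlinarith)) hcos.le
    refine le_trans ?_ h3
    have : (1 - y ^ 2 / 2) * (y * (1 - y ^ 2 / 4)) = y * (1 - w) + y * (y ^ 4 / 8) := by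
      rw [hw]; ring
    rw [this]
    have : 0 ≤ y * (y ^ 4 / 8) := by positivity
    linarith
  set E := Real.exp (12 * (p + 1) * α ^ 2) with hE
  have hE1 : 1 + 12 * (p + 1) * α ^ 2 ≤ E := by
    rw [hE]; linarith [Real.add_one_le_exp (12 * ((p : ℝ) + 1) * α ^ 2)]
  set j : ℝ := p + 1 with hj
  have hj1 : 1 ≤ j := by linarith
  have hyj : y = 2 * j * α := by rw [hydef, hj]; ring
  have hju : 4 * w ≤ j * (E - 1) := by
    have : 12 * j * α ^ 2 ≤ E - 1 := by linarith
    have h4 : j * (12 * j * α ^ 2) ≤ j * (E - 1) := mul_le_mul_of_nonneg_left this (by linarith)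
    have h5 : j * (12 * j * α ^ 2) = 4 * w := by rw [hw, hyj]; ring
    linarith
  have hu0 : 0 ≤ E - 1 := by
    have : 0 ≤ 12 * j * α ^ 2 := by positivity
    linarith
  have hmain : E ≤ (1 - w) * (4 * (j * (E - 1)) + 1) := by
    have h1 : E - 1 ≤ j * (E - 1) := le_mul_of_one_le_left hu0 hj1
    nlinarith
  rw [hsum] at hs43
  rw [hsum, div_mul_eq_mul_div, div_le_div_iff₀ hs43 (by positivity)]
  have e1 : 2 * (p : ℝ) + 2 = 2 * j := by rw [hj]; ring
  have e2 : 4 * (p : ℝ) + 3 = 4 * j - 1 := by rw [hj]; ring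
  rw [e1, e2]
  have h6 : E * y ≤ P * (4 * (j * (E - 1)) + 1) := by
    have h7 : 0 ≤ 4 * (j * (E - 1)) + 1 := by positivity
    calc E * y ≤ ((1 - w) * (4 * (j * (E - 1)) + 1)) * y := mul_le_mul_of_nonneg_right hmain hy0.le
      _ = (y * (1 - w)) * (4 * (j * (E - 1)) + 1) := by ring
      _ ≤ _ := mul_le_mul_of_nonneg_right hPlow h7
  have h8 : 2 * j * E * Real.sin α ≤ E * y := by
    have : 2 * j * E * Real.sin α ≤ 2 * j * E * α :=
      mul_le_mul_of_nonneg_left hsin (by positivity)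
    rw [hyj]; linarith
  nlinarith

/-- One factor of the product in `rh` compared with the corresponding factor of the Wallis
product. -/
lemma bound_c {h d : ℕ} (hd : d < h) :
    sn (2 * h) (2 * d + 2) ^ 2 / (sn (2 * h) (2 * d + 2 + 1) * sn (2 * h) (2 * d + 2 - 1)) ≤
      (2 * d + 2) / (2 * d + 1) * ((2 * d + 2) / (2 * d + 3)) * Real.exp (2 * al (2 * h) ^ 2) := by
  have hα := al_pos (2 * h)
  have hy := al_small hd
  have hd' : (d : ℝ) + 1 ≤ h := by exact_mod_cast hd
  have hd0 : (0 : ℝ) ≤ d := Nat.cast_nonneg d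
  have hα1 : al (2 * h) ≤ 0.4 := by nlinarith
  have hpos1 : 0 < sn (2 * h) (2 * d + 2 + 1) := sn_pos (by positivity) (by push_cast; linarith)
  have hpos2 : 0 < sn (2 * h) (2 * d + 2 - 1) := sn_pos (by linarith) (by push_cast; linarith)
  have hs : 0 < sn (2 * h) (2 * d + 2) := sn_pos (by linarith) (by push_cast; linarith)
  have hid := sn_sq_sub (2 * h) (2 * d + 2) 1
  rw [mul_comm (sn (2 * h) (2 * d + 2 - 1))] at hid
  have hs1 : sn (2 * h) 1 ≤ al (2 * h) := by rw [sn, mul_one]; exact Real.sin_le hα.le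
  have hs10 : 0 < sn (2 * h) 1 := sn_pos (by positivity) (by push_cast; linarith)
  have hlow : al (2 * h) * (2 * d + 2) * (1 - (al (2 * h) * (2 * d + 2)) ^ 2 / 4) ≤
    sn (2 * h) (2 * d + 2) := sin_lower (by positivity)
  have hpp := mul_pos hpos1 hpos2
  rw [← hid] at hpp ⊢
  generalize sn (2 * h) (2 * d + 2) = s at *
  generalize sn (2 * h) 1 = t at *
  generalize al (2 * h) = α at *
  set m : ℝ := 2 * d + 2 with hm
  have e1 : 2 * (d : ℝ) + 1 = m - 1 := by rw [hm]; ring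
  have e2 : 2 * (d : ℝ) + 3 = m + 1 := by rw [hm]; ring
  have hm2 : 2 ≤ m := by linarith
  rw [e1, e2]
  have hexp : 1 + 2 * α ^ 2 ≤ Real.exp (2 * α ^ 2) := by
    linarith [Real.add_one_le_exp (2 * α ^ 2)]
  -- the square of the ratio of sines
  have hr : m ^ 2 * t ^ 2 ≤ s ^ 2 * (1 + m ^ 2 * α ^ 2) := by
    set y := α * m with hy'
    have hy0 : 0 < y := by positivity
    have h1 : (y * (1 - y ^ 2 / 4)) ^ 2 ≤ s ^ 2 :=
      pow_le_pow_left₀ (mul_nonneg hy0.le (by nlinarith)) hlow 2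
    have h2 : m ^ 2 * t ^ 2 ≤ y ^ 2 := by
      rw [hy', mul_pow, mul_comm]
      exact mul_le_mul_of_nonneg_right (pow_le_pow_left₀ hs10.le hs1 2) (sq_nonneg _)
    have h3 : 1 + m ^ 2 * α ^ 2 = 1 + y ^ 2 := by rw [hy']; ring
    rw [h3]
    refine h2.trans (le_trans ?_ (mul_le_mul_of_nonneg_right h1 (by positivity)))
    have hz : y ^ 2 ≤ 0.7 := by nlinarith
    have h4 : 1 ≤ (1 - y ^ 2 / 4) ^ 2 * (1 + y ^ 2) := by
      have hz0 : 0 ≤ y ^ 2 := sq_nonneg y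
      generalize y ^ 2 = z at hz hz0 ⊢
      nlinarith [mul_nonneg hz0 hz0, mul_nonneg (mul_nonneg hz0 hz0) hz0]
    calc y ^ 2 = y ^ 2 * 1 := (mul_one _).symm
      _ ≤ y ^ 2 * ((1 - y ^ 2 / 4) ^ 2 * (1 + y ^ 2)) :=
        mul_le_mul_of_nonneg_left h4 (sq_nonneg _)
      _ = _ := by ring
  have hm1 : 0 < m - 1 := by linarith
  have e3 : m / (m - 1) * (m / (m + 1)) = m ^ 2 / (m ^ 2 - 1) := by
    rw [div_mul_div_comm]; congr 1 <;> ring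
  have hmm : 0 < m ^ 2 - 1 := by nlinarith
  rw [e3]
  refine le_trans ?_ (mul_le_mul_of_nonneg_left hexp (by positivity))
  rw [div_mul_eq_mul_div, div_le_div_iff₀ hpp hmm]
  have h5 : s ^ 2 * (m ^ 2 - 1 - m ^ 2 * α ^ 2) ≤ m ^ 2 * (s ^ 2 - t ^ 2) := by linarith
  have h6 : (1 + 2 * α ^ 2) * (s ^ 2 * (m ^ 2 - 1 - m ^ 2 * α ^ 2)) ≤
      m ^ 2 * (1 + 2 * α ^ 2) * (s ^ 2 - t ^ 2) := by
    have : 0 ≤ 1 + 2 * α ^ 2 := by positivity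
    linarith [mul_le_mul_of_nonneg_left h5 this]
  refine le_trans ?_ h6
  have h7 : m ^ 2 - 1 ≤ (1 + 2 * α ^ 2) * (m ^ 2 - 1 - m ^ 2 * α ^ 2) := by
    have ha : α ^ 2 ≤ 0.16 := by nlinarith
    have ha0 : 0 ≤ α ^ 2 := sq_nonneg α
    generalize α ^ 2 = a at ha ha0 ⊢
    have : (1 + 2 * a) * (m ^ 2 - 1 - m ^ 2 * a) - (m ^ 2 - 1) =
        a * (m ^ 2 * (1 - 2 * a) - 2) := by ring
    have h9 : 4 * (1 - 2 * a) ≤ m ^ 2 * (1 - 2 * a) :=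
      mul_le_mul_of_nonneg_right (by nlinarith) (by linarith)
    have h8 : 0 ≤ m ^ 2 * (1 - 2 * a) - 2 := by linarith
    linarith [mul_nonneg ha0 h8]
  linarith [mul_le_mul_of_nonneg_left h7 (sq_nonneg s)]

/-- The remaining factors of the product in `rh`, which are smaller than one and produce the
exponent `1 / 8` of the decay. -/
lemma bound_d {n m : ℕ} (h1 : 1 ≤ m) (hm : m < 2 * (2 * n + 1)) :
    sn n (m - 1) * sn n (m + 1) / sn n m ^ 2 ≤ Real.exp (-(1 / (m : ℝ) ^ 2)) := by
  have hm0 : (0 : ℝ) < m := by exact_mod_cast h1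
  have hs : 0 < sn n m := sn_pos hm0 (by exact_mod_cast hm)
  have hle : sn n m ≤ m * sn n 1 := by
    have hα := al_pos n
    have hmul := al_mul n
    have := sin_nat_mul_le hα.le (by
      have : (0 : ℝ) ≤ n := Nat.cast_nonneg n
      nlinarith [Real.pi_pos]) m
    rw [sn, sn, mul_one, mul_comm]
    exact (le_abs_self _).trans this
  rw [← sn_sq_sub, sub_div, div_self (by positivity)]
  have h2 : 1 / (m : ℝ) ^ 2 ≤ sn n 1 ^ 2 / sn n m ^ 2 := by
    rw [div_le_div_iff₀ (by positivity) (by positivity), one_mul, ← mul_pow, mul_comm]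
    exact pow_le_pow_left₀ hs.le hle 2
  linarith [Real.add_one_le_exp (-(1 / (m : ℝ) ^ 2))]

lemma sum_inv_sq (p q : ℕ) : 1 / 2 * (1 / (2 * (p : ℝ) + 3) - 1 / (2 * p + 2 * q + 3)) ≤
    ∑ k ∈ Finset.range q, 1 / (2 * (p : ℝ) + 2 * k + 3) ^ 2 := by
  induction q with
  | zero => simp
  | succ q ih =>
    rw [Finset.sum_range_succ]
    push_cast
    have h : 1 / 2 * (1 / (2 * (p : ℝ) + 2 * q + 3) - 1 / (2 * p + 2 * (q + 1) + 3)) ≤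
        1 / (2 * (p : ℝ) + 2 * q + 3) ^ 2 := by
      have e : 2 * (p : ℝ) + 2 * (q + 1) + 3 = (2 * p + 2 * q + 3) + 2 := by ring
      rw [e]
      have hm : 0 < 2 * (p : ℝ) + 2 * q + 3 := by positivity
      generalize 2 * (p : ℝ) + 2 * q + 3 = m at *
      rw [div_sub_div _ _ hm.ne' (by positivity), ← mul_div_assoc,
        div_le_div_iff₀ (by positivity) (by positivity)]
      nlinarith [pow_pos hm 2]
    linarith

/-- The decay of the ratios of the determinants. The last bracket telescopes in the product over
`p`, and the first term contributes a bounded factor as long as `p < h`. -/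
lemma rh_le {h p : ℕ} (hp : p < h) : rh (2 * h) p ≤ Real.exp (15 * (p + 1) * al (2 * h) ^ 2 -
    1 / (8 * (p + 1)) + (1 / (p + 1) - 1 / (p + 2))) := by
  have hp' : (p : ℝ) + 1 ≤ h := by exact_mod_cast hp
  have hp0 : (0 : ℝ) ≤ p := Nat.cast_nonneg p
  have hs1 : 0 < sn (2 * h) 1 := sn_pos (by positivity) (by push_cast; linarith)
  have hs43 : 0 < sn (2 * h) (4 * p + 3) := sn_pos (by positivity) (by push_cast; linarith)
  have hs2 : 0 < sn (2 * h) (2 * p + 2) := sn_pos (by positivity) (by push_cast; linarith)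
  have hcos := cos_al_pos (n := 2 * h) (p := p) (by omega)
  have hA := bound_a (n := 2 * h) (by omega)
  have hB := bound_b hp
  have hC : ∏ k ∈ Finset.range p, sn (2 * h) (2 * p - 2 * k) ^ 2 / (sn (2 * h) (2 * p - 2 * k + 1) *
      sn (2 * h) (2 * p - 2 * k - 1)) ≤
      Real.pi / 2 * ((4 * p + 2) / (4 * p + 3)) * Real.exp (2 * p * al (2 * h) ^ 2) := by
    have hrefl := Finset.prod_range_reflect (fun d : ℕ => sn (2 * h) (2 * d + 2) ^ 2 /
      (sn (2 * h) (2 * d + 2 + 1) * sn (2 * h) (2 * d + 2 - 1))) p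
    have e : ∏ k ∈ Finset.range p, sn (2 * h) (2 * p - 2 * k) ^ 2 / (sn (2 * h) (2 * p - 2 * k + 1) *
        sn (2 * h) (2 * p - 2 * k - 1)) = ∏ d ∈ Finset.range p, sn (2 * h) (2 * d + 2) ^ 2 /
      (sn (2 * h) (2 * d + 2 + 1) * sn (2 * h) (2 * d + 2 - 1)) := by
      rw [← hrefl]
      refine Finset.prod_congr rfl fun k hk => ?_
      have : (2 * ((p - 1 - k : ℕ) : ℝ) + 2) = 2 * p - 2 * k := by
        have hk' := Finset.mem_range.1 hk
        rw [Nat.cast_sub (by omega), Nat.cast_sub (by omega)]; push_cast; ring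
      rw [this]
    rw [e]
    have h1 : ∏ d ∈ Finset.range p, sn (2 * h) (2 * d + 2) ^ 2 /
      (sn (2 * h) (2 * d + 2 + 1) * sn (2 * h) (2 * d + 2 - 1)) ≤
        ∏ d ∈ Finset.range p, ((2 * (d : ℝ) + 2) / (2 * d + 1) * ((2 * d + 2) / (2 * d + 3)) *
          Real.exp (2 * al (2 * h) ^ 2)) := by
      refine Finset.prod_le_prod (fun d hd => ?_) fun d hd => ?_
      · have hd' : (d : ℝ) + 1 ≤ p := by exact_mod_cast Finset.mem_range.1 hd
        have hd0 : (0 : ℝ) ≤ d := Nat.cast_nonneg d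
        have g1 : 0 < sn (2 * h) (2 * d + 2 + 1) := sn_pos (by positivity) (by push_cast; linarith)
        have g2 : 0 < sn (2 * h) (2 * d + 2 - 1) := sn_pos (by linarith) (by push_cast; linarith)
        positivity
      · exact bound_c ((Finset.mem_range.1 hd).trans hp)
    refine h1.trans ?_
    rw [Finset.prod_mul_distrib, Finset.prod_const, Finset.card_range, ← Real.exp_nat_mul]
    have e2 : (p : ℝ) * (2 * al (2 * h) ^ 2) = 2 * p * al (2 * h) ^ 2 := by ring
    rw [e2]
    exact mul_le_mul_of_nonneg_right (wallis_upper p) (Real.exp_pos _).le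
  have hD : ∏ k ∈ Finset.range p, (sn (2 * h) (2 * p + 2 * k + 2) * sn (2 * h) (2 * p + 2 * k + 4) /
      sn (2 * h) (2 * p + 2 * k + 3) ^ 2) ≤
      Real.exp (-(1 / 2 * (1 / (2 * (p : ℝ) + 3) - 1 / (4 * p + 3)))) := by
    have h1 : ∏ k ∈ Finset.range p, (sn (2 * h) (2 * p + 2 * k + 2) *
        sn (2 * h) (2 * p + 2 * k + 4) / sn (2 * h) (2 * p + 2 * k + 3) ^ 2) ≤
        ∏ k ∈ Finset.range p, Real.exp (-(1 / (2 * (p : ℝ) + 2 * k + 3) ^ 2)) := by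
      refine Finset.prod_le_prod (fun k hk => ?_) fun k hk => ?_
      · have hk' : (k : ℝ) + 1 ≤ p := by exact_mod_cast Finset.mem_range.1 hk
        have hk0 : (0 : ℝ) ≤ k := Nat.cast_nonneg k
        have g1 : 0 < sn (2 * h) (2 * p + 2 * k + 2) := sn_pos (by linarith) (by push_cast; linarith)
        have g2 : 0 < sn (2 * h) (2 * p + 2 * k + 4) := sn_pos (by linarith) (by push_cast; linarith)
        positivity
      · have hk' := Finset.mem_range.1 hk
        have := bound_d (n := 2 * h) (m := 2 * p + 2 * k + 3) (by omega) (by omega)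
        push_cast at this
        rw [show 2 * (p : ℝ) + 2 * k + 3 - 1 = 2 * p + 2 * k + 2 by ring,
          show 2 * (p : ℝ) + 2 * k + 3 + 1 = 2 * p + 2 * k + 4 by ring] at this
        exact this
    refine h1.trans ?_
    rw [← Real.exp_sum, Real.exp_le_exp, Finset.sum_neg_distrib]
    have := sum_inv_sq p p
    rw [show 2 * (p : ℝ) + 2 * p + 3 = 4 * p + 3 by ring] at this
    linarith
  have hsplit : rh (2 * h) p = (2 / (2 * ((2 * h : ℕ) : ℝ) + 1) / sn (2 * h) 1) *
      (Real.cos (al (2 * h) * (2 * p + 1)) * sn (2 * h) (2 * p + 2) / sn (2 * h) (4 * p + 3)) *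
      (∏ k ∈ Finset.range p, sn (2 * h) (2 * p - 2 * k) ^ 2 / (sn (2 * h) (2 * p - 2 * k + 1) *
      sn (2 * h) (2 * p - 2 * k - 1))) *
      ∏ k ∈ Finset.range p, (sn (2 * h) (2 * p + 2 * k + 2) * sn (2 * h) (2 * p + 2 * k + 4) /
      sn (2 * h) (2 * p + 2 * k + 3) ^ 2) := by
    rw [rh, mul_assoc (_ * _) (∏ k ∈ _, _), ← Finset.prod_mul_distrib]
    congr 1
    · rw [div_mul_div_comm]; ring
    · exact Finset.prod_congr rfl fun k _ => (div_mul_div_comm _ _ _ _).symm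
  have nA : 0 ≤ 2 / (2 * ((2 * h : ℕ) : ℝ) + 1) / sn (2 * h) 1 := by positivity
  have nB : 0 ≤ Real.cos (al (2 * h) * (2 * p + 1)) * sn (2 * h) (2 * p + 2) /
    sn (2 * h) (4 * p + 3) := by positivity
  have nC : 0 ≤ ∏ k ∈ Finset.range p, sn (2 * h) (2 * p - 2 * k) ^ 2 /
      (sn (2 * h) (2 * p - 2 * k + 1) * sn (2 * h) (2 * p - 2 * k - 1)) := by
    refine Finset.prod_nonneg fun k hk => ?_
    have hk' : (k : ℝ) + 1 ≤ p := by exact_mod_cast Finset.mem_range.1 hk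
    have hk0 : (0 : ℝ) ≤ k := Nat.cast_nonneg k
    have g1 : 0 < sn (2 * h) (2 * p - 2 * k + 1) := sn_pos (by linarith) (by push_cast; linarith)
    have g2 : 0 < sn (2 * h) (2 * p - 2 * k - 1) := sn_pos (by linarith) (by push_cast; linarith)
    positivity
  have nD : 0 ≤ ∏ k ∈ Finset.range p, (sn (2 * h) (2 * p + 2 * k + 2) *
      sn (2 * h) (2 * p + 2 * k + 4) / sn (2 * h) (2 * p + 2 * k + 3) ^ 2) := by
    refine Finset.prod_nonneg fun k hk => ?_
    have hk' : (k : ℝ) + 1 ≤ p := by exact_mod_cast Finset.mem_range.1 hk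
    have hk0 : (0 : ℝ) ≤ k := Nat.cast_nonneg k
    have g1 : 0 < sn (2 * h) (2 * p + 2 * k + 2) := sn_pos (by linarith) (by push_cast; linarith)
    have g2 : 0 < sn (2 * h) (2 * p + 2 * k + 4) := sn_pos (by linarith) (by push_cast; linarith)
    positivity
  rw [hsplit]
  have h1 := mul_le_mul hA hB nB (by positivity)
  have h2 := mul_le_mul h1 hC nC (by positivity)
  have h3 := mul_le_mul h2 hD nD (by positivity)
  refine h3.trans ?_
  set u : ℝ := 4 * p + 3 with hu
  -- the numerical prefactors multiply to at most one
  have hone : 4 / Real.pi * ((2 * p + 2) / u) * (Real.pi / 2 * ((4 * p + 2) / u)) ≤ 1 := by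
    have hu0 : 0 < u := by positivity
    have : 4 / Real.pi * ((2 * p + 2) / u) * (Real.pi / 2 * ((4 * p + 2) / u)) =
        (2 * ((2 * p + 2) * (4 * p + 2))) / (u * u) := by
      have := Real.pi_ne_zero
      field_simp
      norm_num
    rw [this, div_le_one (by positivity), hu]
    nlinarith
  calc _ = (4 / Real.pi * ((2 * p + 2) / u) * (Real.pi / 2 * ((4 * p + 2) / u))) *
        Real.exp (al (2 * h) ^ 2 + 12 * (p + 1) * al (2 * h) ^ 2 + 2 * p * al (2 * h) ^ 2 +
          -(1 / 2 * (1 / (2 * (p : ℝ) + 3) - 1 / u))) := by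
        simp only [Real.exp_add]; ring
    _ ≤ 1 * Real.exp (al (2 * h) ^ 2 + 12 * (p + 1) * al (2 * h) ^ 2 + 2 * p * al (2 * h) ^ 2 +
          -(1 / 2 * (1 / (2 * (p : ℝ) + 3) - 1 / u))) :=
        mul_le_mul_of_nonneg_right hone (Real.exp_pos _).le
    _ ≤ _ := by
        rw [one_mul, Real.exp_le_exp]
        have h4 : -(1 / 2 * (1 / (2 * (p : ℝ) + 3) - 1 / u)) ≤
            -(1 / (8 * (p + 1))) + (1 / (p + 1) - 1 / (p + 2)) := by
          have e : -(1 / (8 * ((p : ℝ) + 1))) + (1 / (p + 1) - 1 / (p + 2)) -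
              -(1 / 2 * (1 / (2 * (p : ℝ) + 3) - 1 / u)) =
              (8 * ((2 * p + 3) * u) - (10 * p + 9) * (p + 2)) /
                (8 * (p + 1) * (p + 2) * ((2 * p + 3) * u)) := by
            rw [hu]; field_simp; ring
          have : 0 ≤ (8 * ((2 * p + 3) * u) - (10 * p + 9) * (p + 2)) /
                (8 * (p + 1) * (p + 2) * ((2 * p + 3) * u)) := by
            refine div_nonneg ?_ (by positivity)
            rw [hu]; nlinarith
          linarith
        have h5 : 0 ≤ al (2 * h) ^ 2 := sq_nonneg _
        nlinarith

/-- The magnetization of the ground state of the chain of `2 h` sites decays like `h ^ (-1/8)`. -/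
lemma Dd_le {h : ℕ} (hh : 1 ≤ h) :
    Dd (2 * h) h ≤ Real.exp 4 * Real.exp (-(Real.log (h + 1) / 8)) := by
  have key : ∀ j ≤ h, Dd (2 * h) j ≤ Real.exp (-(Real.log (j + 1) / 8) + (1 - 1 / (j + 1)) +
      15 * j ^ 2 * al (2 * h) ^ 2) := by
    intro j hj
    induction j with
    | zero => simp [Dd]
    | succ p ih =>
      rw [Dd_succ (by omega)]
      have h1 := mul_le_mul (rh_le hj) (ih (by omega)) (Dd_pos (by omega)).le (Real.exp_pos _).le
      refine h1.trans ?_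
      rw [← Real.exp_add, Real.exp_le_exp]
      push_cast
      have hlog : Real.log ((p : ℝ) + 1 + 1) - Real.log (p + 1) ≤ 1 / (p + 1) := by
        rw [← Real.log_div (by positivity) (by positivity)]
        refine (Real.log_le_sub_one_of_pos (by positivity)).trans (le_of_eq ?_)
        field_simp; ring
      have e : 1 / (8 * ((p : ℝ) + 1)) = 1 / (p + 1) / 8 := by field_simp
      have e' : (p : ℝ) + 1 + 1 = p + 2 := by ring
      rw [e'] at hlog ⊢
      rw [e]
      have hp0 : (0 : ℝ) ≤ p := Nat.cast_nonneg p
      have h5 : 0 ≤ al (2 * h) ^ 2 := sq_nonneg _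
      have h6 : 15 * ((p : ℝ) + 1) * al (2 * h) ^ 2 + 15 * p ^ 2 * al (2 * h) ^ 2 ≤
          15 * (p + 1) ^ 2 * al (2 * h) ^ 2 := by
        rw [← add_mul]
        refine mul_le_mul_of_nonneg_right ?_ h5
        nlinarith
      linarith
  refine (key h le_rfl).trans ?_
  rw [← Real.exp_add, Real.exp_le_exp]
  have hh' : (1 : ℝ) ≤ h := by exact_mod_cast hh
  have hα := al_pos (2 * h)
  have hm := al_mul (2 * h)
  push_cast at hm
  have h1 : h * al (2 * h) ≤ 0.4 := by nlinarith [Real.pi_lt_d4]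
  have h2 : (h * al (2 * h)) ^ 2 ≤ 0.16 := by
    have : 0 ≤ h * al (2 * h) := by positivity
    nlinarith
  have h3 : (0 : ℝ) ≤ 1 / (h + 1) := by positivity
  nlinarith

/-! ### Comparison of magnetizations at two scales -/

/-- The magnetization at the origin in the rotated rectangle `|x - y| ≤ 2 h`, `|x + y| ≤ 2 p`
with `+` boundary conditions. -/
def magD (h p : ℕ) : ℝ := mag (FF h (-p) (2 * p)) (PP h (-p) (2 * p))

/-- The kernel of the rectangle of half-length `n` with the spin at the site `k₀` inserted on the
middle row. -/
def GG (N n : ℕ) (k₀ : Fin N) : Matrix (Row N) (Row N) ℝ :=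
  TT N ^ n * Matrix.diagonal (fun σ : Row N => zz (σ k₀)) * TT N ^ n

lemma MI_eq_GG {h N : ℕ} (hN : N + 1 = 2 * h) (k₀ : Fin N) (hk₀ : (k₀ : ℕ) + 1 = h) {p : ℕ}
    (hp : 1 ≤ p) {s : Vtx → Bool} (hs : Side h s) :
    MI (FF h (-p) (2 * p)) (PP h (-p) (2 * p)) s =
      GG N p k₀ (row h N (-p) s) (row h N p s) := by
  obtain ⟨n, rfl⟩ : ∃ n, p = n + 1 := ⟨p - 1, by omega⟩
  have := MI_eq_pow hN n k₀ hk₀ (b := -((n + 1 : ℕ) : ℤ)) (by push_cast; ring) hs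
  have e : -((n + 1 : ℕ) : ℤ) + n + n + 2 = ((n + 1 : ℕ) : ℤ) := by push_cast; ring
  rw [e] at this
  rw [show 2 * (n + 1) = n + n + 2 by ring, this, GG]

lemma ZI_eq_TT {h N : ℕ} (hN : N + 1 = 2 * h) {p : ℕ} (hp : 1 ≤ p) {s : Vtx → Bool}
    (hs : Side h s) : ZI (FF h (-p) (2 * p)) (PP h (-p) (2 * p)) s =
      (TT N ^ (2 * p)) (row h N (-p) s) (row h N p s) := by
  obtain ⟨n, hn⟩ : ∃ n, 2 * p = n + 1 := ⟨2 * p - 1, by omega⟩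
  have e : -(p : ℤ) + n + 1 = p := by omega
  rw [hn, ZI_eq_pow hN n (-p) hs, e]

lemma magD_eq {h N : ℕ} (hN : N + 1 = 2 * h) (k₀ : Fin N) (hk₀ : (k₀ : ℕ) + 1 = h) {p : ℕ}
    (hp : 1 ≤ p) : magD h p = GG N p k₀ ⊤ ⊤ / (TT N ^ (2 * p)) ⊤ ⊤ := by
  rw [magD, mag, MI_eq_GG hN k₀ hk₀ hp (fun _ _ => rfl), ZI_eq_TT hN hp (fun _ _ => rfl)]
  rfl

lemma TT_pow_pos (N n : ℕ) (hn : 1 ≤ n) (a b : Row N) : 0 < (TT N ^ n) a b := by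
  obtain ⟨n, rfl⟩ : ∃ m, n = m + 1 := ⟨n - 1, by omega⟩
  exact ((TT_MTP N).pow TT_pos n).2 a b

/-- Every pair of rows is realized at the two short sides of the rectangle. -/
lemma exists_rows {h N : ℕ} (hN : N + 1 = 2 * h) (a b : Row N) :
    ∃ s : Vtx → Bool, Side h s ∧ row h N (-h) s = a ∧ row h N h s = b := by
  have hh : 0 < h := by omega
  have inj : ∀ (c : ℤ) (k l : Fin N), ve h c ((k : ℕ) + 1) = ve h c ((l : ℕ) + 1) → k = l := by
    intro c k l H
    simp only [ve, Prod.mk.injEq] at H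
    ext; omega
  refine ⟨fun v => if H : ∃ k : Fin N, v = ve h (-h) ((k : ℕ) + 1) then a H.choose else
    if H : ∃ k : Fin N, v = ve h h ((k : ℕ) + 1) then b H.choose else true, ?_, ?_, ?_⟩
  · intro v hv
    have h1 : ∀ c : ℤ, ¬ ∃ k : Fin N, v = ve h c ((k : ℕ) + 1) := by
      rintro c ⟨k, rfl⟩
      have := k.2
      simp only [ve] at hv
      omega
    simp [h1]
  · funext k
    have H : ∃ l : Fin N, ve h (-h) ((k : ℕ) + 1) = ve h (-h) ((l : ℕ) + 1) := ⟨k, rfl⟩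
    simp only [row]
    rw [dif_pos H, inj _ _ _ H.choose_spec.symm]
  · funext k
    have H : ∃ l : Fin N, ve h h ((k : ℕ) + 1) = ve h h ((l : ℕ) + 1) := ⟨k, rfl⟩
    have H' : ¬ ∃ l : Fin N, ve h h ((k : ℕ) + 1) = ve h (-h) ((l : ℕ) + 1) := by
      rintro ⟨l, hl⟩
      simp only [ve, Prod.mk.injEq] at hl
      omega
    simp only [row]
    rw [dif_neg H', dif_pos H, inj _ _ _ H.choose_spec.symm]

lemma magD_congr {h h' p p' : ℕ} (hh : h' ≤ h) (hp : p' ≤ p) :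
    mag (FF h' (-p') (2 * p')) (PP h (-p) (2 * p)) = magD h' p' := by
  refine mag_congr fun e he => ?_
  obtain ⟨⟨x, y⟩, d⟩ := e
  rw [mem_PP, mem_PP, inPP, inPP]
  rw [mem_FF, mem_FF] at he
  cases d <;> simp at he ⊢ <;> omega

/-- Conditionally on any values on the two extreme rows, the mean spin at the origin is bounded by
the magnetization of an inner rectangle. -/
lemma abs_GG_le {h N h' p' : ℕ} (hN : N + 1 = 2 * h) (k₀ : Fin N) (hk₀ : (k₀ : ℕ) + 1 = h)
    (hh : h' ≤ h) (hp : p' ≤ h) (a b : Row N) :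
    |GG N h k₀ a b| ≤ magD h' p' * (TT N ^ (2 * h)) a b := by
  obtain ⟨s, hs, rfl, rfl⟩ := exists_rows hN a b
  have h1 : 1 ≤ h := by omega
  rw [← MI_eq_GG hN k₀ hk₀ h1 hs, ← ZI_eq_TT hN h1 hs, ← magD_congr hh hp]
  refine abs_MI_le_of_subset _ (fun v => ?_) s
  rw [mem_FF, mem_FF]; push_cast; omega

/-- The constant in the four-point cross ratio bound. -/
def Qc : ℝ := CR ^ 2

lemma Qc_ge : 1 ≤ Qc := one_le_pow₀ CR_ge

/-- The relative deviation left after `m` steps of the contraction. -/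
def epsm (m : ℕ) : ℝ := (Qc - 1) * (1 - 1 / Qc) ^ m

lemma epsm_nonneg (m : ℕ) : 0 ≤ epsm m := by
  have hQ := Qc_ge
  have : 0 ≤ 1 - 1 / Qc := by
    rw [sub_nonneg, div_le_one (by linarith)]; exact hQ
  unfold epsm; have := sub_nonneg.2 hQ; positivity

/-- A power of a symmetric matrix can be moved to the other side of a scalar product. -/
lemma dot_pow_mulVec {R : Type*} [Fintype R] [DecidableEq R] {T : Matrix R R ℝ}
    (hT : T.transpose = T) (n : ℕ) (A : Matrix R R ℝ) (u w : R → ℝ) :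
    dotProduct ((T ^ n).mulVec u) (A.mulVec w) = dotProduct u ((T ^ n * A).mulVec w) := by
  rw [← Matrix.mulVec_mulVec, Matrix.dotProduct_mulVec u (T ^ n), ← Matrix.mulVec_transpose,
    Matrix.transpose_pow, hT]

/-- Comparison of the magnetization in a long rectangle with the ground state value: the error is
controlled by the magnetization at a smaller scale. -/
lemma magD_step {h h' p' m : ℕ} (h1 : 1 ≤ h) (hh : h' ≤ h) (hp : p' ≤ h) :
    magD h ((2 * m + 3) * h) ≤
      Dd (2 * h) h + (2 * epsm m + epsm m ^ 2) * magD h' p' := by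
  obtain ⟨N, hN⟩ : ∃ N, N + 1 = 2 * h := ⟨2 * h - 1, by omega⟩
  let k₀ : Fin N := ⟨h - 1, by omega⟩
  have hk₀ : (k₀ : ℕ) + 1 = h := Nat.sub_add_cancel h1
  have hTt := TT_transpose N
  set K := TT N ^ (N + 1) with hK
  obtain ⟨hKM, hK0⟩ : MTP K ∧ ∀ a b, 0 < K a b := (TT_MTP N).pow TT_pos N
  have hcr := hKM.cross hK0 (TT_cross hN)
  have hKm : ∀ j, K ^ (j + 1) = TT N ^ ((j + 1) * (2 * h)) := by
    intro j; rw [hK, hN, ← pow_mul, mul_comm]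
  obtain ⟨v, E, hv0, hvne, hvE, hv⟩ := ground (N := N) (Dd_pos le_rfl)
  have hvne' : ∃ a, v a ≠ 0 := by
    by_contra H; push Not at H; exact hvne (funext H)
  set u : Row N → ℝ := Pi.single ⊤ 1 with hu
  have hu0 : ∀ a, 0 ≤ u a := by
    intro a; rw [hu, Pi.single_apply]; split_ifs <;> norm_num
  obtain ⟨μ, hμ, hμ'⟩ := contraction hK0 Qc_ge hcr hu0 ⟨⊤, by simp [hu]⟩ hv0 hvne' m
  set x := (K ^ (m + 1)).mulVec u with hx
  set y := (K ^ (m + 1)).mulVec v with hy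
  set G := GG N h k₀ with hG
  set B := TT N ^ (2 * h) with hB
  -- the ground state value
  have hdotd : ∀ w : Row N → ℝ, dotProduct w (G.mulVec w) =
      ∑ σ, zz (σ k₀) * (((TT N ^ h).mulVec w) σ * ((TT N ^ h).mulVec w) σ) := by
    intro w
    rw [hG, GG, mul_assoc, ← dot_pow_mulVec hTt, ← Matrix.mulVec_mulVec]
    simp only [dotProduct, Matrix.mulVec_diagonal]
    exact Finset.sum_congr rfl fun σ _ => by ring
  have hdotB : ∀ w : Row N → ℝ, dotProduct w (B.mulVec w) =
      ∑ σ, (((TT N ^ h).mulVec w) σ * ((TT N ^ h).mulVec w) σ) := by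
    intro w
    rw [hB, two_mul, pow_add, ← dot_pow_mulVec hTt]
    rfl
  have hs' : dotProduct y (G.mulVec y) = Dd (2 * h) h * dotProduct y (B.mulVec y) := by
    rw [hdotd, hdotB, hv _ _ k₀, hN, hk₀]
    refine Hop_TT_pow h ?_
    rw [hy, hKm]
    exact Hop_TT_pow _ hvE
  have hD0 : 0 ≤ Dd (2 * h) h := (Dd_pos (by omega)).le
  have hmain := quad_compare (G := G) (B := B) (F := magD h' p') (x := x) (y := y)
    (mag_nonneg _ _) hμ (epsm_nonneg m) hD0 (fun a b => abs_GG_le hN k₀ hk₀ hh hp a b)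
    (fun a b => (TT_pow_pos N _ (by omega) a b).le)
    (fun a => (mulVec_pos ((hKM.pow hK0 m).2) hv0 hvne' a).le)
    (fun a => (hμ' a).1) (fun a => (hμ' a).2) hs'
  -- the quadratic forms at `x` are the partition functions of the long rectangle
  have huu : ∀ A : Matrix (Row N) (Row N) ℝ, dotProduct u (A.mulVec u) = A ⊤ ⊤ := by
    intro A; simp [hu]
  have hxA : ∀ A : Matrix (Row N) (Row N) ℝ, dotProduct x (A.mulVec x) =
      (TT N ^ ((m + 1) * (2 * h)) * A * TT N ^ ((m + 1) * (2 * h))) ⊤ ⊤ := by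
    intro A
    rw [hx, hKm, dot_pow_mulVec hTt, Matrix.mulVec_mulVec, huu]
  have hxG : dotProduct x (G.mulVec x) = GG N ((2 * m + 3) * h) k₀ ⊤ ⊤ := by
    have e1 : (2 * m + 3) * h = (m + 1) * (2 * h) + h := by ring
    have e2 : (2 * m + 3) * h = h + (m + 1) * (2 * h) := by ring
    have e3 : TT N ^ ((2 * m + 3) * h) = TT N ^ ((m + 1) * (2 * h)) * TT N ^ h := by
      rw [e1, pow_add]
    have e4 : TT N ^ ((2 * m + 3) * h) = TT N ^ h * TT N ^ ((m + 1) * (2 * h)) := by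
      rw [e2, pow_add]
    rw [hxA, hG, GG, GG]
    nth_rewrite 1 [e3]
    rw [e4]
    simp only [mul_assoc]
  have hxB : dotProduct x (B.mulVec x) = (TT N ^ (2 * ((2 * m + 3) * h))) ⊤ ⊤ := by
    rw [hxA, hB, ← pow_add, ← pow_add]
    have e1 : (m + 1) * (2 * h) + 2 * h + (m + 1) * (2 * h) = 2 * ((2 * m + 3) * h) := by ring
    rw [e1]
  rw [magD_eq hN k₀ hk₀ (by nlinarith), div_le_iff₀ (TT_pow_pos N _ (by nlinarith) _ _), ← hxG,
    ← hxB]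
  exact hmain

/-- For a suitable number of steps the error factor beats the scale factor `2 m + 3`. -/
lemma exists_m : ∃ m : ℕ, (2 * epsm m + epsm m ^ 2) * (2 * (2 * m + 3)) ≤ 1 := by
  have hQ := Qc_ge
  have hQ0 : 0 < Qc := by linarith
  set l := 1 - 1 / Qc with hl
  have hl0 : 0 ≤ l := by rw [hl, sub_nonneg, div_le_one hQ0]; exact hQ
  have hl1 : l < 1 := by have := one_div_pos.2 hQ0; linarith
  set c := Qc - 1 with hc
  have hc0 : 0 ≤ c := by linarith
  have t1 := tendsto_self_mul_const_pow_of_lt_one hl0 hl1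
  have t2 := tendsto_pow_atTop_nhds_zero_of_lt_one hl0 hl1
  have t3 := ((t1.const_mul 4).add (t2.const_mul 6)).const_mul (2 * c + c ^ 2)
  simp only [mul_zero, add_zero] at t3
  obtain ⟨m, hm⟩ := (t3.eventually (gt_mem_nhds one_pos)).exists
  refine ⟨m, le_trans ?_ hm.le⟩
  have hp : l ^ m ≤ 1 := pow_le_one₀ hl0 hl1.le
  have hp0 : 0 ≤ l ^ m := pow_nonneg hl0 m
  have h1 : 2 * epsm m + epsm m ^ 2 ≤ (2 * c + c ^ 2) * l ^ m := by
    unfold epsm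
    rw [← hc, ← hl]
    have : c ^ 2 * (l ^ m * l ^ m) ≤ c ^ 2 * (1 * l ^ m) := by gcongr
    nlinarith
  calc _ ≤ (2 * c + c ^ 2) * l ^ m * (2 * (2 * m + 3)) := by gcongr
    _ = _ := by ring

/-- Decay of the magnetization along a geometric sequence of scales. -/
lemma magD_scales : ∃ (q : ℕ) (A : ℝ), 2 ≤ q ∧ 0 < A ∧ ∀ k : ℕ,
    magD (q ^ k) (q ^ (k + 1)) ≤ A * Real.exp (-(Real.log q / 8)) ^ k := by
  obtain ⟨m, hm⟩ := exists_m
  set q : ℕ := 2 * m + 3 with hq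
  have hqr : (q : ℝ) = 2 * m + 3 := by rw [hq]; push_cast; ring
  have hq1 : (1 : ℝ) ≤ q := by rw [hqr]; have : (0 : ℝ) ≤ m := m.cast_nonneg; linarith
  set θ := Real.exp (-(Real.log q / 8)) with hθ
  have hθ0 : 0 < θ := Real.exp_pos _
  have hlog : 0 ≤ Real.log q := Real.log_nonneg hq1
  set δ := 2 * epsm m + epsm m ^ 2 with hδ
  have hδ0 : 0 ≤ δ := by have := epsm_nonneg m; positivity
  have hδθ : 2 * δ ≤ θ := by
    have h1 : (q : ℝ)⁻¹ ≤ θ := by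
      rw [← Real.exp_log (show (0 : ℝ) < q by linarith), ← Real.exp_neg, hθ, Real.exp_le_exp]
      linarith
    refine le_trans ?_ h1
    rw [← hqr] at hm
    rw [inv_eq_one_div, le_div_iff₀ (by linarith)]
    linarith
  have hA : (1 : ℝ) ≤ Real.exp 4 := Real.one_le_exp (by norm_num)
  refine ⟨q, 2 * Real.exp 4, by omega, by positivity, fun k => ?_⟩
  induction k with
  | zero =>
    rw [pow_zero θ, mul_one]
    exact (mag_le_one _ _).trans (by linarith)
  | succ k ih =>
    have h1 : 1 ≤ q ^ (k + 1) := Nat.one_le_pow _ _ (by omega)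
    have step := magD_step (m := m) h1
      (Nat.pow_le_pow_right (show 0 < q by omega) (Nat.le_succ k)) le_rfl
    rw [← hq, ← pow_succ', ← hδ] at step
    have hD := Dd_le h1
    have hexp : Real.exp (-(Real.log ((q ^ (k + 1) : ℕ) + 1) / 8)) ≤ θ ^ (k + 1) := by
      rw [hθ, ← Real.exp_nat_mul, Real.exp_le_exp]
      have : Real.log ((q : ℝ) ^ (k + 1)) ≤ Real.log ((q ^ (k + 1) : ℕ) + 1) := by
        refine Real.log_le_log (by positivity) ?_
        push_cast; linarith
      rw [Real.log_pow] at this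
      linarith
    have hD' := hD.trans (mul_le_mul_of_nonneg_left hexp (Real.exp_pos 4).le)
    have h3 := mul_le_mul_of_nonneg_left ih hδ0
    have h4 : 2 * δ * (Real.exp 4 * θ ^ k) ≤ θ * (Real.exp 4 * θ ^ k) :=
      mul_le_mul_of_nonneg_right hδθ (by positivity)
    rw [← hθ] at h3 ⊢
    rw [pow_succ θ] at hD' ⊢
    linarith

/-- Decay of the magnetization of the rotated rectangles contained in the box of radius `n`. -/
lemma magD_box : ∃ (C : ℝ) (n₀ : ℕ), 0 < C ∧ 0 < n₀ ∧ ∀ n : ℕ, n₀ ≤ n → ∃ h p : ℕ,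
    h + p ≤ n ∧ 0 < h ∧ 0 < p ∧ magD h p ≤ C * Real.exp (-(Real.log n / 8)) := by
  obtain ⟨q, A, hq, hA, H⟩ := magD_scales
  have hqr : (2 : ℝ) ≤ q := by exact_mod_cast hq
  refine ⟨A * Real.exp (Real.log (q * (q + 1)) / 8), q + 1, by positivity, by omega, fun n hn => ?_⟩
  -- the largest scale which fits into the box
  obtain ⟨k, hk1, hk2⟩ : ∃ k, q ^ k * (q + 1) ≤ n ∧ n < q ^ (k + 1) * (q + 1) := by
    have hdiv : n / (q + 1) ≠ 0 := by
      have := Nat.div_pos hn (by omega); omega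
    refine ⟨Nat.log q (n / (q + 1)), ?_, ?_⟩
    · exact (Nat.le_div_iff_mul_le (by omega)).1 (Nat.pow_log_le_self q hdiv)
    · exact (Nat.div_lt_iff_lt_mul (by omega)).1 (Nat.lt_pow_succ_log_self (by omega) _)
  have hq0 : 0 < q := by omega
  refine ⟨q ^ k, q ^ (k + 1), by rw [pow_succ]; linarith, by positivity, by positivity, ?_⟩
  refine (H k).trans ?_
  rw [mul_assoc, ← Real.exp_add, ← Real.exp_nat_mul]
  refine mul_le_mul_of_nonneg_left ?_ hA.le
  rw [Real.exp_le_exp]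
  have hn0 : (0 : ℝ) < n := by exact_mod_cast (show 0 < n by omega)
  have h2 : (n : ℝ) ≤ q ^ k * (q * (q + 1)) := by
    have : (n : ℝ) ≤ (q ^ (k + 1) * (q + 1) : ℕ) := by exact_mod_cast hk2.le
    push_cast at this
    rw [pow_succ] at this; linarith
  have h3 := Real.log_le_log hn0 h2
  rw [Real.log_mul (by positivity) (by positivity), Real.log_pow] at h3
  linarith

/-! ### Spin configurations compatible with an FK configuration -/

lemma adjOpen_symm {η : Edge → Bool} {u v : Option Vtx} (h : adjOpen η u v) : adjOpen η v u := by
  rcases h with ⟨p, hp, h⟩ | ⟨z, hz, h⟩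
  · exact Or.inl ⟨p, hp, h.symm⟩
  · exact Or.inr ⟨z, hz, h.symm⟩

lemma Conn_symm {η : Edge → Bool} {u v : Option Vtx} (h : Conn η u v) : Conn η v u :=
  haveI : Std.Symm (adjOpen η) := ⟨fun _ _ => adjOpen_symm⟩
  Relation.ReflTransGen.stdSymm.symm _ _ h

lemma Conn_mono {η η' : Edge → Bool} (h : ∀ e, η e = true → η' e = true) {u v : Option Vtx}
    (huv : Conn η u v) : Conn η' u v := by
  refine Relation.ReflTransGen.mono (fun x y hxy => ?_) _ _ huv
  rcases hxy with ⟨p, hp, hxy⟩ | ⟨z, hz, hxy⟩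
  · exact Or.inl ⟨p, h _ hp, hxy⟩
  · exact Or.inr ⟨z, h _ hz, hxy⟩

lemma not_Conn_none {η : Edge → Bool} (hη : ∀ z, η (Sum.inr z) = false) (v : Vtx) :
    ¬ Conn η (some v) none := by
  intro h
  rcases Relation.ReflTransGen.cases_tail h with h | ⟨c, -, h⟩
  · cases h
  · rcases h with ⟨p, hp, ⟨-, h⟩ | ⟨h, -⟩⟩ | ⟨z, hz, -⟩
    · cases h
    · cases h
    · rw [hη] at hz; cases hz

/-- The sets of minus spins of the spin configurations on `Λ` which are constant on the open
clusters. -/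
def UU (Λ : Finset Vtx) (η : Edge → Bool) : Finset (Finset Vtx) :=
  Λ.powerset.filter fun A => ∀ v ∈ Λ, ∀ w ∈ Λ, Conn η (some v) (some w) → v ∈ A → w ∈ A

/-- Those members of `UU Λ η` which are contained in `D`, i.e. the spins are `+` off `D`. -/
def UP (Λ D : Finset Vtx) (η : Edge → Bool) : Finset (Finset Vtx) :=
  (UU Λ η).filter fun A => A ⊆ D

lemma mem_UU {Λ : Finset Vtx} {η : Edge → Bool} {A : Finset Vtx} : A ∈ UU Λ η ↔
    A ⊆ Λ ∧ ∀ v ∈ Λ, ∀ w ∈ Λ, Conn η (some v) (some w) → v ∈ A → w ∈ A := by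
  rw [UU, Finset.mem_filter, Finset.mem_powerset]

/-- Every cluster has a representative which is minimal for the lexicographic order, in accordance
with the definition of `numClusters`. -/
lemma exists_rep (Λ : Finset Vtx) (η : Edge → Bool) {v : Vtx} (hv : v ∈ Λ) :
    ∃ r ∈ Λ, Conn η (some v) (some r) ∧
      ∀ w ∈ Λ, Conn η (some r) (some w) → ¬ vlt w r := by
  obtain ⟨r, hr, hmin⟩ := Finset.exists_min_image
    (Λ.filter fun w => Conn η (some v) (some w)) (fun w => toLex w)
    ⟨v, Finset.mem_filter.2 ⟨hv, Relation.ReflTransGen.refl⟩⟩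
  rw [Finset.mem_filter] at hr
  refine ⟨r, hr.1, hr.2, fun w hw hrw hlt => ?_⟩
  have := hmin w (Finset.mem_filter.2 ⟨hw, hr.2.trans hrw⟩)
  rw [Prod.Lex.toLex_le_toLex] at this
  unfold vlt at hlt
  omega

/-- Each open cluster carries one free sign, hence `2 ^ numClusters` compatible configurations. -/
lemma card_UU {Λ : Finset Vtx} {η : Edge → Bool} (hη : ∀ z, η (Sum.inr z) = false) :
    (UU Λ η).card = 2 ^ numClusters Λ η := by
  rw [numClusters, ← Finset.card_powerset]
  set R := Λ.filter (fun v => ¬ Conn η (some v) none ∧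
    ∀ w ∈ Λ, Conn η (some v) (some w) → ¬ vlt w v) with hR
  have hRΛ : R ⊆ Λ := Finset.filter_subset _ _
  have huniq : ∀ r ∈ R, ∀ r' ∈ R, Conn η (some r) (some r') → r = r' := by
    intro r hr r' hr' h
    rw [hR, Finset.mem_filter] at hr hr'
    have h1 := hr.2.2 r' hr'.1 h
    have h2 := hr'.2.2 r hr.1 (Conn_symm h)
    unfold vlt at h1 h2
    exact Prod.ext (by omega) (by omega)
  have hrep : ∀ v ∈ Λ, ∃ r ∈ R, Conn η (some v) (some r) := by
    intro v hv
    obtain ⟨r, h1, h2, h3⟩ := exists_rep Λ η hv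
    exact ⟨r, Finset.mem_filter.2 ⟨h1, not_Conn_none hη r, h3⟩, h2⟩
  refine Finset.card_bij' (fun A _ => A ∩ R)
    (fun B _ => Λ.filter fun v => ∃ r ∈ B, Conn η (some v) (some r)) ?_ ?_ ?_ ?_
  · intro A _
    rw [Finset.mem_powerset]; exact Finset.inter_subset_right
  · intro B hB
    rw [mem_UU]
    refine ⟨Finset.filter_subset _ _, fun v hv w hw hvw h => ?_⟩
    rw [Finset.mem_filter] at h ⊢
    obtain ⟨r, hr, hvr⟩ := h.2
    exact ⟨hw, r, hr, (Conn_symm hvw).trans hvr⟩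
  · intro A hA
    rw [mem_UU] at hA
    ext v
    rw [Finset.mem_filter]
    constructor
    · rintro ⟨hv, r, hr, hvr⟩
      rw [Finset.mem_inter] at hr
      exact hA.2 r (hRΛ hr.2) v hv (Conn_symm hvr) hr.1
    · intro hv
      obtain ⟨r, hr, hvr⟩ := hrep v (hA.1 hv)
      exact ⟨hA.1 hv, r, Finset.mem_inter.2 ⟨hA.2 v (hA.1 hv) r (hRΛ hr) hvr hv, hr⟩, hvr⟩
  · intro B hB
    rw [Finset.mem_powerset] at hB
    ext v
    rw [Finset.mem_inter, Finset.mem_filter]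
    constructor
    · rintro ⟨⟨-, r, hr, hvr⟩, hv⟩
      rwa [huniq v hv r (hB hr) hvr]
    · intro hv
      exact ⟨⟨hRΛ (hB hv), v, hv, Relation.ReflTransGen.refl⟩, hB hv⟩

lemma UU_symmDiff {Λ : Finset Vtx} {η : Edge → Bool} {A B : Finset Vtx} (hA : A ∈ UU Λ η)
    (hB : B ∈ UU Λ η) : symmDiff A B ∈ UU Λ η := by
  rw [mem_UU] at *
  refine ⟨fun v hv => ?_, fun v hv w hw hvw h => ?_⟩
  · rw [Finset.mem_symmDiff] at hv
    rcases hv with h | h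
    exacts [hA.1 h.1, hB.1 h.1]
  · have h1 := hA.2 v hv w hw hvw
    have h2 := hB.2 v hv w hw hvw
    have h3 := hA.2 w hw v hv (Conn_symm hvw)
    have h4 := hB.2 w hw v hv (Conn_symm hvw)
    rw [Finset.mem_symmDiff] at *
    tauto

lemma UP_symmDiff {Λ D : Finset Vtx} {η : Edge → Bool} {A B : Finset Vtx} (hA : A ∈ UP Λ D η)
    (hB : B ∈ UP Λ D η) : symmDiff A B ∈ UP Λ D η := by
  rw [UP, Finset.mem_filter] at *
  refine ⟨UU_symmDiff hA.1 hB.1, fun v hv => ?_⟩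
  rw [Finset.mem_symmDiff] at hv
  rcases hv with h | h
  exacts [hA.2 h.1, hB.2 h.1]

lemma UU_anti {Λ : Finset Vtx} {η η' : Edge → Bool} (h : ∀ e, η e = true → η' e = true) :
    UU Λ η' ⊆ UU Λ η := by
  intro A hA
  rw [mem_UU] at *
  exact ⟨hA.1, fun v hv w hw hvw => hA.2 v hv w hw (Conn_mono h hvw)⟩

/-- All the nearest neighbours of the points of `D` belong to `Λ`. -/
def NbIn (D Λ : Finset Vtx) : Prop := ∀ v ∈ D, ∀ b, v + estep b ∈ Λ ∧ v - estep b ∈ Λ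

/-- For sets contained in `D`, compatibility is a local condition. -/
lemma mem_UP {Λ D : Finset Vtx} (hDΛ : D ⊆ Λ) (hN : NbIn D Λ) {η : Edge → Bool}
    (hη : ∀ z, η (Sum.inr z) = false) {A : Finset Vtx} : A ∈ UP Λ D η ↔
      A ⊆ D ∧ ∀ p : Vtx × Bool, η (Sum.inl p) = true → (p.1 ∈ A ↔ p.1 + estep p.2 ∈ A) := by
  rw [UP, Finset.mem_filter, mem_UU]
  constructor
  · rintro ⟨⟨h1, h2⟩, h3⟩
    refine ⟨h3, fun p hp => ⟨fun h => ?_, fun h => ?_⟩⟩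
    · exact h2 _ (h1 h) _ (hN _ (h3 h) p.2).1
        (Relation.ReflTransGen.single (Or.inl ⟨p, hp, Or.inl ⟨rfl, rfl⟩⟩)) h
    · refine h2 _ (h1 h) _ ?_
        (Relation.ReflTransGen.single (Or.inl ⟨p, hp, Or.inr ⟨rfl, rfl⟩⟩)) h
      have := (hN _ (h3 h) p.2).2
      rwa [add_sub_cancel_right] at this
  · rintro ⟨h1, h2⟩
    refine ⟨⟨h1.trans hDΛ, fun v hv w hw hvw hvA => ?_⟩, h1⟩
    -- an open path started in `A` never leaves `A`
    have key : ∀ x, Conn η (some v) x → ∃ u ∈ A, x = some u := by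
      intro x hx
      induction hx with
      | refl => exact ⟨v, hvA, rfl⟩
      | tail _ hstep ih =>
        obtain ⟨u, hu, rfl⟩ := ih
        rcases hstep with ⟨p, hp, ⟨e1, e2⟩ | ⟨e1, e2⟩⟩ | ⟨z, hz, -⟩
        · cases e1
          exact ⟨_, (h2 p hp).1 hu, e2⟩
        · rw [Option.some.injEq] at e2
          rw [e2] at hu
          exact ⟨_, (h2 p hp).2 hu, e1⟩
        · rw [hη] at hz; cases hz
    obtain ⟨u, hu, e⟩ := key _ hvw
    cases e
    exact hu

/-- The counting inequality behind the comparison of boundary conditions: the sets `UU η` and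
`UP η'` are subgroups for the symmetric difference, with intersection contained in `UP (η ⊔ η')`
and sum contained in `UU (η ⊓ η')`. -/
lemma card_UU_mul_UP {Λ D : Finset Vtx} (hDΛ : D ⊆ Λ) (hN : NbIn D Λ) {η η' : Edge → Bool}
    (hη : ∀ z, η (Sum.inr z) = false) (hη' : ∀ z, η' (Sum.inr z) = false) :
    (UU Λ η).card * (UP Λ D η').card ≤
      (UU Λ (fun e => η e && η' e)).card * (UP Λ D (fun e => η e || η' e)).card := by
  have i1 : UU Λ η ⊆ UU Λ (fun e => η e && η' e) := UU_anti fun e he => by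
    rw [Bool.and_eq_true] at he; exact he.1
  have i2 : UP Λ D η' ⊆ UU Λ (fun e => η e && η' e) :=
    (Finset.filter_subset _ _).trans (UU_anti fun e he => by
      rw [Bool.and_eq_true] at he; exact he.2)
  have i3 : ∀ A, A ∈ UU Λ η → A ∈ UP Λ D η' → A ∈ UP Λ D (fun e => η e || η' e) := by
    intro A h1 h2
    have h3 : A ∈ UP Λ D η := Finset.mem_filter.2 ⟨h1, (Finset.mem_filter.1 h2).2⟩
    rw [mem_UP hDΛ hN hη] at h3
    rw [mem_UP hDΛ hN hη'] at h2
    rw [mem_UP hDΛ hN (by simp [hη, hη'])]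
    refine ⟨h3.1, fun p hp => ?_⟩
    rw [Bool.or_eq_true] at hp
    rcases hp with hp | hp
    exacts [h3.2 p hp, h2.2 p hp]
  rw [← Finset.card_product, ← Finset.card_product]
  -- a section of the addition map is used to split off the intersection
  let τ : Finset Vtx → Finset Vtx := fun X =>
    if H : ∃ B ∈ UP Λ D η', symmDiff X B ∈ UU Λ η then H.choose else ∅
  have hτ : ∀ A ∈ UU Λ η, ∀ B ∈ UP Λ D η', τ (symmDiff A B) ∈ UP Λ D η' ∧
      symmDiff (symmDiff A B) (τ (symmDiff A B)) ∈ UU Λ η := by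
    intro A hA B hB
    have H : ∃ B' ∈ UP Λ D η', symmDiff (symmDiff A B) B' ∈ UU Λ η :=
      ⟨B, hB, by rwa [symmDiff_symmDiff_cancel_right]⟩
    have : τ (symmDiff A B) = H.choose := dif_pos H
    rw [this]
    exact H.choose_spec
  refine Finset.card_le_card_of_injOn
    (fun x => (symmDiff x.1 x.2, symmDiff x.2 (τ (symmDiff x.1 x.2)))) ?_ ?_
  · rintro ⟨A, B⟩ hx
    rw [Finset.mem_coe, Finset.mem_product] at hx
    obtain ⟨t1, t2⟩ := hτ A hx.1 B hx.2
    rw [Finset.mem_coe, Finset.mem_product]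
    refine ⟨UU_symmDiff (i1 hx.1) (i2 hx.2), i3 _ ?_ (UP_symmDiff hx.2 t1)⟩
    have := UU_symmDiff hx.1 t2
    rwa [symmDiff_assoc, symmDiff_symmDiff_cancel_left] at this
  · rintro ⟨A, B⟩ _ ⟨A', B'⟩ _ h
    simp only [Prod.mk.injEq] at h
    obtain ⟨h1, h2⟩ := h
    rw [h1] at h2
    have hB : B = B' := symmDiff_left_injective _ h2
    rw [hB] at h1
    rw [hB, symmDiff_left_injective _ h1]

/-! ### Summation over the FK configurations -/

/-- The lattice edges with at least one endpoint in `Λ`. -/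
def PB (Λ : Finset Vtx) : Finset (Vtx × Bool) :=
  ((((Λ ∪ Λ.image (fun v => v - (1, 0))) ∪ Λ.image (fun v => v - (0, 1))) ×ˢ
      ({true, false} : Finset Bool)).filter
    (fun p => p.1 ∈ Λ ∨ p.1 + estep p.2 ∈ Λ))

lemma mem_PB {Λ : Finset Vtx} {p : Vtx × Bool} :
    p ∈ PB Λ ↔ p.1 ∈ Λ ∨ p.1 + estep p.2 ∈ Λ := by
  rw [PB, Finset.mem_filter, and_iff_right_iff_imp]
  intro h
  obtain ⟨v, b⟩ := p
  simp only [Finset.mem_product, Finset.mem_union, Finset.mem_image]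
  refine ⟨?_, by cases b <;> simp⟩
  rcases h with h | h
  · exact Or.inl (Or.inl h)
  · cases b
    · exact Or.inr ⟨_, h, by simp⟩
    · exact Or.inl (Or.inr ⟨_, h, by simp⟩)

lemma intEdgesBar_eq (Λ : Finset Vtx) : intEdgesBar Λ = (PB Λ).image Sum.inl := rfl

lemma inl_mem {Λ : Finset Vtx} {p : Vtx × Bool} :
    (Sum.inl p : Edge) ∈ intEdgesBar Λ ↔ p ∈ PB Λ := by
  rw [intEdgesBar_eq, Finset.mem_image]
  exact ⟨fun ⟨q, hq, e⟩ => Sum.inl_injective e ▸ hq, fun h => ⟨p, h, rfl⟩⟩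

lemma inr_not_mem {Λ : Finset Vtx} {z : Vtx} : (Sum.inr z : Edge) ∉ intEdgesBar Λ := by
  rw [intEdgesBar_eq, Finset.mem_image]
  rintro ⟨q, -, e⟩
  cases e

/-- FK configurations on the edges meeting `Λ`. -/
abbrev Cf (Λ : Finset Vtx) : Type := {e // e ∈ intEdgesBar Λ} → Bool

/-- The edge part of the FK weight. -/
def pw {Λ : Finset Vtx} (ω : Cf Λ) : ℝ := ∏ e, (if ω e then 1 - tc else tc)

lemma pw_pos {Λ : Finset Vtx} (ω : Cf Λ) : 0 < pw ω := by
  refine Finset.prod_pos fun e _ => ?_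
  have := tc_pos
  have := tc_lt_one
  split_ifs <;> linarith

lemma pw_mul_aux (x y : Bool) :
    ((if x = true then 1 - tc else tc) * (if y = true then 1 - tc else tc)) =
      (if x ⊓ y = true then 1 - tc else tc) * (if x ⊔ y = true then 1 - tc else tc) := by
  cases x <;> cases y <;> simp [mul_comm]

lemma pw_mul {Λ : Finset Vtx} (ω ω' : Cf Λ) : pw ω * pw ω' = pw (ω ⊓ ω') * pw (ω ⊔ ω') := by
  simp only [pw, ← Finset.prod_mul_distrib]
  refine Finset.prod_congr rfl fun e _ => ?_
  exact pw_mul_aux (ω e) (ω' e)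

section
variable {Λ : Finset Vtx} (ρ : Edge → Bool)

/-- The configuration on all edges. -/
abbrev xt (ω : Cf Λ) : Edge → Bool := extendConf (intEdgesBar Λ) ω ρ

lemma xt_inr (hρ : ∀ v, ρ (Sum.inr v) = false) (ω : Cf Λ) (z : Vtx) :
    xt ρ ω (Sum.inr z) = false := by
  rw [xt, extendConf, dif_neg inr_not_mem, hρ]

lemma xt_inf (ω ω' : Cf Λ) : xt ρ (ω ⊓ ω') = fun e => xt ρ ω e && xt ρ ω' e := by
  funext e
  by_cases he : e ∈ intEdgesBar Λ <;> simp [xt, extendConf, he, Bool.min_eq_and]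

lemma xt_sup (ω ω' : Cf Λ) : xt ρ (ω ⊔ ω') = fun e => xt ρ ω e || xt ρ ω' e := by
  funext e
  by_cases he : e ∈ intEdgesBar Λ <;> simp [xt, extendConf, he, Bool.max_eq_or]

lemma fkWeight_eq (hρ : ∀ v, ρ (Sum.inr v) = false) (a : ℝ) (ω : Cf Λ) :
    fkWeight Λ (intEdgesBar Λ) a (fun _ => 0) ρ ω = (UU Λ (xt ρ ω)).card * pw ω := by
  rw [fkWeight, card_UU (xt_inr ρ hρ ω), pw]
  push_cast
  congr 1
  refine Finset.prod_congr rfl fun e _ => ?_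
  obtain ⟨e, he⟩ := e
  rcases e with p | z
  · have h : Real.exp (-2 * betaC) = tc := exp_betaC
    simp only [pEdge, h, sub_sub_cancel]
  · exact absurd he inr_not_mem

/-- Two edge ends carry the same spin. -/
def agr (B : Finset Vtx) : Edge → Prop
  | Sum.inl p => p.1 ∈ B ↔ p.1 + estep p.2 ∈ B
  | Sum.inr _ => True

lemma mem_UP_xt {D : Finset Vtx} (hDΛ : D ⊆ Λ) (hN : NbIn D Λ)
    (hρ : ∀ v, ρ (Sum.inr v) = false) (ω : Cf Λ) {B : Finset Vtx} (hB : B ⊆ D) :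
    B ∈ UP Λ D (xt ρ ω) ↔ ∀ e, ω e = true → agr B e.1 := by
  rw [mem_UP hDΛ hN (xt_inr ρ hρ ω)]
  constructor
  · rintro ⟨-, h⟩ ⟨e, he⟩ hω
    rcases e with p | z
    · refine h p ?_
      rw [xt, extendConf, dif_pos he, hω]
    · trivial
  · refine fun h => ⟨hB, fun p hp => ?_⟩
    by_cases he : (Sum.inl p : Edge) ∈ intEdgesBar Λ
    · rw [xt, extendConf, dif_pos he] at hp
      exact h ⟨_, he⟩ hp
    · rw [inl_mem, mem_PB, not_or] at he
      exact iff_of_false (fun h => he.1 (hDΛ (hB h))) fun h => he.2 (hDΛ (hB h))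

/-- Summing over the edges with fixed spins gives the Ising weight. -/
lemma sum_pw {D : Finset Vtx} (hDΛ : D ⊆ Λ) (hN : NbIn D Λ)
    (hρ : ∀ v, ρ (Sum.inr v) = false) {B : Finset Vtx} (hB : B ⊆ D) :
    ∑ ω : Cf Λ, (if B ∈ UP Λ D (xt ρ ω) then pw ω else 0) =
      WP (PB Λ) (fun v => decide (v ∉ B)) := by
  have h1 : ∀ ω : Cf Λ, (if B ∈ UP Λ D (xt ρ ω) then pw ω else 0) =
      ∏ e, (if ω e then (if agr B e.1 then 1 - tc else 0) else tc) := by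
    intro ω
    by_cases h : B ∈ UP Λ D (xt ρ ω)
    · rw [if_pos h, pw]
      rw [mem_UP_xt ρ hDΛ hN hρ ω hB] at h
      refine Finset.prod_congr rfl fun e _ => ?_
      by_cases he : ω e = true
      · simp [he, h e he]
      · simp [he]
    · rw [if_neg h]
      rw [mem_UP_xt ρ hDΛ hN hρ ω hB] at h
      push Not at h
      obtain ⟨e, he, hne⟩ := h
      exact (Finset.prod_eq_zero (Finset.mem_univ e) (by simp [he, hne])).symm
  have h2 := Finset.prod_univ_sum (fun _ : {e // e ∈ intEdgesBar Λ} => (Finset.univ : Finset Bool))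
    (fun e b => if b then (if agr B e.1 then 1 - tc else 0) else tc)
  rw [Fintype.piFinset_univ] at h2
  rw [Finset.sum_congr rfl fun ω _ => h1 ω, ← h2]
  have h3 : ∀ e : {e // e ∈ intEdgesBar Λ}, (∑ b : Bool,
      (if b then (if agr B e.1 then 1 - tc else 0) else tc)) = if agr B e.1 then 1 else tc := by
    intro e
    rw [Fintype.sum_bool]
    by_cases h : agr B e.1 <;> simp [h]
  rw [Finset.prod_congr rfl fun e _ => h3 e,
    Finset.prod_coe_sort (intEdgesBar Λ) (fun e => if agr B e then 1 else tc), intEdgesBar_eq,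
    Finset.prod_image (fun _ _ _ _ h => Sum.inl_injective h), WP]
  refine Finset.prod_congr rfl fun p _ => ?_
  rw [ww]
  refine if_congr ?_ rfl rfl
  rw [agr, decide_eq_decide, not_iff_not]

lemma RS_true (F : Finset Vtx) (Φ : (Vtx → Bool) → ℝ) :
    RS F Φ (fun _ => true) = ∑ B ∈ F.powerset, Φ (fun v => decide (v ∉ B)) := by
  have h := RS_not F Φ (fun _ => false)
  simp only [Bool.not_false] at h
  rw [← h, RS]
  refine Finset.sum_congr rfl fun B hB => ?_
  rw [Finset.mem_powerset] at hB
  congr 1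
  funext v
  by_cases hv : v ∈ F
  · simp [ov, hv]
  · have : v ∉ B := fun h => hv (hB h)
    simp [ov, hv, this]

/-- The Edwards–Sokal identity. -/
lemma ES {D : Finset Vtx} (hDΛ : D ⊆ Λ) (hN : NbIn D Λ)
    (hρ : ∀ v, ρ (Sum.inr v) = false) (f : (Vtx → Bool) → ℝ) :
    ∑ ω : Cf Λ, pw ω * ∑ B ∈ UP Λ D (xt ρ ω), f (fun v => decide (v ∉ B)) =
      RS D (fun s => f s * WP (PB Λ) s) (fun _ => true) := by
  rw [RS_true]
  have h1 : ∀ ω : Cf Λ, pw ω * ∑ B ∈ UP Λ D (xt ρ ω), f (fun v => decide (v ∉ B)) =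
      ∑ B ∈ D.powerset, f (fun v => decide (v ∉ B)) *
        (if B ∈ UP Λ D (xt ρ ω) then pw ω else 0) := by
    intro ω
    have : UP Λ D (xt ρ ω) = D.powerset.filter fun B => B ∈ UP Λ D (xt ρ ω) := by
      ext B
      rw [Finset.mem_filter, Finset.mem_powerset, iff_and_self]
      exact fun h => (Finset.mem_filter.1 h).2
    conv_lhs => rw [this]
    rw [Finset.sum_filter, Finset.mul_sum]
    refine Finset.sum_congr rfl fun B _ => ?_
    split_ifs <;> ring
  rw [Finset.sum_congr rfl fun ω _ => h1 ω, Finset.sum_comm]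
  refine Finset.sum_congr rfl fun B hB => ?_
  rw [← Finset.mul_sum, sum_pw ρ hDΛ hN hρ (Finset.mem_powerset.1 hB)]

/-- The connection of the origin to `Λ ∖ D`. -/
def Ev (Λ D : Finset Vtx) (η : Edge → Bool) : Prop :=
  ∃ w ∈ Λ, w ∉ D ∧ Conn η (some (0, 0)) (some w)

/-- Given the clusters, the spin at the origin is `+` if the origin is connected to `Λ ∖ D`, and
symmetric otherwise. -/
lemma sum_zz_UP {D : Finset Vtx} (h0 : (0, 0) ∈ D) (hDΛ : D ⊆ Λ) (η : Edge → Bool) :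
    ∑ B ∈ UP Λ D η, zz (decide ((0, 0) ∉ B)) = if Ev Λ D η then ((UP Λ D η).card : ℝ) else 0 := by
  split_ifs with hE
  · obtain ⟨w, hw, hwD, hc⟩ := hE
    rw [Finset.sum_congr rfl (g := fun _ => (1 : ℝ)), Finset.sum_const, nsmul_eq_mul, mul_one]
    intro B hB
    rw [UP, Finset.mem_filter, mem_UU] at hB
    have : ((0, 0) : Vtx) ∉ B := fun h => hwD (hB.2 (hB.1.2 _ (hDΛ h0) w hw hc h))
    simp [zz, this]
  · set C := Λ.filter fun w => Conn η (some (0, 0)) (some w) with hC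
    have hCU : C ∈ UP Λ D η := by
      rw [UP, Finset.mem_filter, mem_UU]
      refine ⟨⟨Finset.filter_subset _ _, fun v hv w hw hvw h => ?_⟩, fun w hw => ?_⟩
      · rw [hC, Finset.mem_filter] at h ⊢
        exact ⟨hw, h.2.trans hvw⟩
      · rw [hC, Finset.mem_filter] at hw
        by_contra hwD
        exact hE ⟨w, hw.1, hwD, hw.2⟩
    have h0C : ((0, 0) : Vtx) ∈ C :=
      Finset.mem_filter.2 ⟨hDΛ h0, Relation.ReflTransGen.refl⟩
    refine Finset.sum_involution (fun B _ => symmDiff B C) ?_ ?_ ?_ ?_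
    · intro B _
      have : ((0, 0) : Vtx) ∈ symmDiff B C ↔ ((0, 0) : Vtx) ∉ B := by
        rw [Finset.mem_symmDiff]; tauto
      by_cases h : ((0, 0) : Vtx) ∈ B <;> simp [this, h, zz]
    · intro B _ _ h
      rw [symmDiff_eq_left] at h
      rw [h] at h0C
      simp at h0C
    · exact fun B hB => UP_symmDiff hB hCU
    · exact fun B _ => symmDiff_symmDiff_cancel_right _ _

/-- The connection probability is at most the Ising magnetization at the origin with `+` boundary
conditions outside `D`. -/
lemma fk_le_mag {D : Finset Vtx} (h0 : (0, 0) ∈ D) (hDΛ : D ⊆ Λ) (hN : NbIn D Λ)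
    (hρ : ∀ v, ρ (Sum.inr v) = false) (a : ℝ) :
    fkProb Λ (intEdgesBar Λ) a (fun _ => 0) ρ (Ev Λ D) ≤ mag D (PB Λ) := by
  have hη := xt_inr (Λ := Λ) ρ hρ
  set cU : Cf Λ → ℝ := fun ω => (UU Λ (xt ρ ω)).card with hcU
  set cP : Cf Λ → ℝ := fun ω => (UP Λ D (xt ρ ω)).card with hcP
  set ind : Cf Λ → ℝ := fun ω => if Ev Λ D (xt ρ ω) then 1 else 0 with hind
  have hind0 : ∀ ω, 0 ≤ ind ω := by
    intro ω; simp only [hind]; split_ifs <;> norm_num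
  have hcU0 : ∀ ω, 0 ≤ cU ω := fun ω => Nat.cast_nonneg _
  have hcP0 : ∀ ω, 0 ≤ cP ω := fun ω => Nat.cast_nonneg _
  have hM : MI D (PB Λ) (fun _ => true) = ∑ ω, ind ω * (pw ω * cP ω) := by
    rw [MI, ← ES ρ hDΛ hN hρ (fun s => zz (s (0, 0)))]
    refine Finset.sum_congr rfl fun ω _ => ?_
    rw [sum_zz_UP h0 hDΛ]
    simp only [hind, hcP]
    split_ifs <;> ring
  have hZ : ZI D (PB Λ) (fun _ => true) = ∑ ω, pw ω * cP ω := by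
    have := ES ρ hDΛ hN hρ (fun _ => 1)
    simp only [one_mul, Finset.sum_const, nsmul_eq_mul, mul_one] at this
    exact this.symm
  have hnum : (∑ ω : Cf Λ, if Ev Λ D (extendConf (intEdgesBar Λ) ω ρ) then
      fkWeight Λ (intEdgesBar Λ) a (fun _ => 0) ρ ω else 0) = ∑ ω, ind ω * (pw ω * cU ω) := by
    refine Finset.sum_congr rfl fun ω _ => ?_
    simp only [hind, fkWeight_eq ρ hρ, hcU]
    split_ifs <;> ring
  have hden : fkZ Λ (intEdgesBar Λ) a (fun _ => 0) ρ = ∑ ω, pw ω * cU ω := by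
    rw [fkZ]
    refine Finset.sum_congr rfl fun ω _ => ?_
    rw [fkWeight_eq ρ hρ]; ring
  have hZ0 := ZI_pos D (PB Λ) (fun _ => true)
  have hU0 : 0 < ∑ ω, pw ω * cU ω := by
    refine Finset.sum_pos (fun ω _ => mul_pos (pw_pos ω) ?_) Finset.univ_nonempty
    simp only [hcU, card_UU (hη ω)]; positivity
  have four := four_functions_theorem_univ (f₁ := fun ω => ind ω * (pw ω * cU ω))
    (f₂ := fun ω => pw ω * cP ω) (f₃ := fun ω => pw ω * cU ω)
    (f₄ := fun ω => ind ω * (pw ω * cP ω))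
    (fun ω => mul_nonneg (hind0 ω) (mul_nonneg (pw_pos ω).le (hcU0 ω)))
    (fun ω => mul_nonneg (pw_pos ω).le (hcP0 ω))
    (fun ω => mul_nonneg (pw_pos ω).le (hcU0 ω))
    (fun ω => mul_nonneg (hind0 ω) (mul_nonneg (pw_pos ω).le (hcP0 ω)))
    (by
      intro ω ω'
      have h1 : cU ω * cP ω' ≤ cU (ω ⊓ ω') * cP (ω ⊔ ω') := by
        have := card_UU_mul_UP hDΛ hN (hη ω) (hη ω')
        rw [← xt_inf, ← xt_sup] at this
        simp only [hcU, hcP]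
        exact_mod_cast this
      have h2 : ind ω ≤ ind (ω ⊔ ω') := by
        simp only [hind]
        by_cases h : Ev Λ D (xt ρ ω)
        · have h' : Ev Λ D (xt ρ (ω ⊔ ω')) := by
            obtain ⟨w, hw, hwD, hc⟩ := h
            refine ⟨w, hw, hwD, Conn_mono (fun e he => ?_) hc⟩
            rw [xt_sup]; simp [he]
          rw [if_pos h, if_pos h']
        · rw [if_neg h]; exact hind0 _
      have hp := (mul_pos (pw_pos ω) (pw_pos ω')).le
      calc ind ω * (pw ω * cU ω) * (pw ω' * cP ω')
          = ind ω * ((pw ω * pw ω') * (cU ω * cP ω')) := by ring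
        _ ≤ ind (ω ⊔ ω') * ((pw ω * pw ω') * (cU (ω ⊓ ω') * cP (ω ⊔ ω'))) :=
            mul_le_mul h2 (mul_le_mul_of_nonneg_left h1 hp)
              (mul_nonneg hp (mul_nonneg (hcU0 _) (hcP0 _))) (hind0 _)
        _ = _ := by rw [pw_mul]; ring)
  rw [fkProb, hden]
  rw [mag, div_le_div_iff₀ hU0 hZ0, hM, hZ]
  calc _ = (∑ ω, ind ω * (pw ω * cU ω)) * ∑ ω, pw ω * cP ω := by rw [hnum]
    _ ≤ _ := four
    _ = _ := mul_comm _ _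

end

/-! ### The box of half-side `1 / a` -/

lemma aApprox_eq {a : ℝ} (ha : 0 < a) : aApprox a 1 (ballSet (0, 0) 1) = boxZ ⌊1 / a⌋₊ := by
  have key : ∀ x : ℤ, |a * (x : ℝ)| ≤ 1 ↔ -(⌊1 / a⌋₊ : ℤ) ≤ x ∧ x ≤ (⌊1 / a⌋₊ : ℤ) := by
    intro x
    have h1 : |a * (x : ℝ)| ≤ 1 ↔ ((x.natAbs : ℕ) : ℝ) ≤ 1 / a := by
      rw [abs_mul, abs_of_pos ha, le_div_iff₀ ha, mul_comm, Nat.cast_natAbs, Int.cast_abs]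
    rw [h1, ← Nat.le_floor_iff (by positivity)]
    omega
  have hfc : ⌊1 / a⌋₊ ≤ ⌈1 / a⌉₊ := Nat.floor_le_ceil _
  ext ⟨x, y⟩
  rw [aApprox, Finset.mem_filter]
  simp only [boxZ, posOf, ballSet, Set.mem_ofPred_eq, Finset.mem_product, Finset.mem_Icc, sub_zero,
    key]
  omega

lemma mem_boxZ {n : ℕ} {v : Vtx} :
    v ∈ boxZ n ↔ (-(n : ℤ) ≤ v.1 ∧ v.1 ≤ n) ∧ -(n : ℤ) ≤ v.2 ∧ v.2 ≤ n := by
  simp only [boxZ, Finset.mem_product, Finset.mem_Icc]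

lemma fkWeight_nonneg {Λ : Finset Vtx} {ρ : Edge → Bool} (hρ : ∀ v, ρ (Sum.inr v) = false)
    (a : ℝ) (ω : Cf Λ) : 0 ≤ fkWeight Λ (intEdgesBar Λ) a (fun _ => 0) ρ ω := by
  rw [fkWeight_eq ρ hρ]
  exact mul_nonneg (Nat.cast_nonneg _) (pw_pos ω).le

lemma fkProb_mono {Λ : Finset Vtx} {ρ : Edge → Bool} (hρ : ∀ v, ρ (Sum.inr v) = false) (a : ℝ)
    {A A' : (Edge → Bool) → Prop} (h : ∀ ω, A ω → A' ω) :
    fkProb Λ (intEdgesBar Λ) a (fun _ => 0) ρ A ≤ fkProb Λ (intEdgesBar Λ) a (fun _ => 0) ρ A' := by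
  refine div_le_div_of_nonneg_right (Finset.sum_le_sum fun ω _ => ?_)
    (Finset.sum_nonneg fun ω _ => fkWeight_nonneg hρ a ω)
  have := fkWeight_nonneg hρ a ω
  by_cases hA : A (extendConf (intEdgesBar Λ) ω ρ)
  · rw [if_pos hA, if_pos (h _ hA)]
  · rw [if_neg hA]
    split_ifs <;> simp [this]

lemma fkProb_le_one {Λ : Finset Vtx} {ρ : Edge → Bool} (hρ : ∀ v, ρ (Sum.inr v) = false) (a : ℝ)
    (A : (Edge → Bool) → Prop) : fkProb Λ (intEdgesBar Λ) a (fun _ => 0) ρ A ≤ 1 := by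
  refine (fkProb_mono hρ a (A' := fun _ => True) fun _ _ => trivial).trans ?_
  simp only [fkProb, if_true]
  exact div_self_le_one _

/-- In the box of half-side `n`, a path from the origin to the inner boundary leaves any centred
rotated rectangle of half-sides `h`, `p` with `h + p ≤ n`. -/
lemma fkProb_box_le {n h p : ℕ} (hh : 0 < h) (hp : 0 < p) (hn : h + p ≤ n) {ρ : Edge → Bool}
    (hρ : ∀ v, ρ (Sum.inr v) = false) (a : ℝ) :
    fkProb (boxZ n) (intEdgesBar (boxZ n)) a (fun _ => 0) ρ
      (fun ω => ∃ w ∈ innerBdry (boxZ n), Conn ω (some (0, 0)) (some w)) ≤ magD h p := by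
  have hsub : FF h (-p) (2 * p) ⊆ boxZ n := by
    rintro ⟨x, y⟩ hv
    rw [mem_FF] at hv
    rw [mem_boxZ]
    dsimp only at hv ⊢
    omega
  have hN : NbIn (FF h (-p) (2 * p)) (boxZ n) := by
    rintro ⟨x, y⟩ hv b
    rw [mem_FF] at hv
    rw [mem_boxZ, mem_boxZ]
    cases b <;> simp at hv ⊢ <;> omega
  have hmag : mag (FF h (-p) (2 * p)) (PB (boxZ n)) = magD h p := by
    rw [magD]
    refine mag_congr fun e he => ?_
    refine iff_of_true ?_ ?_
    · rw [mem_PB]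
      exact he.imp (fun h => hsub h) fun h => hsub h
    · obtain ⟨⟨x, y⟩, d⟩ := e
      rw [mem_PP, inPP]
      rw [mem_FF, mem_FF] at he
      cases d <;> simp at he ⊢ <;> omega
  rw [← hmag]
  refine (fkProb_mono hρ a fun ω => ?_).trans
    (fk_le_mag ρ (mem_FF.2 (by dsimp only; omega)) hsub hN hρ a)
  rintro ⟨w, hw, hc⟩
  rw [innerBdry, Finset.mem_filter] at hw
  obtain ⟨hw, u, hu, hun⟩ := hw
  refine ⟨w, hw, fun hD => hun ?_, hc⟩
  have ht := hN w hD true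
  have hf := hN w hD false
  rw [mem_boxZ, mem_boxZ] at ht hf
  rw [mem_boxZ]
  obtain ⟨x, y⟩ := w
  rcases hu with rfl | rfl | rfl | rfl <;> simp at ht hf ⊢ <;> omega

/-- The scale `n = ⌊1 / a⌋` satisfies `n ^ (-1/8) ≤ 2 a ^ (1/8)`. -/
lemma scale_le {a : ℝ} (ha : 0 < a) (ha1 : a ≤ 1) :
    Real.exp (-(Real.log ⌊1 / a⌋₊ / 8)) ≤ 2 * a ^ ((1 : ℝ) / 8) := by
  have h1 : (1 : ℝ) ≤ 1 / a := by rw [le_div_iff₀ ha]; linarith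
  have hfl : (1 : ℝ) ≤ ⌊1 / a⌋₊ := by exact_mod_cast Nat.le_floor (by simpa using h1)
  have h2 : 1 / a < 2 * (⌊1 / a⌋₊ : ℝ) := by
    have := Nat.lt_floor_add_one (1 / a)
    linarith
  have h3 : -Real.log a ≤ Real.log 2 + Real.log ⌊1 / a⌋₊ := by
    rw [← Real.log_inv, ← Real.log_mul (by norm_num) (by positivity)]
    exact Real.log_le_log (by positivity) (by rw [← one_div]; exact h2.le)
  have h4 : 2 * a ^ ((1 : ℝ) / 8) = Real.exp (Real.log 2 + Real.log a * (1 / 8)) := by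
    rw [Real.exp_add, Real.exp_log (by norm_num), Real.rpow_def_of_pos ha]
  rw [h4, Real.exp_le_exp]
  have := Real.log_pos (by norm_num : (1 : ℝ) < 2)
  linarith

end IsingArm

open IsingArm

theorem stmt6 :
    ∃ C₁ : ℝ, ∀ a : ℝ, 0 < a → a ≤ 1 →
      ∀ ρ : Edge → Bool, (∀ v : Vtx, ρ (Sum.inr v) = false) →
        fkProb (aApprox a 1 (ballSet (0, 0) 1))
            (intEdgesBar (aApprox a 1 (ballSet (0, 0) 1))) a (fun _ => 0) ρ
            (fun ω => ∃ w ∈ innerBdry (aApprox a 1 (ballSet (0, 0) 1)),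
              Conn ω (some (0, 0)) (some w)) ≤
          C₁ * a ^ ((1:ℝ)/8) := by
  obtain ⟨C, n₀, hC, hn₀, hbox⟩ := magD_box
  refine ⟨C * 2 + 2 * n₀, fun a ha ha1 ρ hρ => ?_⟩
  have hs := scale_le ha ha1
  have hpos : 0 ≤ a ^ ((1 : ℝ) / 8) := by positivity
  rw [aApprox_eq ha]
  by_cases hn : n₀ ≤ ⌊1 / a⌋₊
  · obtain ⟨h, p, hhp, hh, hp, hm⟩ := hbox _ hn
    calc _ ≤ magD h p := fkProb_box_le hh hp hhp hρ a
      _ ≤ _ := hm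
      _ ≤ C * (2 * a ^ ((1 : ℝ) / 8)) := mul_le_mul_of_nonneg_left hs hC.le
      _ ≤ _ := by
        have : 0 ≤ 2 * (n₀ : ℝ) * a ^ ((1 : ℝ) / 8) := by positivity
        linarith
  · -- At the finitely many remaining scales the bound follows from `n₀ * n ^ (-1/8) ≥ 1`.
    refine (fkProb_le_one hρ a _).trans ?_
    have hlt : (⌊1 / a⌋₊ : ℝ) ≤ n₀ := by exact_mod_cast (not_le.1 hn).le
    have hfl : (0 : ℝ) < ⌊1 / a⌋₊ := by
      have : 1 ≤ ⌊1 / a⌋₊ := Nat.le_floor (by rw [Nat.cast_one, le_div_iff₀ ha]; linarith)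
      exact_mod_cast this
    have h0 : (0 : ℝ) < n₀ := by exact_mod_cast hn₀
    have hlog : Real.log ⌊1 / a⌋₊ ≤ Real.log n₀ := Real.log_le_log hfl hlt
    have hlog0 : 0 ≤ Real.log n₀ := Real.log_nonneg (by exact_mod_cast hn₀)
    have h1 : (1 : ℝ) ≤ n₀ * Real.exp (-(Real.log ⌊1 / a⌋₊ / 8)) := by
      nth_rw 1 [← Real.exp_log h0]
      rw [← Real.exp_add, Real.one_le_exp_iff]
      linarith
    have h2 := mul_le_mul_of_nonneg_left hs h0.le
    have : 0 ≤ C * 2 * a ^ ((1 : ℝ) / 8) := by positivity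
    linarith

end
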